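/- arXiv:1305.5273 — 3 statements merged into one kernel-verified Lean document; each statement's English description precedes it below -/
import Mathlib

section
/- Let u be a λ-mode solution whose initial data (φ,ψ) are smooth and compactly supported in (2M,∞). Then there exist functions f : ℝ → ℝ and g : ℝ → ℝ such that: (a) f is a forward radiation field of u at the event horizon; (b) g is a forward radiation field of u at null infinity; (c) f and g are square integrable on ℝ; and (d) 4M²·∫_ℝ f(τ)² dτ + ∫_ℝ g(τ̄)² dτ̄ = E(φ,ψ). (Unitarity of the radiation field, Theorem 1.2, for a single spherical-harmonic mode.) -/
/-!
In the tortoise coordinate `x = r_*` the function `W = r u` solves the Regge–Wheeler equation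
`∂ₜ²W = ∂ₓ²W - V W`, where `V = (1 - 2M/r)(λ²/r² + 2M/r³)` is positive, integrable and tends to `0`
at both ends (`mode_wave`), and the mode energy is the conserved energy
`E = ½ ∫ (Wₜ² + Wₓ² + V W²) dx` (`energy_eq`, `energy_conserved`). By finite speed of propagation
`W` is supported in `|x| ≤ R + t` (`finite_speed`).

*Existence.* Since `W` is bounded by the energy at bounded distance from the light cone
(`wave_bound`) and `(∂ₜ + ∂ₓ)(∂ₜ - ∂ₓ)W = -V W` with `V` integrable, `(∂ₜ - ∂ₓ)W` has a limit along
each characteristic `t - x = τ`, while `(∂ₜ + ∂ₓ)W` tends to `0` there. So `Wₜ` converges; by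
dominated convergence the energy in the strip `t - x ≤ S` tends to the integral of the square of the
limit (`one_sided`). The horizon is the mirror image under `x ↦ -x`. At null infinity the limit is
the radiation field itself, at the horizon it is `2M` times the radiation field, because
`∂ₜu = Wₜ/r`.

*Unitarity.* What remains to be shown is that no energy stays between the two strips in the limit
`t → ∞` and then `S → ∞` (`radiation`). This is a multiplier estimate (`morawetz`): for
`t∂ₜ + (x + m)∂ₓ` with lower order corrections, the bulk term has a favourable sign, so that the
energy in `|x| ≤ t - S` is at most `C/S`, uniformly in `t`. The virial term `V + xV'/2` is
nonpositive near infinity, since `x` exceeds `r` by a logarithm, and of order `1 - 2M/r` near the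
horizon (`virial_bound`). The choice `m = C(1 - 9M²/r²)`, which vanishes at the photon
sphere `r = 3M`, absorbs it once `C` is large, for every `λ` including `λ = 0` (`rw_decay`).
-/

open MeasureTheory Filter Set Function
open scoped ContDiff

/-- The tortoise coordinate `r_* = r + 2M log(r - 2M)`. -/
noncomputable def rstar (M r : ℝ) : ℝ := r + 2*M*Real.log (r - 2*M)

/-- Partial derivative of `u` in the first (time) variable. -/
noncomputable def pdt (u : ℝ → ℝ → ℝ) (t r : ℝ) : ℝ := deriv (fun s => u s r) t

/-- Second partial derivative of `u` in the first (time) variable. -/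
noncomputable def pdtt (u : ℝ → ℝ → ℝ) (t r : ℝ) : ℝ := deriv (fun s => pdt u s r) t

/-- Partial derivative of `u` in the second (radial) variable. -/
noncomputable def pdr (u : ℝ → ℝ → ℝ) (t r : ℝ) : ℝ := deriv (fun s => u t s) r

/-- Second partial derivative of `u` in the second (radial) variable. -/
noncomputable def pdrr (u : ℝ → ℝ → ℝ) (t r : ℝ) : ℝ := deriv (fun s => pdr u t s) r

/-- `u(t,r)` is a λ-mode solution of the wave equation on the mass-`M`
Schwarzschild exterior: it is smooth on `ℝ × (2M,∞)` and satisfies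
`−(r/(r−2M))·∂²ₜu + ((r−2M)/r)·∂²ᵣu + (2(r−M)/r²)·∂ᵣu − (λ²/r²)·u = 0` there. -/
def IsModeSolution (M lam : ℝ) (u : ℝ → ℝ → ℝ) : Prop :=
  ContDiffOn ℝ ∞ (Function.uncurry u) ((Set.univ : Set ℝ) ×ˢ Set.Ioi (2*M)) ∧
  ∀ t r : ℝ, 2*M < r →
    -(r/(r-2*M)) * pdtt u t r + ((r-2*M)/r) * pdrr u t r
      + (2*(r-M)/r^2) * pdr u t r - lam^2/r^2 * u t r = 0

/-- `f` is a forward radiation field of `u` at the event horizon: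
`∂ₜu(τ − r_*(r), r) → f(τ)` as `r → 2M⁺`. -/
def IsFwdRadHorizon (M : ℝ) (u : ℝ → ℝ → ℝ) (f : ℝ → ℝ) : Prop :=
  ∀ τ : ℝ, Filter.Tendsto (fun r => pdt u (τ - rstar M r) r)
    (nhdsWithin (2*M) (Set.Ioi (2*M))) (nhds (f τ))

/-- `f` is a backward radiation field of `u` at the event horizon:
`∂ₜu(τ + r_*(r), r) → f(τ)` as `r → 2M⁺`. -/
def IsBwdRadHorizon (M : ℝ) (u : ℝ → ℝ → ℝ) (f : ℝ → ℝ) : Prop :=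
  ∀ τ : ℝ, Filter.Tendsto (fun r => pdt u (τ + rstar M r) r)
    (nhdsWithin (2*M) (Set.Ioi (2*M))) (nhds (f τ))

/-- `g` is a forward radiation field of `u` at null infinity:
`r·∂ₜu(τ̄ + r_*(r), r) → g(τ̄)` as `r → ∞`. -/
def IsFwdRadInfty (M : ℝ) (u : ℝ → ℝ → ℝ) (g : ℝ → ℝ) : Prop :=
  ∀ τ : ℝ, Filter.Tendsto (fun r => r * pdt u (τ + rstar M r) r)
    Filter.atTop (nhds (g τ))

/-- `g` is a backward radiation field of `u` at null infinity:
`r·∂ₜu(τ̄ − r_*(r), r) → g(τ̄)` as `r → ∞`. -/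
def IsBwdRadInfty (M : ℝ) (u : ℝ → ℝ → ℝ) (g : ℝ → ℝ) : Prop :=
  ∀ τ : ℝ, Filter.Tendsto (fun r => r * pdt u (τ - rstar M r) r)
    Filter.atTop (nhds (g τ))

/-- The mode energy
`E(φ,ψ) = (1/2)·∫_{2M}^∞ [ (r/(r−2M))·ψ² + ((r−2M)/r)·(φ′)² + (λ²/r²)·φ² ]·r² dr`. -/
noncomputable def modeEnergy (M lam : ℝ) (φ ψ : ℝ → ℝ) : ℝ :=
  (1/2) * ∫ r in Set.Ioi (2*M),
    ((r/(r-2*M)) * ψ r ^ 2 + ((r-2*M)/r) * (deriv φ r) ^ 2 + lam^2/r^2 * φ r ^ 2) * r ^ 2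

/-! ### Calculus in the plane, energy and finite speed of propagation -/

/-- `f` has partial derivatives `ft`, `fx`, both continuous, and they assemble to its Fréchet
derivative at every point of the plane; in particular `f` is `C¹`. -/
structure HasGrad (f ft fx : ℝ → ℝ → ℝ) : Prop where
  fderiv : ∀ t x, HasFDerivAt (uncurry f)
    (ft t x • ContinuousLinearMap.fst ℝ ℝ ℝ + fx t x • ContinuousLinearMap.snd ℝ ℝ ℝ) (t, x)
  cont_t : Continuous (uncurry ft)
  cont_x : Continuous (uncurry fx)

lemma HasGrad.cont {f ft fx : ℝ → ℝ → ℝ} (h : HasGrad f ft fx) : Continuous (uncurry f) :=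
  continuous_iff_continuousAt.2 fun p => (h.fderiv p.1 p.2).continuousAt

lemma HasGrad.chain {f ft fx : ℝ → ℝ → ℝ} (h : HasGrad f ft fx) {a b : ℝ → ℝ} {a' b' s : ℝ}
    (ha : HasDerivAt a a' s) (hb : HasDerivAt b b' s) :
    HasDerivAt (fun s => f (a s) (b s)) (ft (a s) (b s) * a' + fx (a s) (b s) * b') s := by
  have := (h.fderiv (a s) (b s)).comp_hasDerivAt s (ha.prodMk hb)
  exact this.congr_deriv (by simp)

lemma HasGrad.dt {f ft fx : ℝ → ℝ → ℝ} (h : HasGrad f ft fx) (t x : ℝ) :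
    HasDerivAt (fun t => f t x) (ft t x) t := by
  simpa using h.chain (hasDerivAt_id t) (hasDerivAt_const t x)

lemma HasGrad.dx {f ft fx : ℝ → ℝ → ℝ} (h : HasGrad f ft fx) (t x : ℝ) :
    HasDerivAt (fun x => f t x) (fx t x) x := by
  simpa using h.chain (hasDerivAt_const x t) (hasDerivAt_id x)

/-- Differentiation under the integral sign over a fixed compact interval. -/
lemma hasDerivAt_integral {Q Qt : ℝ → ℝ → ℝ} {a b : ℝ}
    (hQ : ∀ t x, HasDerivAt (fun t => Q t x) (Qt t x) t)
    (cQ : Continuous (uncurry Q)) (cQt : Continuous (uncurry Qt)) (t : ℝ) :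
    HasDerivAt (fun t => ∫ x in a..b, Q t x) (∫ x in a..b, Qt t x) t := by
  obtain ⟨C, hC⟩ := ((isCompact_Icc (a := t - 1) (b := t + 1)).prod
    (isCompact_uIcc (a := a) (b := b))).exists_bound_of_continuousOn cQt.continuousOn
  refine (intervalIntegral.hasDerivAt_integral_of_dominated_loc_of_deriv_le
    (bound := fun _ => C) (s := Icc (t - 1) (t + 1)) (Icc_mem_nhds (by linarith) (by linarith))
    (Eventually.of_forall fun s => ?_) ?_ ?_ ?_ ?_ ?_).2
  · exact (show Continuous (Q s) by fun_prop).aestronglyMeasurable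
  · exact (show Continuous (Q t) by fun_prop).intervalIntegrable _ _
  · exact (show Continuous (Qt t) by fun_prop).aestronglyMeasurable
  · exact Eventually.of_forall fun x hx s hs => hC (s, x) ⟨hs, uIoc_subset_uIcc hx⟩
  · exact intervalIntegrable_const
  · exact Eventually.of_forall fun x _ s _ => hQ s x

/-- Balance law: if `∂ₜQ ≤ ∂ₓP` on a space-time rectangle and the flux `P` vanishes on its lateral
sides, then the integral of `Q` over a time slice does not increase. -/
lemma balance {Q Qt P Px : ℝ → ℝ → ℝ} {a b T : ℝ} (hT : 0 ≤ T) (hab : a ≤ b)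
    (hQ : ∀ t x, HasDerivAt (fun t => Q t x) (Qt t x) t)
    (cQ : Continuous (uncurry Q)) (cQt : Continuous (uncurry Qt))
    (hP : ∀ t x, HasDerivAt (fun x => P t x) (Px t x) x)
    (cPx : Continuous (uncurry Px))
    (hle : ∀ t ∈ Ioo 0 T, ∀ x ∈ Icc a b, Qt t x ≤ Px t x)
    (hPa : ∀ t ∈ Ioo 0 T, P t a = 0) (hPb : ∀ t ∈ Ioo 0 T, P t b = 0) :
    ∫ x in a..b, Q T x ≤ ∫ x in a..b, Q 0 x := by
  have hd := fun t => hasDerivAt_integral (a := a) (b := b) hQ cQ cQt t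
  refine antitoneOn_of_deriv_nonpos (convex_Icc 0 T)
    (fun t _ => (hd t).continuousAt.continuousWithinAt)
    (fun t _ => (hd t).differentiableAt.differentiableWithinAt) ?_
    (left_mem_Icc.2 hT) (right_mem_Icc.2 hT) hT
  intro t ht
  rw [interior_Icc] at ht
  rw [(hd t).deriv]
  have c1 : Continuous (Qt t) := by fun_prop
  have c2 : Continuous (Px t) := by fun_prop
  calc ∫ x in a..b, Qt t x ≤ ∫ x in a..b, Px t x :=
        intervalIntegral.integral_mono_on hab (c1.intervalIntegrable _ _)
          (c2.intervalIntegrable _ _) (hle t ht)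
    _ = P t b - P t a := intervalIntegral.integral_eq_sub_of_hasDerivAt (fun x _ => hP t x)
          (c2.intervalIntegrable _ _)
    _ = 0 := by rw [hPa t ht, hPb t ht, sub_zero]

/-- `W` is a `C²` solution of `∂ₜ²W = ∂ₓ²W - V W` on the plane, given together with its partial
derivatives of first and second order. -/
structure Wave (V : ℝ → ℝ) (W Wt Wx Wtt Wtx Wxx : ℝ → ℝ → ℝ) : Prop where
  g0 : HasGrad W Wt Wx
  g1 : HasGrad Wt Wtt Wtx
  g2 : HasGrad Wx Wtx Wxx
  eq : ∀ t x, Wtt t x = Wxx t x - V x * W t x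

/-- The energy density `½ (Wₜ² + Wₓ² + V W²)`. -/
noncomputable def eden (V : ℝ → ℝ) (W Wt Wx : ℝ → ℝ → ℝ) (t x : ℝ) : ℝ :=
  (Wt t x ^ 2 + Wx t x ^ 2 + V x * W t x ^ 2) / 2

/-- The data at time `0`, including the spatial derivative, vanish outside `[-R, R]`. -/
def DataSupp (R : ℝ) (W Wt Wx : ℝ → ℝ → ℝ) : Prop :=
  ∀ x, R < |x| → W 0 x = 0 ∧ Wt 0 x = 0 ∧ Wx 0 x = 0

section
variable {V : ℝ → ℝ} {W Wt Wx Wtt Wtx Wxx : ℝ → ℝ → ℝ}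

/-- The equation is invariant under the reflection `x ↦ -x`. -/
lemma Wave.refl (h : Wave V W Wt Wx Wtt Wtx Wxx) :
    Wave (fun x => V (-x)) (fun t x => W t (-x)) (fun t x => Wt t (-x)) (fun t x => -Wx t (-x))
      (fun t x => Wtt t (-x)) (fun t x => -Wtx t (-x)) (fun t x => Wxx t (-x)) := by
  have key : ∀ {f ft fx : ℝ → ℝ → ℝ}, HasGrad f ft fx →
      HasGrad (fun t x => f t (-x)) (fun t x => ft t (-x)) (fun t x => -fx t (-x)) := by
    intro f ft fx hf
    have c1 := hf.cont_t
    have c2 := hf.cont_x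
    refine ⟨fun t x => ?_, by fun_prop, by fun_prop⟩
    have h1 : HasFDerivAt (fun p : ℝ × ℝ => (p.1, -p.2))
        ((ContinuousLinearMap.fst ℝ ℝ ℝ).prod (-ContinuousLinearMap.snd ℝ ℝ ℝ)) (t, x) :=
      hasFDerivAt_fst.prodMk hasFDerivAt_snd.neg
    refine ((hf.fderiv t (-x)).comp (t, x) h1).congr_fderiv ?_
    ext <;> simp
  have hneg : ∀ {f ft fx : ℝ → ℝ → ℝ}, HasGrad f ft fx →
      HasGrad (fun t x => -f t x) (fun t x => -ft t x) (fun t x => -fx t x) := by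
    intro f ft fx hf
    have c1 := hf.cont_t
    have c2 := hf.cont_x
    refine ⟨fun t x => ?_, by fun_prop, by fun_prop⟩
    refine (hf.fderiv t x).neg.congr_fderiv ?_
    ext <;> simp
  refine ⟨key h.g0, key h.g1, ?_, fun t x => h.eq t (-x)⟩
  simpa using hneg (key h.g2)

lemma hasDerivAt_max_sq (y : ℝ) : HasDerivAt (fun y : ℝ => max y 0 ^ 2) (2 * max y 0) y := by
  rcases lt_trichotomy y 0 with hy | hy | hy
  · have : (fun y : ℝ => max y 0 ^ 2) =ᶠ[nhds y] fun _ => 0 := by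
      filter_upwards [Iio_mem_nhds hy] with z hz
      simp [max_eq_right (show z < 0 from hz).le]
    rw [max_eq_right hy.le, mul_zero]
    exact (hasDerivAt_const y 0).congr_of_eventuallyEq this
  · subst hy
    have h2 : HasDerivAt (fun y : ℝ => y ^ 2) 0 0 := by simpa using hasDerivAt_pow 2 (0 : ℝ)
    rw [hasDerivAt_iff_isLittleO] at h2 ⊢
    refine Asymptotics.IsBigO.trans_isLittleO (Asymptotics.IsBigO.of_norm_le fun z => ?_) h2
    simp only [max_self, mul_zero, smul_eq_mul, sub_zero, Real.norm_eq_abs, abs_pow, ne_eq,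
      OfNat.ofNat_ne_zero, not_false_eq_true, zero_pow]
    rcases le_total z 0 with h | h <;> simp [h, sq_nonneg]
  · have : (fun y : ℝ => max y 0 ^ 2) =ᶠ[nhds y] fun y => y ^ 2 := by
      filter_upwards [Ioi_mem_nhds hy] with z hz
      simp [max_eq_left (show 0 < z from hz).le]
    rw [max_eq_left hy.le]
    simpa using (hasDerivAt_pow 2 y).congr_of_eventuallyEq this

lemma eden_cont (h : Wave V W Wt Wx Wtt Wtx Wxx) (cV : Continuous V) :
    Continuous (uncurry (eden V W Wt Wx)) := by
  have c0 := h.g0.cont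
  have c1 := h.g0.cont_t
  have c2 := h.g0.cont_x
  unfold eden
  fun_prop

lemma eden_nonneg (hV : ∀ x, 0 < V x) (t x : ℝ) : 0 ≤ eden V W Wt Wx t x := by
  have := (hV x).le
  unfold eden
  positivity

lemma eden_dt (h : Wave V W Wt Wx Wtt Wtx Wxx) (t x : ℝ) :
    HasDerivAt (fun t => eden V W Wt Wx t x)
      (Wt t x * Wxx t x + Wx t x * Wtx t x) t := by
  have := ((((h.g1.dt t x).pow 2).add ((h.g2.dt t x).pow 2)).add
    (((h.g0.dt t x).pow 2).const_mul (V x))).div_const 2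
  refine this.congr_deriv ?_
  rw [h.eq]
  simp
  ring

/-- Finite propagation speed: the energy of a backward light cone, weighted by a product of
functions of the two null coordinates which vanishes on the boundary of the cone, is
nonincreasing, hence zero if the cone is based where the data vanish. -/
lemma finite_speed (h : Wave V W Wt Wx Wtt Wtx Wxx) (cV : Continuous V) (hV : ∀ x, 0 < V x)
    {R : ℝ} (hd : DataSupp R W Wt Wx) {t x : ℝ} (ht : 0 ≤ t) (hx : R + t < |x|) :
    W t x = 0 ∧ Wt t x = 0 ∧ Wx t x = 0 := by
  -- the apex `(t0, x)` of the cone lies slightly above the point `(t, x)`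
  obtain ⟨t0, h1, h2⟩ : ∃ t0, t < t0 ∧ R + t0 < |x| := ⟨(t + (|x| - R)) / 2, by linarith, by linarith⟩
  have c0 := h.g0.cont
  have c1 := h.g0.cont_t
  have c2 := h.g0.cont_x
  have c3 := h.g1.cont_t
  have c4 := h.g1.cont_x
  have c5 := h.g2.cont_x
  have ce := eden_cont h cV
  let A : ℝ → ℝ → ℝ := fun s y => max (t0 - s - (y - x)) 0
  let B : ℝ → ℝ → ℝ := fun s y => max (t0 - s + (y - x)) 0
  have cA : Continuous (uncurry A) := by simp only [A]; fun_prop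
  have cB : Continuous (uncurry B) := by simp only [B]; fun_prop
  have hA0 : ∀ s y, 0 ≤ A s y := fun _ _ => le_max_right _ _
  have hB0 : ∀ s y, 0 ≤ B s y := fun _ _ => le_max_right _ _
  have At : ∀ s y, HasDerivAt (fun s => A s y ^ 2) (-(2 * A s y)) s := fun s y => by
    have := (hasDerivAt_max_sq (t0 - s - (y - x))).comp s
      (((hasDerivAt_id s).const_sub t0).sub_const (y - x))
    exact this.congr_deriv (by simp [A])
  have Bt : ∀ s y, HasDerivAt (fun s => B s y ^ 2) (-(2 * B s y)) s := fun s y => by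
    have := (hasDerivAt_max_sq (t0 - s + (y - x))).comp s
      (((hasDerivAt_id s).const_sub t0).add_const (y - x))
    exact this.congr_deriv (by simp [B])
  have Ax : ∀ s y, HasDerivAt (fun y => A s y ^ 2) (-(2 * A s y)) y := fun s y => by
    have := (hasDerivAt_max_sq (t0 - s - (y - x))).comp y
      (((hasDerivAt_id y).sub_const x).const_sub (t0 - s))
    exact this.congr_deriv (by simp [A])
  have Bx : ∀ s y, HasDerivAt (fun y => B s y ^ 2) (2 * B s y) y := fun s y => by
    have := (hasDerivAt_max_sq (t0 - s + (y - x))).comp y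
      (((hasDerivAt_id y).sub_const x).const_add (t0 - s))
    exact this.congr_deriv (by simp [B])
  have key := balance (Q := fun s y => A s y ^ 2 * B s y ^ 2 * eden V W Wt Wx s y)
    (P := fun s y => A s y ^ 2 * B s y ^ 2 * (Wt s y * Wx s y))
    (Qt := fun s y => -2 * (A s y * B s y ^ 2 + A s y ^ 2 * B s y) * eden V W Wt Wx s y +
      A s y ^ 2 * B s y ^ 2 * (Wt s y * Wxx s y + Wx s y * Wtx s y))
    (Px := fun s y => 2 * (A s y ^ 2 * B s y - A s y * B s y ^ 2) * (Wt s y * Wx s y) +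
      A s y ^ 2 * B s y ^ 2 * (Wtx s y * Wx s y + Wt s y * Wxx s y)) (a := x - t0) (b := x + t0) (T := t)
    ht (by linarith)
    (fun s y => (((At s y).mul (Bt s y)).mul (eden_dt h s y)).congr_deriv
      (by simp only [Pi.mul_apply]; ring)) (by fun_prop) (by fun_prop)
    (fun s y => (((Ax s y).mul (Bx s y)).mul ((h.g1.dx s y).mul (h.g2.dx s y))).congr_deriv
      (by simp only [Pi.mul_apply]; ring)) (by fun_prop)
    ?_ ?_ ?_
  · -- the weighted energy vanishes at time `0`, hence at time `t`
    have z : ∫ y in (x - t0)..(x + t0), A 0 y ^ 2 * B 0 y ^ 2 * eden V W Wt Wx 0 y = 0 := by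
      rw [intervalIntegral.integral_congr (g := fun _ => 0)]
      · simp
      · intro y hy
        rw [uIcc_of_le (by linarith)] at hy
        have : R < |y| := by
          have := abs_sub_abs_le_abs_sub x y
          have : |x - y| ≤ t0 := abs_le.2 ⟨by linarith [hy.2], by linarith [hy.1]⟩
          linarith
        obtain ⟨e1, e2, e3⟩ := hd y this
        simp [eden, e1, e2, e3]
    have e0 : eden V W Wt Wx t x = 0 := by
      by_contra hne
      have hpos : 0 < eden V W Wt Wx t x := lt_of_le_of_ne (eden_nonneg hV t x) (Ne.symm hne)
      have : 0 < ∫ y in (x - t0)..(x + t0), A t y ^ 2 * B t y ^ 2 * eden V W Wt Wx t y := by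
        refine intervalIntegral.integral_pos (by linarith) ?_ ?_ ⟨x, ⟨by linarith, by linarith⟩, ?_⟩
        · exact Continuous.continuousOn (by fun_prop)
        · intro y _
          have := eden_nonneg (W := W) (Wt := Wt) (Wx := Wx) hV t y
          positivity
        · have : 0 < A t x := lt_max_of_lt_left (by linarith)
          have : 0 < B t x := lt_max_of_lt_left (by linarith)
          positivity
      linarith
    have hVx := hV x
    unfold eden at e0
    have p1 := sq_nonneg (Wt t x)
    have p2 := sq_nonneg (Wx t x)
    have p3 : 0 ≤ V x * W t x ^ 2 := by positivity
    have q3 : V x * W t x ^ 2 = 0 := by linarith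
    refine ⟨?_, pow_eq_zero_iff two_ne_zero |>.1 (by linarith), pow_eq_zero_iff two_ne_zero |>.1 (by linarith)⟩
    rcases mul_eq_zero.1 q3 with q | q
    · linarith
    · exact pow_eq_zero_iff two_ne_zero |>.1 q
  · intro s _ y _
    have hVy := hV y
    have i1 : 0 ≤ A s y * B s y ^ 2 * ((Wt s y - Wx s y) ^ 2 + V y * W s y ^ 2) := by
      have := hA0 s y
      positivity
    have i2 : 0 ≤ A s y ^ 2 * B s y * ((Wt s y + Wx s y) ^ 2 + V y * W s y ^ 2) := by
      have := hB0 s y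
      positivity
    simp only [eden]
    nlinarith [i1, i2]
  · intro s hs
    have : B s (x - t0) = 0 := max_eq_right (by linarith [hs.1])
    simp [this]
  · intro s hs
    have : A s (x + t0) = 0 := max_eq_right (by linarith [hs.1])
    simp [this]

end

/-! ### Energy conservation, pointwise bounds and the multiplier estimate -/

section
variable {V : ℝ → ℝ} {W Wt Wx Wtt Wtx Wxx : ℝ → ℝ → ℝ} {R : ℝ}

lemma eden_zero (h : Wave V W Wt Wx Wtt Wtx Wxx) (cV : Continuous V) (hV : ∀ x, 0 < V x)
    (hd : DataSupp R W Wt Wx) {t x : ℝ} (ht : 0 ≤ t) (hx : R + t < |x|) :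
    eden V W Wt Wx t x = 0 := by
  obtain ⟨h1, h2, h3⟩ := finite_speed h cV hV hd ht hx
  simp [eden, h1, h2, h3]

/-- A function vanishing for `|x| > r` has the same integral over `ℝ` and over `[-B, B]`, `B > r`. -/
lemma integral_symm_eq {f : ℝ → ℝ} {r B : ℝ} (hf : ∀ x, r < |x| → f x = 0) (hB : r < B) :
    ∫ x in (-B)..B, f x = ∫ x, f x := by
  refine intervalIntegral.integral_eq_integral_of_support_subset fun x hx => ?_
  have : |x| ≤ r := by
    by_contra hc
    exact hx (hf x (not_le.1 hc))
  obtain ⟨h1, h2⟩ := abs_le.1 this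
  exact ⟨by linarith, by linarith⟩

lemma integrable_of_zero {f : ℝ → ℝ} {r : ℝ} (cf : Continuous f) (hf : ∀ x, r < |x| → f x = 0) :
    Integrable f := by
  refine cf.integrable_of_hasCompactSupport
    (HasCompactSupport.intro (isCompact_Icc (a := -r) (b := r)) fun x hx => hf x ?_)
  by_contra hc
  exact hx (abs_le.1 (not_lt.1 hc))

lemma eden_integrable (h : Wave V W Wt Wx Wtt Wtx Wxx) (cV : Continuous V) (hV : ∀ x, 0 < V x)
    (hd : DataSupp R W Wt Wx) {t : ℝ} (ht : 0 ≤ t) : Integrable (eden V W Wt Wx t) := by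
  have ce := eden_cont h cV
  exact integrable_of_zero (by fun_prop) fun x hx => eden_zero h cV hV hd ht hx

lemma energy_conserved (h : Wave V W Wt Wx Wtt Wtx Wxx) (cV : Continuous V) (hV : ∀ x, 0 < V x)
    (hR : 0 ≤ R) (hd : DataSupp R W Wt Wx) {T : ℝ} (hT : 0 ≤ T) :
    ∫ x, eden V W Wt Wx T x = ∫ x, eden V W Wt Wx 0 x := by
  have c0 := h.g0.cont
  have c1 := h.g0.cont_t
  have c2 := h.g0.cont_x
  have c3 := h.g1.cont_t
  have c4 := h.g1.cont_x
  have c5 := h.g2.cont_x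
  have ce := eden_cont h cV
  have hB : R + T < R + T + 1 := by linarith
  rw [← integral_symm_eq (fun x hx => eden_zero h cV hV hd hT hx) hB,
    ← integral_symm_eq (f := eden V W Wt Wx 0) (r := R + 0)
      (fun x hx => eden_zero h cV hV hd le_rfl hx) (show R + 0 < R + T + 1 by linarith)]
  have z1 : ∀ t ∈ Ioo 0 T, Wt t (-(R + T + 1)) = 0 := fun t ht =>
    (finite_speed h cV hV hd ht.1.le
      (by rw [abs_neg, abs_of_nonneg (by linarith)]; linarith [ht.2])).2.1
  have z2 : ∀ t ∈ Ioo 0 T, Wt t (R + T + 1) = 0 := fun t ht =>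
    (finite_speed h cV hV hd ht.1.le
      (by rw [abs_of_nonneg (by linarith)]; linarith [ht.2])).2.1
  have hP : ∀ t x, HasDerivAt (fun x => Wt t x * Wx t x) (Wt t x * Wxx t x + Wx t x * Wtx t x) x :=
    fun t x => ((h.g1.dx t x).mul (h.g2.dx t x)).congr_deriv (by ring)
  refine le_antisymm ?_ ?_
  · exact balance hT (by linarith) (eden_dt h) ce (by fun_prop) hP (by fun_prop)
      (fun _ _ _ _ => le_rfl) (fun t ht => by simp only [z1 t ht, zero_mul]) (fun t ht => by simp [z2 t ht])
  · have := balance (a := -(R + T + 1)) (b := R + T + 1) (Q := fun t x => -eden V W Wt Wx t x)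
      (Qt := fun t x => -(Wt t x * Wxx t x + Wx t x * Wtx t x))
      (P := fun t x => -(Wt t x * Wx t x))
      (Px := fun t x => -(Wt t x * Wxx t x + Wx t x * Wtx t x)) hT (by linarith)
      (fun t x => (eden_dt h t x).neg) (by fun_prop) (by fun_prop) (fun t x => (hP t x).neg)
      (by fun_prop) (fun _ _ _ _ => le_rfl)
      (fun t ht => by simp only [z1 t ht, zero_mul, neg_zero]) (fun t ht => by simp [z2 t ht])
    simpa using this

/-- Bound of the solution by its conserved energy, uniform along outgoing characteristics
`t - x = const`: integrate `∂ₓW` from the edge of the support. -/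
lemma wave_bound (h : Wave V W Wt Wx Wtt Wtx Wxx) (cV : Continuous V) (hV : ∀ x, 0 < V x)
    (hR : 0 ≤ R) (hd : DataSupp R W Wt Wx) {t x ξ : ℝ} (ht : 0 ≤ t) (hx : t - x ≤ ξ) :
    |W t x| ≤ (R + 1 + |ξ|) / 2 + ∫ y, eden V W Wt Wx 0 y := by
  have hE : 0 ≤ ∫ y, eden V W Wt Wx 0 y := integral_nonneg fun y => eden_nonneg hV 0 y
  have hξ := abs_nonneg ξ
  rcases lt_or_ge (R + t) x with hlt | hge
  · rw [(finite_speed h cV hV hd ht (hlt.trans_le (le_abs_self x))).1, abs_zero]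
    linarith
  have c2 : Continuous (Wx t) := by have := h.g0.cont_x; fun_prop
  have ce : Continuous (eden V W Wt Wx t) := by have := eden_cont h cV; fun_prop
  have hB : W t (R + t + 1) = 0 :=
    (finite_speed h cV hV hd ht (by rw [abs_of_nonneg (by linarith)]; linarith)).1
  have hle : x ≤ R + t + 1 := by linarith
  have ftc : ∫ y in x..(R + t + 1), Wx t y = -W t x := by
    rw [intervalIntegral.integral_eq_sub_of_hasDerivAt (fun y _ => h.g0.dx t y)
      (c2.intervalIntegrable _ _), hB]
    ring
  calc |W t x| = ‖∫ y in x..(R + t + 1), Wx t y‖ := by rw [ftc, norm_neg, Real.norm_eq_abs]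
    _ ≤ ∫ y in x..(R + t + 1), (1 / 2 + eden V W Wt Wx t y) := by
        refine intervalIntegral.norm_integral_le_of_norm_le hle (Eventually.of_forall fun y _ => ?_)
          ((continuous_const.add ce).intervalIntegrable _ _)
        have := (hV y).le
        have h1 : 0 ≤ V y * W t y ^ 2 := by positivity
        rw [Real.norm_eq_abs, eden]
        nlinarith [sq_nonneg (|Wx t y| - 1), sq_abs (Wx t y), sq_nonneg (Wt t y)]
    _ = (R + t + 1 - x) / 2 + ∫ y in x..(R + t + 1), eden V W Wt Wx t y := by
        rw [intervalIntegral.integral_add (by simp) (ce.intervalIntegrable _ _)]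
        simp
        ring
    _ ≤ (R + t + 1 - x) / 2 + ∫ y, eden V W Wt Wx t y := by
        rw [intervalIntegral.integral_of_le hle]
        gcongr
        · exact Eventually.of_forall fun y => eden_nonneg hV t y
        · exact eden_integrable h cV hV hd ht
        · exact Measure.restrict_le_self
    _ ≤ _ := by
        rw [energy_conserved h cV hV hR hd ht]
        linarith [le_abs_self ξ]

/-- Multiplier estimate. The vector field `t∂ₜ + (x + m)∂ₓ`, with zeroth-order term `m'/2` and the
flux correction `g W²`, gives a density `Q` whose integral is nonincreasing as soon as the
quadratic form `hform` is nonpositive. Since `Q + c·e ≥ (T + R + 1 - |x|) e`, the energy at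
distance at least `S` from the light cone is `O(1/S)`, uniformly in time. -/
lemma morawetz (h : Wave V W Wt Wx Wtt Wtx Wxx) (hV : ∀ x, 0 < V x)
    (hR : 0 ≤ R) (hd : DataSupp R W Wt Wx) {V1 m m1 m2 m3 g g1 : ℝ → ℝ} {c : ℝ} (hc : 0 < c)
    (hV1 : ∀ x, HasDerivAt V (V1 x) x) (hm : ∀ x, HasDerivAt m (m1 x) x)
    (hm1 : ∀ x, HasDerivAt m1 (m2 x) x) (hm2 : ∀ x, HasDerivAt m2 (m3 x) x)
    (hg : ∀ x, HasDerivAt g (g1 x) x)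
    (cV1 : Continuous V1) (cm3 : Continuous m3) (cg1 : Continuous g1)
    (bm : ∀ x, |m x| ≤ c) (bm1 : ∀ x, m1 x ^ 2 ≤ c ^ 2 * V x)
    (hform : ∀ x w p, -m1 x * p ^ 2 + 2 * g x * w * p
      + (V x + (x + m x) * V1 x / 2 + m3 x / 4 + g1 x) * w ^ 2 ≤ 0) :
    ∃ C : ℝ, ∀ T S, 0 ≤ S → S ≤ T →
      S * ∫ x in (-(T - S))..(T - S), eden V W Wt Wx T x ≤ C := by
  have cont : ∀ {f f' : ℝ → ℝ}, (∀ x, HasDerivAt f (f' x) x) → Continuous f := fun hf =>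
    continuous_iff_continuousAt.2 fun x => (hf x).continuousAt
  have cV := cont hV1
  have cm := cont hm
  have cm1 := cont hm1
  have cm2 := cont hm2
  have cg := cont hg
  have c0 := h.g0.cont
  have c1 := h.g0.cont_t
  have c2 := h.g0.cont_x
  have c3 := h.g1.cont_t
  have c4 := h.g1.cont_x
  have c5 := h.g2.cont_x
  have ce := eden_cont h cV
  let Q : ℝ → ℝ → ℝ := fun t x => t * eden V W Wt Wx t x + (x + m x) * (Wt t x * Wx t x)
    + m1 x / 2 * (Wt t x * W t x)
  have cQ : Continuous (uncurry Q) := by simp only [Q]; fun_prop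
  have hQ0 : ∀ x, R < |x| → Q 0 x = 0 := fun x hx => by
    obtain ⟨e1, e2, e3⟩ := hd x hx
    simp [Q, e1, e2]
  refine ⟨(∫ x, Q 0 x) + (R + 1 + 2 * c) * ∫ x, eden V W Wt Wx 0 x, fun T S hS hST => ?_⟩
  have hT : 0 ≤ T := hS.trans hST
  have z1 : ∀ t ∈ Ioo 0 T, _ := fun t ht =>
    finite_speed (x := -(R + T + 1)) h cV hV hd ht.1.le
      (by rw [abs_neg, abs_of_nonneg (by linarith)]; linarith [ht.2])
  have z2 : ∀ t ∈ Ioo 0 T, _ := fun t ht =>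
    finite_speed (x := R + T + 1) h cV hV hd ht.1.le
      (by rw [abs_of_nonneg (by linarith)]; linarith [ht.2])
  have key : ∫ x in (-(R + T + 1))..(R + T + 1), Q T x ≤ ∫ x in (-(R + T + 1))..(R + T + 1), Q 0 x := by
    refine balance (Q := Q) (T := T)
      (Qt := fun t x => eden V W Wt Wx t x + t * (Wt t x * Wxx t x + Wx t x * Wtx t x)
        + (x + m x) * (Wtt t x * Wx t x + Wt t x * Wtx t x)
        + m1 x / 2 * (Wtt t x * W t x + Wt t x * Wt t x))
      (P := fun t x => t * (Wt t x * Wx t x)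
        + (x + m x) * ((Wt t x ^ 2 + Wx t x ^ 2 - V x * W t x ^ 2) / 2)
        + m1 x / 2 * (W t x * Wx t x) - m2 x / 4 * W t x ^ 2 - g x * W t x ^ 2)
      (Px := fun t x => t * (Wtx t x * Wx t x + Wt t x * Wxx t x)
        + ((1 + m1 x) * ((Wt t x ^ 2 + Wx t x ^ 2 - V x * W t x ^ 2) / 2)
          + (x + m x) * (Wt t x * Wtx t x + Wx t x * Wxx t x - V x * W t x * Wx t x
            - V1 x * W t x ^ 2 / 2))
        + (m2 x / 2 * (W t x * Wx t x) + m1 x / 2 * (Wx t x * Wx t x + W t x * Wxx t x))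
        - (m3 x / 4 * W t x ^ 2 + m2 x / 2 * (W t x * Wx t x))
        - (g1 x * W t x ^ 2 + 2 * g x * W t x * Wx t x))
      hT (by linarith) (fun t x => ?_) cQ (by fun_prop) (fun t x => ?_) (by fun_prop) ?_ ?_ ?_
    · have := (((hasDerivAt_id t).mul (eden_dt h t x)).add
        (((h.g1.dt t x).mul (h.g2.dt t x)).const_mul (x + m x))).add
        (((h.g1.dt t x).mul (h.g0.dt t x)).const_mul (m1 x / 2))
      exact this.congr_deriv (by simp)
    · have e1 := ((h.g1.dx t x).mul (h.g2.dx t x)).const_mul t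
      have e2 := ((hasDerivAt_id x).add (hm x)).mul
        (((((h.g1.dx t x).pow 2).add ((h.g2.dx t x).pow 2)).sub
          ((hV1 x).mul ((h.g0.dx t x).pow 2))).div_const 2)
      have e3 := ((hm1 x).div_const 2).mul ((h.g0.dx t x).mul (h.g2.dx t x))
      have e4 := ((hm2 x).div_const 4).mul ((h.g0.dx t x).pow 2)
      have e5 := (hg x).mul ((h.g0.dx t x).pow 2)
      refine ((((e1.add e2).add e3).sub e4).sub e5).congr_deriv ?_
      simp
      ring
    · intro t _ x _
      have e := h.eq t x
      have f := hform x (W t x) (Wx t x)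
      simp only [eden, e]
      nlinarith [f]
    · intro t ht
      simp only [z1 t ht]
      ring
    · intro t ht
      simp [z2 t ht]
  rw [integral_symm_eq hQ0 (show R < R + T + 1 by linarith)] at key
  have hE := integral_symm_eq (f := eden V W Wt Wx T) (fun x hx => eden_zero h cV hV hd hT hx)
    (show R + T < R + T + 1 by linarith)
  rw [energy_conserved h cV hV hR hd hT] at hE
  have i1 : ∀ {f : ℝ → ℝ}, Continuous f → ∀ a b, IntervalIntegrable f volume a b :=
    fun hf a b => hf.intervalIntegrable a b
  calc S * ∫ x in (-(T - S))..(T - S), eden V W Wt Wx T x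
      = ∫ x in (-(T - S))..(T - S), S * eden V W Wt Wx T x := by
        rw [intervalIntegral.integral_const_mul]
    _ ≤ ∫ x in (-(T - S))..(T - S), (T + R + 1 - |x|) * eden V W Wt Wx T x := by
        refine intervalIntegral.integral_mono_on (by linarith) (i1 (by fun_prop) _ _)
          (i1 (by fun_prop) _ _) fun x hx => ?_
        have := abs_le.2 hx
        exact mul_le_mul_of_nonneg_right (by linarith) (eden_nonneg hV T x)
    _ ≤ ∫ x in (-(R + T + 1))..(R + T + 1), (T + R + 1 - |x|) * eden V W Wt Wx T x := by
        refine intervalIntegral.integral_mono_interval (by linarith) (by linarith) (by linarith) ?_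
          (i1 (by fun_prop) _ _)
        refine (ae_restrict_mem measurableSet_Ioc).mono fun x hx => ?_
        have : |x| ≤ R + T + 1 := abs_le.2 ⟨hx.1.le, hx.2⟩
        exact mul_nonneg (by linarith) (eden_nonneg hV T x)
    _ ≤ ∫ x in (-(R + T + 1))..(R + T + 1), (Q T x + (R + 1 + 2 * c) * eden V W Wt Wx T x) := by
        refine intervalIntegral.integral_mono_on (by linarith) (i1 (by fun_prop) _ _)
          (i1 (by fun_prop) _ _) fun x hx => ?_
        have hVx := (hV x).le
        have f0 : 0 ≤ V x * W T x ^ 2 := by positivity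
        -- `|Wₜ Wₓ| ≤ e`
        have f1 : |Wt T x * Wx T x| ≤ eden V W Wt Wx T x := by
          rw [abs_mul, eden]
          nlinarith [sq_nonneg (|Wt T x| - |Wx T x|), sq_abs (Wt T x), sq_abs (Wx T x)]
        have f2 : -(|x| * eden V W Wt Wx T x) ≤ x * (Wt T x * Wx T x) := by
          refine neg_le_of_abs_le ?_
          rw [abs_mul]
          gcongr
        have f3 : -(c * eden V W Wt Wx T x) ≤ m x * (Wt T x * Wx T x) := by
          refine neg_le_of_abs_le ?_
          rw [abs_mul]
          gcongr
          exact bm x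
        have f4 : -(c * eden V W Wt Wx T x) ≤ m1 x / 2 * (Wt T x * W T x) := by
          have j1 := sq_nonneg (c * Wt T x + m1 x * W T x)
          have j2 : m1 x ^ 2 * W T x ^ 2 ≤ c ^ 2 * V x * W T x ^ 2 := by
            gcongr
            exact bm1 x
          have j4 : 0 ≤ c * (m1 x / 2 * (Wt T x * W T x) + c * eden V W Wt Wx T x) := by
            rw [eden]
            nlinarith [sq_nonneg (Wt T x), sq_nonneg (c * Wx T x), mul_pos hc hc,
              mul_nonneg (sq_nonneg c) f0]
          linarith [nonneg_of_mul_nonneg_right j4 hc]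
        simp only [Q]
        linarith
    _ = (∫ x in (-(R + T + 1))..(R + T + 1), Q T x)
        + (R + 1 + 2 * c) * ∫ x, eden V W Wt Wx 0 x := by
        rw [intervalIntegral.integral_add (i1 (by fun_prop) _ _) (i1 (by fun_prop) _ _),
          intervalIntegral.integral_const_mul, hE]
    _ ≤ _ := by linarith

end

/-! ### Radiation fields of a one-dimensional wave equation with potential -/

/-- A function whose derivative is dominated by that of `Ψ` varies at most as much as `Ψ`. -/
lemma abs_sub_le_of_deriv {f f' Ψ ψ : ℝ → ℝ} {a b : ℝ} (hab : a ≤ b)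
    (hf : ∀ s, HasDerivAt f (f' s) s) (hΨ : ∀ s, HasDerivAt Ψ (ψ s) s)
    (hle : ∀ s ∈ Ioo a b, |f' s| ≤ ψ s) : |f b - f a| ≤ Ψ b - Ψ a := by
  have mono : ∀ {F F' : ℝ → ℝ}, (∀ s, HasDerivAt F (F' s) s) → (∀ s ∈ Ioo a b, 0 ≤ F' s) →
      F a ≤ F b := by
    intro F F' hF hF'
    refine monotoneOn_of_deriv_nonneg (convex_Icc a b)
      (fun s _ => (hF s).continuousAt.continuousWithinAt)
      (fun s _ => (hF s).differentiableAt.differentiableWithinAt) (fun s hs => ?_)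
      (left_mem_Icc.2 hab) (right_mem_Icc.2 hab) hab
    rw [interior_Icc] at hs
    rw [(hF s).deriv]
    exact hF' s hs
  have h1 := mono (fun s => (hΨ s).sub (hf s)) fun s hs => by
    linarith [(abs_le.1 (hle s hs)).2]
  have h2 := mono (fun s => (hΨ s).add (hf s)) fun s hs => by
    linarith [(abs_le.1 (hle s hs)).1]
  simp only [Pi.sub_apply, Pi.add_apply] at h1 h2
  exact abs_le.2 ⟨by linarith, by linarith⟩

section
variable {V : ℝ → ℝ} {W Wt Wx Wtt Wtx Wxx : ℝ → ℝ → ℝ} {R : ℝ}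

/-- The radiation field `G` at the right end. Along an outgoing characteristic `t - x = τ` the
incoming derivative `(∂ₜ - ∂ₓ)W` changes by the integral of `V W`, hence converges, while the
outgoing derivative `(∂ₜ + ∂ₓ)W` tends to `0`; so `∂ₜW` has a limit `G τ`, and the energy in the
strip `t - x ≤ S` tends to the integral of `G²`. Here `Φ` is an antiderivative of `V`. -/
lemma one_sided (h : Wave V W Wt Wx Wtt Wtx Wxx) (cV : Continuous V) (hV : ∀ x, 0 < V x)
    (hR : 0 ≤ R) (hd : DataSupp R W Wt Wx) {Φ : ℝ → ℝ} {Φ0 V0 : ℝ}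
    (hΦ : ∀ x, HasDerivAt Φ (V x) x) (Φneg : ∀ x, Φ x ≤ 0) (Φb : ∀ x, -Φ0 ≤ Φ x)
    (Φlim : Tendsto Φ atTop (nhds 0)) (Vb : ∀ x, V x ≤ V0) (Vlim : Tendsto V atTop (nhds 0)) :
    ∃ G : ℝ → ℝ, (∀ τ, Tendsto (fun T => Wt T (T - τ)) atTop (nhds (G τ))) ∧
      (∀ τ, τ < -R → G τ = 0) ∧
      ∀ S, 0 ≤ S → IntervalIntegrable (fun τ => G τ ^ 2) volume (-(R + 1)) S ∧
        Tendsto (fun T => ∫ x in (T - S)..(T + R + 1), eden V W Wt Wx T x) atTop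
          (nhds (∫ τ in (-(R + 1))..S, G τ ^ 2)) := by
  set E := ∫ y, eden V W Wt Wx 0 y with hEdef
  have hE : 0 ≤ E := integral_nonneg fun y => eden_nonneg hV 0 y
  let K : ℝ → ℝ := fun ξ => (R + 1 + |ξ|) / 2 + E
  have hK : ∀ ξ, 0 ≤ K ξ := fun ξ => by
    have := abs_nonneg ξ
    simp only [K]
    linarith
  have hW : ∀ {t x ξ : ℝ}, 0 ≤ t → t - x ≤ ξ → |W t x| ≤ K ξ := fun ht hx =>
    wave_bound h cV hV hR hd ht hx
  have hVW : ∀ {t x ξ : ℝ}, 0 ≤ t → t - x ≤ ξ → |V x * W t x| ≤ K ξ * V x := fun {t x ξ} ht hx => by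
    rw [abs_mul, abs_of_pos (hV x), mul_comm]
    exact mul_le_mul_of_nonneg_right (hW ht hx) (hV x).le
  have Φmono : Monotone Φ := monotone_of_deriv_nonneg (fun x => (hΦ x).differentiableAt)
    fun x => by rw [(hΦ x).deriv]; exact (hV x).le
  -- variation of the incoming derivative along the characteristic
  have hb : ∀ ξ a b, 0 ≤ a → a ≤ b →
      |(Wt b (b - ξ) - Wx b (b - ξ)) - (Wt a (a - ξ) - Wx a (a - ξ))|
        ≤ K ξ * (Φ (b - ξ) - Φ (a - ξ)) := by
    intro ξ a b ha hab
    rw [mul_sub]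
    refine abs_sub_le_of_deriv (f := fun T => Wt T (T - ξ) - Wx T (T - ξ))
      (f' := fun T => -(V (T - ξ) * W T (T - ξ)))
      (Ψ := fun T => K ξ * Φ (T - ξ)) (ψ := fun T => K ξ * V (T - ξ)) hab (fun s => ?_)
      (fun s => ?_) (fun s hs => ?_)
    · have i1 := (hasDerivAt_id s).sub_const ξ
      refine ((h.g1.chain (hasDerivAt_id s) i1).sub
        (h.g2.chain (hasDerivAt_id s) i1)).congr_deriv ?_
      simp only [id, h.eq]
      ring
    · have i1 := (hasDerivAt_id s).sub_const ξ
      exact (((hΦ _).comp s i1).const_mul (K ξ)).congr_deriv (by simp)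
    · rw [abs_neg]
      exact hVW (by linarith [hs.1]) (by linarith)
  -- the outgoing derivative, integrated along an incoming characteristic from the initial slice
  have hl : ∀ ξ T, 0 ≤ T → R < 2 * T - ξ →
      |Wt T (T - ξ) + Wx T (T - ξ)| ≤ K ξ * (-Φ (T - ξ)) := by
    intro ξ T hT hξ
    have key := abs_sub_le_of_deriv
      (f := fun s => Wt (T - s) (T - ξ + s) + Wx (T - s) (T - ξ + s))
      (f' := fun s => V (T - ξ + s) * W (T - s) (T - ξ + s))
      (Ψ := fun s => K ξ * Φ (T - ξ + s)) (ψ := fun s => K ξ * V (T - ξ + s)) hT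
      (fun s => ?_) (fun s => ?_) (fun s hs => ?_)
    · obtain ⟨-, e2, e3⟩ := hd (T - ξ + T) (lt_of_lt_of_le (by linarith) (le_abs_self _))
      simp only [sub_self, sub_zero, add_zero, e2, e3, zero_sub, abs_neg] at key
      have := mul_le_mul_of_nonneg_left (Φneg (T - ξ + T)) (hK ξ)
      linarith
    · have i1 := (hasDerivAt_id s).const_sub T
      have i2 := (hasDerivAt_id s).const_add (T - ξ)
      refine ((h.g1.chain i1 i2).add (h.g2.chain i1 i2)).congr_deriv ?_
      simp only [id, h.eq]
      ring
    · have i2 := (hasDerivAt_id s).const_add (T - ξ)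
      exact (((hΦ _).comp s i2).const_mul (K ξ)).congr_deriv (by simp)
    · exact hVW (by linarith [hs.2]) (by linarith [hs.1])
  have sh : ∀ ξ : ℝ, Tendsto (fun T : ℝ => T - ξ) atTop atTop := fun ξ =>
    tendsto_atTop_add_const_right _ (-ξ) tendsto_id
  have Φsh : ∀ ξ, Tendsto (fun T => K ξ * (-Φ (T - ξ))) atTop (nhds 0) := fun ξ => by
    simpa using ((Φlim.comp (sh ξ)).neg.const_mul (K ξ))
  have llim : ∀ ξ, Tendsto (fun T => Wt T (T - ξ) + Wx T (T - ξ)) atTop (nhds 0) := fun ξ => by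
    refine squeeze_zero_norm' ?_ (Φsh ξ)
    filter_upwards [eventually_ge_atTop 0, eventually_gt_atTop ((R + ξ) / 2)] with T h1 h2
    exact hl ξ T h1 (by linarith)
  have blim : ∀ ξ, ∃ a, Tendsto (fun T => Wt T (T - ξ) - Wx T (T - ξ)) atTop (nhds a) := fun ξ => by
    refine cauchySeq_tendsto_of_complete (Metric.cauchySeq_iff'.2 fun ε hε => ?_)
    obtain ⟨N, hN1, hN2⟩ := (((Φsh ξ).eventually (gt_mem_nhds hε)).and
      (eventually_ge_atTop (0 : ℝ))).exists
    refine ⟨N, fun n hn => lt_of_le_of_lt ?_ hN1⟩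
    rw [Real.dist_eq]
    refine (hb ξ N n hN2 hn).trans (mul_le_mul_of_nonneg_left ?_ (hK ξ))
    linarith [Φneg (n - ξ)]
  choose G2 hG2 using blim
  have tlim : ∀ ξ, Tendsto (fun T => Wt T (T - ξ)) atTop (nhds (G2 ξ / 2)) := fun ξ => by
    have := ((hG2 ξ).add (llim ξ)).div_const 2
    rw [add_zero] at this
    exact this.congr fun T => by ring
  have xlim : ∀ ξ, Tendsto (fun T => Wx T (T - ξ)) atTop (nhds (-(G2 ξ / 2))) := fun ξ => by
    have := ((llim ξ).sub (hG2 ξ)).div_const 2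
    rw [zero_sub, neg_div] at this
    exact this.congr fun T => by ring
  have VWb : ∀ ξ T, 0 ≤ T → V (T - ξ) * W T (T - ξ) ^ 2 ≤ V (T - ξ) * K ξ ^ 2 := fun ξ T hT => by
    refine mul_le_mul_of_nonneg_left ?_ (hV _).le
    rw [← sq_abs]
    exact pow_le_pow_left₀ (abs_nonneg _) (hW hT (by linarith)) 2
  have vlim : ∀ ξ, Tendsto (fun T => V (T - ξ) * W T (T - ξ) ^ 2) atTop (nhds 0) := fun ξ => by
    refine squeeze_zero' (Eventually.of_forall fun T => ?_)
      ((eventually_ge_atTop 0).mono (VWb ξ)) (by simpa using (Vlim.comp (sh ξ)).mul_const (K ξ ^ 2))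
    have := (hV (T - ξ)).le
    positivity
  have edlim : ∀ ξ, Tendsto (fun T => eden V W Wt Wx T (T - ξ)) atTop
      (nhds ((G2 ξ / 2) ^ 2)) := fun ξ => by
    have := ((((tlim ξ).pow 2).add ((xlim ξ).pow 2)).add (vlim ξ)).div_const 2
    have e : ((G2 ξ / 2) ^ 2 + (-(G2 ξ / 2)) ^ 2 + 0) / 2 = (G2 ξ / 2) ^ 2 := by ring
    rw [e] at this
    exact this
  have c1 := h.g0.cont_t
  have c2 := h.g0.cont_x
  have ce := eden_cont h cV
  have Gmeas : Measurable fun ξ => G2 ξ / 2 :=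
    measurable_of_tendsto_metrizable' atTop (f := fun T ξ => Wt T (T - ξ))
      (fun T => (show Continuous fun ξ => Wt T (T - ξ) by fun_prop).measurable)
      (tendsto_pi_nhds.2 tlim)
  refine ⟨fun ξ => G2 ξ / 2, tlim, fun τ hτ => ?_, fun S hS => ?_⟩
  · refine tendsto_nhds_unique (tlim τ) (tendsto_const_nhds.congr' ?_)
    filter_upwards [eventually_ge_atTop 0] with T hT
    exact ((finite_speed h cV hV hd hT (lt_of_lt_of_le (by linarith) (le_abs_self _))).2.1).symm
  -- a bound for the energy density on the strip, uniform in time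
  have : ∃ C, ∀ T, S + R + 1 ≤ T → ∀ ξ ∈ Icc (-(R + 1)) S, eden V W Wt Wx T (T - ξ) ≤ C := by
    obtain ⟨C1, hC1⟩ := (isCompact_Icc (a := -(R + 1)) (b := S)).exists_bound_of_continuousOn
      (f := fun ξ => Wt 0 (0 - ξ) - Wx 0 (0 - ξ)) (Continuous.continuousOn (by fun_prop))
    refine ⟨((C1 + K (S + R + 1) * Φ0) ^ 2 + (K (S + R + 1) * Φ0) ^ 2) / 4
      + V0 * K (S + R + 1) ^ 2 / 2, fun T hT ξ hξ => ?_⟩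
    have hT0 : 0 ≤ T := by linarith
    have hKle : K ξ ≤ K (S + R + 1) := by
      have : |ξ| ≤ |S + R + 1| := by
        rw [abs_of_nonneg (show 0 ≤ S + R + 1 by linarith)]
        exact abs_le.2 ⟨by linarith [hξ.1], by linarith [hξ.2]⟩
      simp only [K]
      linarith
    have hΦ0 : 0 ≤ Φ0 := by linarith [Φneg 0, Φb 0]
    have b1 : |Wt T (T - ξ) - Wx T (T - ξ)| ≤ C1 + K (S + R + 1) * Φ0 := by
      have a1 := hb ξ 0 T le_rfl hT0
      have a2 := hC1 ξ hξ
      have a3 : K ξ * (Φ (T - ξ) - Φ (0 - ξ)) ≤ K (S + R + 1) * Φ0 :=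
        mul_le_mul hKle (by linarith [Φneg (T - ξ), Φb (0 - ξ)])
          (sub_nonneg.2 (Φmono (by linarith))) (hK _)
      rw [Real.norm_eq_abs] at a2
      have a4 := abs_sub_abs_le_abs_sub (Wt T (T - ξ) - Wx T (T - ξ)) (Wt 0 (0 - ξ) - Wx 0 (0 - ξ))
      linarith
    have b2 : |Wt T (T - ξ) + Wx T (T - ξ)| ≤ K (S + R + 1) * Φ0 :=
      (hl ξ T hT0 (by linarith [hξ.2])).trans
        (mul_le_mul hKle (by linarith [Φb (T - ξ)]) (by linarith [Φneg (T - ξ)]) (hK _))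
    have b3 : V (T - ξ) * W T (T - ξ) ^ 2 ≤ V0 * K (S + R + 1) ^ 2 :=
      (VWb ξ T hT0).trans (mul_le_mul (Vb _) (pow_le_pow_left₀ (hK _) hKle 2) (sq_nonneg _)
        ((hV 0).le.trans (Vb 0)))
    have b1' := pow_le_pow_left₀ (abs_nonneg _) b1 2
    have b2' := pow_le_pow_left₀ (abs_nonneg _) b2 2
    rw [sq_abs] at b1' b2'
    rw [eden]
    nlinarith
  obtain ⟨C, hC⟩ := this
  have hSR : -(R + 1) ≤ S := by linarith
  constructor
  · rw [intervalIntegrable_iff_integrableOn_Ioc_of_le hSR]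
    refine Measure.integrableOn_of_bounded (M := C) (by simp)
      (Gmeas.pow_const 2).aestronglyMeasurable ?_
    refine (ae_restrict_mem measurableSet_Ioc).mono fun ξ hξ => ?_
    rw [Real.norm_eq_abs, abs_of_nonneg (sq_nonneg _)]
    exact le_of_tendsto (edlim ξ) ((eventually_ge_atTop (S + R + 1)).mono fun T hT =>
      hC T hT ξ ⟨hξ.1.le, hξ.2⟩)
  · have cv : ∀ T, ∫ x in (T - S)..(T + R + 1), eden V W Wt Wx T x
        = ∫ ξ in (-(R + 1))..S, eden V W Wt Wx T (T - ξ) := fun T => by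
      rw [intervalIntegral.integral_comp_sub_left (fun x => eden V W Wt Wx T x) T]
      congr 1
      ring
    simp only [cv]
    refine intervalIntegral.tendsto_integral_filter_of_dominated_convergence (fun _ => C)
      (Eventually.of_forall fun T => ?_) ?_ intervalIntegrable_const
      (Eventually.of_forall fun ξ _ => edlim ξ)
    · exact (show Continuous fun ξ => eden V W Wt Wx T (T - ξ) by fun_prop).aestronglyMeasurable
    · filter_upwards [eventually_ge_atTop (S + R + 1)] with T hT
      refine Eventually.of_forall fun ξ hξ => ?_
      rw [uIoc_of_le hSR] at hξ
      rw [Real.norm_eq_abs, abs_of_nonneg (eden_nonneg hV _ _)]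
      exact hC T hT ξ ⟨hξ.1.le, hξ.2⟩

/-- Integrability of a nonnegative function supported on a half-line, from a bound on its
integrals over compact intervals. -/
lemma integrable_tail {F : ℝ → ℝ} {a B : ℝ} (hF : ∀ τ, 0 ≤ F τ) (h0 : ∀ τ, τ ≤ a → F τ = 0)
    (hi : ∀ S, 0 ≤ S → IntervalIntegrable F volume a S) (ha : a ≤ 0)
    (hB : ∀ S, 0 < S → ∫ τ in a..S, F τ ≤ B) :
    Integrable F ∧ Tendsto (fun S => ∫ τ in a..S, F τ) atTop (nhds (∫ τ, F τ)) := by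
  have hs : support F ⊆ Ioi a := fun τ hτ => by
    by_contra hc
    exact hτ (h0 τ (not_lt.1 hc))
  have h1 : IntegrableOn F (Ioi a) := by
    refine integrableOn_Ioi_of_intervalIntegral_norm_bounded (l := atTop)
      (b := fun n : ℕ => (n : ℝ)) B a (fun n => ?_) tendsto_natCast_atTop_atTop ?_
    · exact (intervalIntegrable_iff_integrableOn_Ioc_of_le
        (ha.trans (Nat.cast_nonneg n))).1 (hi n (Nat.cast_nonneg n))
    · filter_upwards [eventually_gt_atTop 0] with n hn
      simpa only [Real.norm_eq_abs, abs_of_nonneg (hF _)] using hB n (Nat.cast_pos.2 hn)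
  refine ⟨(integrableOn_iff_integrable_of_support_subset hs).1 h1, ?_⟩
  rw [← setIntegral_eq_integral_of_forall_compl_eq_zero (s := Ioi a)
    fun τ hτ => h0 τ (not_lt.1 hτ)]
  exact intervalIntegral_tendsto_integral_Ioi a h1 tendsto_id

/-- Both radiation fields together carry the whole energy, provided the energy at distance `S`
from the light cone is `O(1/S)`. -/
lemma radiation (h : Wave V W Wt Wx Wtt Wtx Wxx) (cV : Continuous V) (hV : ∀ x, 0 < V x)
    (hR : 0 ≤ R) (hd : DataSupp R W Wt Wx) {Φ : ℝ → ℝ} {Φ0 V0 : ℝ}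
    (hΦ : ∀ x, HasDerivAt Φ (V x) x) (Φneg : ∀ x, Φ x ≤ 0) (Φb : ∀ x, -Φ0 ≤ Φ x)
    (Φtop : Tendsto Φ atTop (nhds 0)) (Φbot : Tendsto Φ atBot (nhds (-Φ0)))
    (Vb : ∀ x, V x ≤ V0) (Vtop : Tendsto V atTop (nhds 0)) (Vbot : Tendsto V atBot (nhds 0))
    (hdecay : ∃ C : ℝ, ∀ T S, 0 ≤ S → S ≤ T →
      S * ∫ x in (-(T - S))..(T - S), eden V W Wt Wx T x ≤ C) :
    ∃ f g : ℝ → ℝ, (∀ τ, Tendsto (fun T => Wt T (τ - T)) atTop (nhds (f τ))) ∧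
      (∀ τ, Tendsto (fun T => Wt T (T - τ)) atTop (nhds (g τ))) ∧
      Integrable (fun τ => f τ ^ 2) ∧ Integrable (fun τ => g τ ^ 2) ∧
      (∫ τ, f τ ^ 2) + (∫ τ, g τ ^ 2) = ∫ x, eden V W Wt Wx 0 x := by
  obtain ⟨C, hC⟩ := hdecay
  obtain ⟨g, g1, g2, g3⟩ := one_sided h cV hV hR hd hΦ Φneg Φb Φtop Vb Vtop
  have hd' : DataSupp R (fun t x => W t (-x)) (fun t x => Wt t (-x)) (fun t x => -Wx t (-x)) :=
    fun x hx => by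
      obtain ⟨e1, e2, e3⟩ := hd (-x) (by rwa [abs_neg])
      exact ⟨e1, e2, by simp [e3]⟩
  obtain ⟨f, f1, f2, f3⟩ := one_sided (Φ := fun x => -Φ (-x) - Φ0) (Φ0 := Φ0) h.refl
    (by fun_prop) (fun x => hV (-x)) hR hd'
    (fun x => ((((hΦ (-x)).comp x (hasDerivAt_neg x)).neg).sub_const Φ0).congr_deriv (by ring))
    (fun x => by linarith [Φb (-x)]) (fun x => by linarith [Φneg (-x)])
    (by simpa using ((Φbot.comp tendsto_neg_atTop_atBot).neg.sub_const Φ0))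
    (fun x => Vb (-x)) (Vbot.comp tendsto_neg_atTop_atBot)
  have er : ∀ t x, eden (fun x => V (-x)) (fun t x => W t (-x)) (fun t x => Wt t (-x))
      (fun t x => -Wx t (-x)) t x = eden V W Wt Wx t (-x) := fun t x => by simp [eden]
  simp only [er] at f3
  set E := ∫ x, eden V W Wt Wx 0 x with hEdef
  have ce := eden_cont h cV
  have ii : ∀ T a b, IntervalIntegrable (eden V W Wt Wx T) volume a b := fun T a b =>
    (show Continuous (eden V W Wt Wx T) by fun_prop).intervalIntegrable a b
  -- splitting of the energy at time `T` into the two strips and the middle region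
  have split : ∀ T S, 0 ≤ S → S ≤ T →
      (∫ x in (T - S)..(T + R + 1), eden V W Wt Wx T (-x))
        + (∫ x in (T - S)..(T + R + 1), eden V W Wt Wx T x)
        = E - ∫ x in (-(T - S))..(T - S), eden V W Wt Wx T x := by
    intro T S hS hST
    have e1 := integral_symm_eq (f := eden V W Wt Wx T)
      (fun x hx => eden_zero h cV hV hd (hS.trans hST) hx) (show R + T < T + R + 1 by linarith)
    rw [energy_conserved h cV hV hR hd (hS.trans hST)] at e1
    have a1 := intervalIntegral.integral_add_adjacent_intervals
      (ii T (-(T + R + 1)) (-(T - S))) (ii T (-(T - S)) (T - S))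
    have a2 := intervalIntegral.integral_add_adjacent_intervals
      (ii T (-(T + R + 1)) (T - S)) (ii T (T - S) (T + R + 1))
    rw [intervalIntegral.integral_comp_neg]
    linarith
  have lim : ∀ S, 0 ≤ S → Tendsto (fun T => E - ∫ x in (-(T - S))..(T - S), eden V W Wt Wx T x)
      atTop (nhds ((∫ τ in (-(R + 1))..S, f τ ^ 2) + ∫ τ in (-(R + 1))..S, g τ ^ 2)) :=
    fun S hS => ((f3 S hS).2.add (g3 S hS).2).congr'
      ((eventually_ge_atTop S).mono fun T hT => split T S hS hT)
  have upper : ∀ S, 0 ≤ S →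
      (∫ τ in (-(R + 1))..S, f τ ^ 2) + ∫ τ in (-(R + 1))..S, g τ ^ 2 ≤ E := fun S hS => by
    refine le_of_tendsto (lim S hS) ((eventually_ge_atTop S).mono fun T hT => ?_)
    have : 0 ≤ ∫ x in (-(T - S))..(T - S), eden V W Wt Wx T x :=
      intervalIntegral.integral_nonneg (by linarith) fun x _ => eden_nonneg hV T x
    linarith
  have lower : ∀ S, 0 < S →
      E - C / S ≤ (∫ τ in (-(R + 1))..S, f τ ^ 2) + ∫ τ in (-(R + 1))..S, g τ ^ 2 := fun S hS => by
    refine ge_of_tendsto (lim S hS.le) ((eventually_ge_atTop S).mono fun T hT => ?_)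
    have := (le_div_iff₀' hS).2 (hC T S hS.le hT)
    linarith
  have pos : ∀ (k : ℝ → ℝ) S, 0 < S → 0 ≤ ∫ τ in (-(R + 1))..S, k τ ^ 2 := fun k S hS =>
    intervalIntegral.integral_nonneg (by linarith) fun τ _ => sq_nonneg _
  obtain ⟨If, Lf⟩ := integrable_tail (B := E) (fun τ => sq_nonneg (f τ))
    (a := -(R + 1)) (fun τ hτ => by simp [f2 τ (by linarith)]) (fun S hS => (f3 S hS).1)
    (by linarith) fun S hS => by linarith [upper S hS.le, pos g S hS]
  obtain ⟨Ig, Lg⟩ := integrable_tail (B := E) (fun τ => sq_nonneg (g τ))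
    (a := -(R + 1)) (fun τ hτ => by simp [g2 τ (by linarith)]) (fun S hS => (g3 S hS).1)
    (by linarith) fun S hS => by linarith [upper S hS.le, pos f S hS]
  refine ⟨f, g, fun τ => ?_, g1, If, Ig, le_antisymm ?_ ?_⟩
  · simpa using f1 τ
  · exact le_of_tendsto (Lf.add Lg) ((eventually_ge_atTop 0).mono upper)
  · refine le_of_tendsto_of_tendsto ?_ (Lf.add Lg) ((eventually_gt_atTop 0).mono lower)
    simpa using (tendsto_const_nhds (x := E)).sub (tendsto_const_nhds (x := C).div_atTop tendsto_id)

end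

/-! ### The tortoise coordinate and smooth functions of two variables -/

/-- `ρ` inverts the tortoise coordinate: `ρ x` is the radius `r > 2M` with `r_* = x`. The derivative
formula is `dr/dr_* = 1 - 2M/r`. -/
structure IsInvTortoise (M : ℝ) (ρ : ℝ → ℝ) : Prop where
  gt : ∀ x, 2 * M < ρ x
  rstar_eq : ∀ x, rstar M (ρ x) = x
  eq_self : ∀ r, 2 * M < r → ρ (rstar M r) = r
  smooth : ContDiff ℝ ∞ ρ
  deriv : ∀ x, HasDerivAt ρ (1 - 2 * M / ρ x) x
  top : Tendsto ρ atTop atTop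
  bot : Tendsto ρ atBot (nhds (2 * M))

lemma hasDerivAt_rstar {M r : ℝ} (hr : 2 * M < r) :
    HasDerivAt (rstar M) (1 + 2 * M * (1 / (r - 2 * M))) r :=
  (hasDerivAt_id r).add ((((hasDerivAt_id r).sub_const (2 * M)).log
    (sub_pos.2 hr).ne').const_mul (2 * M))

/-- With `r = 2M + exp y`, the tortoise coordinate becomes the diffeomorphism
`y ↦ 2M + exp y + 2M y` of the real line. -/
lemma exists_invTortoise {M : ℝ} (hM : 0 < M) : ∃ ρ, IsInvTortoise M ρ := by
  let T : ℝ → ℝ := fun y => 2 * M + Real.exp y + 2 * M * y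
  have hT : ∀ y, HasDerivAt T (Real.exp y + 2 * M) y := fun y =>
    (((Real.hasDerivAt_exp y).const_add (2 * M)).add
      ((hasDerivAt_id y).const_mul (2 * M))).congr_deriv (by simp)
  have Tpos : ∀ y, 0 < Real.exp y + 2 * M := fun y => by positivity
  have mono : StrictMono T := strictMono_of_deriv_pos fun y => by rw [(hT y).deriv]; exact Tpos y
  have top : Tendsto T atTop atTop := by
    refine tendsto_atTop_mono (fun y => ?_) (tendsto_id.const_mul_atTop (show 0 < 2 * M by positivity))
    have := Real.exp_pos y
    simp only [T, id]
    linarith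
  have bot : Tendsto T atBot atBot :=
    ((tendsto_const_nhds (x := 2 * M)).add Real.tendsto_exp_atBot).add_atBot
      (tendsto_id.const_mul_atBot (show 0 < 2 * M by positivity))
  have cT : Continuous T := by fun_prop
  let e : ℝ ≃o ℝ := mono.orderIsoOfSurjective T (cT.surjective top bot)
  have he : ∀ y, e y = T y := fun y => rfl
  have hes : ∀ x, T (e.symm x) = x := fun x => e.apply_symm_apply x
  have smooth : ContDiff ℝ ∞ e.symm :=
    e.toHomeomorph.contDiff_symm_deriv (f' := fun y => Real.exp y + 2 * M) (fun y => (Tpos y).ne')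
      hT (show ContDiff ℝ ∞ T by fun_prop)
  have rT : ∀ y, rstar M (2 * M + Real.exp y) = T y := fun y => by
    simp only [rstar, add_sub_cancel_left, Real.log_exp, T]
  have sm : ContDiff ℝ ∞ fun x => 2 * M + Real.exp (e.symm x) := by fun_prop
  have gt : ∀ x, 2 * M < 2 * M + Real.exp (e.symm x) := fun x => by
    linarith [Real.exp_pos (e.symm x)]
  have inv : ∀ x, rstar M (2 * M + Real.exp (e.symm x)) = x := fun x => by rw [rT, hes]
  refine ⟨fun x => 2 * M + Real.exp (e.symm x), gt, inv, fun r hr => ?_, sm, fun x => ?_, ?_, ?_⟩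
  · have h1 : rstar M r = e (Real.log (r - 2 * M)) := by
      rw [he, ← rT, Real.exp_log (sub_pos.2 hr), add_sub_cancel]
    rw [h1, e.symm_apply_apply, Real.exp_log (sub_pos.2 hr), add_sub_cancel]
  · -- differentiate the identity `rstar M (ρ x) = x`
    have d1 : HasDerivAt (fun x => 2 * M + Real.exp (e.symm x)) _ x :=
      ((sm.differentiable (by simp)) x).hasDerivAt
    have d2 := (hasDerivAt_rstar (gt x)).comp x d1
    have d3 := d2.unique ((hasDerivAt_id x).congr_of_eventuallyEq (Eventually.of_forall inv))
    refine d1.congr_deriv ?_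
    have p := sub_pos.2 (gt x)
    have p' : 0 < 2 * M + Real.exp (e.symm x) := by linarith [gt x]
    generalize deriv (fun x => 2 * M + Real.exp (e.symm x)) x = D at *
    generalize 2 * M + Real.exp (e.symm x) = r at *
    have : D = 1 / (1 + 2 * M * (1 / (r - 2 * M))) := by
      rw [eq_div_iff (by positivity)]
      linarith
    rw [this]
    field_simp
    ring
  · exact tendsto_atTop_add_const_left _ _ (Real.tendsto_exp_atTop.comp e.symm.tendsto_atTop)
  · simpa using (Real.tendsto_exp_atBot.comp e.symm.tendsto_atBot).const_add (2 * M)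

lemma rstar_tendsto_atTop {M : ℝ} (hM : 0 < M) : Tendsto (rstar M) atTop atTop := by
  refine tendsto_atTop_mono' _ ?_ tendsto_id
  filter_upwards [eventually_ge_atTop (2 * M + 1)] with r hr
  have := mul_nonneg hM.le (Real.log_nonneg (show 1 ≤ r - 2 * M by linarith))
  simp only [rstar, id]
  linarith

lemma rstar_tendsto_atBot {M : ℝ} (hM : 0 < M) :
    Tendsto (rstar M) (nhdsWithin (2 * M) (Ioi (2 * M))) atBot := by
  have h1 : Tendsto (fun r : ℝ => r - 2 * M) (nhdsWithin (2 * M) (Ioi (2 * M)))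
      (nhdsWithin 0 (Ioi 0)) := by
    refine tendsto_nhdsWithin_iff.2 ⟨?_, ?_⟩
    · have : Continuous fun r : ℝ => r - 2 * M := by fun_prop
      simpa using (this.tendsto (2 * M)).mono_left nhdsWithin_le_nhds
    · exact eventually_mem_nhdsWithin.mono fun r hr => mem_Ioi.2 (sub_pos.2 hr)
  have h2 := (Real.tendsto_log_nhdsGT_zero.comp h1).const_mul_atBot (show 0 < 2 * M by positivity)
  exact (tendsto_id.mono_left nhdsWithin_le_nhds).add_atBot h2

/-- The partial derivatives of a smooth function of two variables. -/
lemma hasGrad_of_contDiff {f : ℝ → ℝ → ℝ} (hf : ContDiff ℝ ∞ (uncurry f)) :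
    HasGrad f (pdt f) (pdr f) ∧ ContDiff ℝ ∞ (uncurry (pdt f)) ∧
      ContDiff ℝ ∞ (uncurry (pdr f)) ∧ pdr (pdt f) = pdt (pdr f) := by
  have main : ∀ {f : ℝ → ℝ → ℝ}, ContDiff ℝ ∞ (uncurry f) →
      (∀ t x, pdt f t x = fderiv ℝ (uncurry f) (t, x) (1, 0)) ∧
      (∀ t x, pdr f t x = fderiv ℝ (uncurry f) (t, x) (0, 1)) := by
    intro f hf
    have hd := fun p => ((hf.differentiable (by simp)) p).hasFDerivAt
    refine ⟨fun t x => ?_, fun t x => ?_⟩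
    · exact ((hd (t, x)).comp_hasDerivAt t
        ((hasDerivAt_id t).prodMk (hasDerivAt_const t x))).deriv
    · exact ((hd (t, x)).comp_hasDerivAt x
        ((hasDerivAt_const x t).prodMk (hasDerivAt_id x))).deriv
  have hfd : ContDiff ℝ ∞ (fderiv ℝ (uncurry f)) := hf.fderiv_right (by simp)
  obtain ⟨e1, e2⟩ := main hf
  have f1 : uncurry (pdt f) = fun p => fderiv ℝ (uncurry f) p (1, 0) := funext fun p => e1 p.1 p.2
  have f2 : uncurry (pdr f) = fun p => fderiv ℝ (uncurry f) p (0, 1) := funext fun p => e2 p.1 p.2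
  have s1 : ContDiff ℝ ∞ (uncurry (pdt f)) := by
    rw [f1]
    exact hfd.clm_apply contDiff_const
  have s2 : ContDiff ℝ ∞ (uncurry (pdr f)) := by
    rw [f2]
    exact hfd.clm_apply contDiff_const
  refine ⟨⟨fun t x => ?_, s1.continuous, s2.continuous⟩, s1, s2, ?_⟩
  · refine ((hf.differentiable (by simp)) (t, x)).hasFDerivAt.congr_fderiv ?_
    ext <;> simp [e1, e2]
  · funext t x
    have hdd := ((hfd.differentiable (by simp)) (t, x)).hasFDerivAt
    have sym := second_derivative_symmetric
      (fun p => ((hf.differentiable (by simp)) p).hasFDerivAt) hdd (0, 1) (1, 0)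
    rw [(main s1).2, (main s2).1, f1, f2]
    rw [(hdd.clm_apply (hasFDerivAt_const (1, 0) _)).fderiv,
      (hdd.clm_apply (hasFDerivAt_const (0, 1) _)).fderiv]
    simpa using sym

/-- A smooth function on the plane satisfying the wave equation, together with its partial
derivatives. -/
lemma wave_of_contDiff {V : ℝ → ℝ} {W : ℝ → ℝ → ℝ} (hW : ContDiff ℝ ∞ (uncurry W))
    (h : ∀ t x, pdt (pdt W) t x = pdr (pdr W) t x - V x * W t x) :
    Wave V W (pdt W) (pdr W) (pdt (pdt W)) (pdr (pdt W)) (pdr (pdr W)) := by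
  obtain ⟨g0, s1, s2, e⟩ := hasGrad_of_contDiff hW
  refine ⟨g0, (hasGrad_of_contDiff s1).1, ?_, h⟩
  rw [e]
  exact (hasGrad_of_contDiff s2).1

/-! ### The Regge–Wheeler potential -/

/-- The Regge–Wheeler potential `(1 - 2M/r)(λ²/r² + 2M/r³)` as a function of `s = M/r`. -/
noncomputable def rwPot (M lam s : ℝ) : ℝ := (1 - 2 * s) * (lam ^ 2 * s ^ 2 + 2 * s ^ 3) / M ^ 2

/-- The derivative of `rwPot` in the tortoise coordinate, as a function of `s = M/r`. -/
noncomputable def rwPot' (M lam s : ℝ) : ℝ :=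
  -2 * (1 - 2 * s) * s ^ 3 * (lam ^ 2 * (1 - 3 * s) + s * (3 - 8 * s)) / M ^ 3

section
variable {M lam : ℝ} {ρ : ℝ → ℝ}

lemma IsInvTortoise.pos (hM : 0 < M) (hρ : IsInvTortoise M ρ) (x : ℝ) : 0 < ρ x := by
  linarith [hρ.gt x]

lemma IsInvTortoise.cont (hρ : IsInvTortoise M ρ) : Continuous ρ := hρ.smooth.continuous

lemma IsInvTortoise.inv_pos (hM : 0 < M) (hρ : IsInvTortoise M ρ) (x : ℝ) : 0 < M / ρ x :=
  div_pos hM (hρ.pos hM x)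

lemma IsInvTortoise.inv_lt (hM : 0 < M) (hρ : IsInvTortoise M ρ) (x : ℝ) : M / ρ x < 1 / 2 := by
  rw [div_lt_iff₀ (hρ.pos hM x)]
  linarith [hρ.gt x]

lemma IsInvTortoise.inv_cont (hM : 0 < M) (hρ : IsInvTortoise M ρ) :
    Continuous fun x => M / ρ x :=
  continuous_const.div hρ.cont fun x => (hρ.pos hM x).ne'

lemma IsInvTortoise.inv_top (hρ : IsInvTortoise M ρ) :
    Tendsto (fun x => M / ρ x) atTop (nhds 0) := hρ.top.const_div_atTop M

lemma IsInvTortoise.inv_bot (hM : 0 < M) (hρ : IsInvTortoise M ρ) :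
    Tendsto (fun x => M / ρ x) atBot (nhds (1 / 2)) := by
  have := (tendsto_const_nhds (x := M)).div hρ.bot (by positivity)
  rwa [show M / (2 * M) = 1 / 2 by field_simp] at this

/-- Chain rule for a function of `s = M/r`: `ds/dr_* = -(1 - 2s)s²/M`. -/
lemma IsInvTortoise.deriv_comp (hM : 0 < M) (hρ : IsInvTortoise M ρ) {p p' : ℝ → ℝ}
    (hp : ∀ s, HasDerivAt p (p' s) s) (x : ℝ) :
    HasDerivAt (fun x => p (M / ρ x))
      (p' (M / ρ x) * (-((1 - 2 * (M / ρ x)) * (M / ρ x) ^ 2 / M))) x := by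
  have h0 := (hρ.pos hM x).ne'
  have h1 : HasDerivAt (fun x => M / ρ x) (-((1 - 2 * (M / ρ x)) * (M / ρ x) ^ 2 / M)) x := by
    refine ((hasDerivAt_const x M).div (hρ.deriv x) h0).congr_deriv ?_
    field_simp
    ring
  exact (hp (M / ρ x)).comp x h1

lemma rwPot_pos (hM : 0 < M) {s : ℝ} (h0 : 0 < s) (h1 : s < 1 / 2) : 0 < rwPot M lam s := by
  have : 0 < 1 - 2 * s := by linarith
  unfold rwPot
  positivity

lemma rwPot_le (hM : 0 < M) {s : ℝ} (h0 : 0 < s) (h1 : s < 1 / 2) :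
    rwPot M lam s ≤ (lam ^ 2 + 2) / M ^ 2 := by
  unfold rwPot
  gcongr
  have a1 : s ^ 2 ≤ 1 := pow_le_one₀ h0.le (by linarith)
  have a2 : s ^ 3 ≤ 1 := pow_le_one₀ h0.le (by linarith)
  have a3 : lam ^ 2 * s ^ 2 ≤ lam ^ 2 * 1 := by gcongr
  have a4 : 0 ≤ lam ^ 2 * s ^ 2 + 2 * s ^ 3 := by positivity
  nlinarith

lemma hasDerivAt_rwPot (hM : 0 < M) (hρ : IsInvTortoise M ρ) (x : ℝ) :
    HasDerivAt (fun x => rwPot M lam (M / ρ x)) (rwPot' M lam (M / ρ x)) x := by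
  refine (hρ.deriv_comp hM (p := rwPot M lam)
    (p' := fun s => (2 * lam ^ 2 * s + 6 * s ^ 2 - 6 * lam ^ 2 * s ^ 2 - 16 * s ^ 3) / M ^ 2)
    (fun s => ?_) x).congr_deriv ?_
  · have i := hasDerivAt_id s
    refine ((((i.const_mul 2).const_sub 1).mul (((i.pow 2).const_mul (lam ^ 2)).add
      ((i.pow 3).const_mul 2))).div_const (M ^ 2)).congr_deriv ?_
    simp
    ring
  · generalize M / ρ x = s
    unfold rwPot'
    field_simp
    ring

/-- `-(λ² s + s²)/M` is an antiderivative of the potential. -/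
lemma hasDerivAt_potInt (hM : 0 < M) (hρ : IsInvTortoise M ρ) (x : ℝ) :
    HasDerivAt (fun x => -(lam ^ 2 * (M / ρ x) + (M / ρ x) ^ 2) / M)
      (rwPot M lam (M / ρ x)) x := by
  refine (hρ.deriv_comp hM (p := fun s => -(lam ^ 2 * s + s ^ 2) / M)
    (p' := fun s => -(lam ^ 2 + 2 * s) / M) (fun s => ?_) x).congr_deriv ?_
  · have i := hasDerivAt_id s
    refine (((i.const_mul (lam ^ 2)).add (i.pow 2)).neg.div_const M).congr_deriv ?_
    simp
  · generalize M / ρ x = s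
    unfold rwPot
    field_simp

/-- The virial term `V + x V'/2` is nonpositive near infinity, because there `x` exceeds `r` by at
least `4M`, and it is bounded by a multiple of `1 - 2s` near the horizon; hence the weight
`(1 - 2s)s⁴` controls it everywhere. -/
lemma virial_bound (hM : 0 < M) (hρ : IsInvTortoise M ρ) : ∃ C, 0 < C ∧ ∀ x,
    rwPot M lam (M / ρ x) + x * rwPot' M lam (M / ρ x) / 2
      ≤ C * ((1 - 2 * (M / ρ x)) * (M / ρ x) ^ 4 / (4 * M ^ 3)) := by
  obtain ⟨B, hB1, hB2⟩ : ∃ B, 12 * M ≤ B ∧ 2 * M + Real.exp 2 ≤ B :=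
    ⟨_, le_max_left _ _, le_max_right _ _⟩
  have hB : 0 < B := by linarith
  -- a bound for `|log (r - 2M)|` on `8M/3 ≤ r ≤ B`
  obtain ⟨N, hN1, hN2, hN3⟩ : ∃ N, Real.log B ≤ N ∧ -Real.log (2 * M / 3) ≤ N ∧ 0 ≤ N :=
    ⟨|Real.log B| + |Real.log (2 * M / 3)|,
      by linarith [le_abs_self (Real.log B), abs_nonneg (Real.log (2 * M / 3))],
      by linarith [neg_le_abs (Real.log (2 * M / 3)), abs_nonneg (Real.log B)], by positivity⟩
  let K := 3 * M * lam ^ 2 + 4 * M + 2 * M * N * (lam ^ 2 + 1)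
  have hK : 0 < K := by positivity
  refine ⟨4 * K * B / M, by positivity, fun x => ?_⟩
  set s := M / ρ x with hs
  have s0 : 0 < s := hρ.inv_pos hM x
  have s1 : s < 1 / 2 := hρ.inv_lt hM x
  have hρs : ρ x = M / s := by
    rw [hs]
    field_simp [(hρ.pos hM x).ne']
  set L := Real.log (ρ x - 2 * M) with hL
  have hx : x = M / s + 2 * M * L := by
    conv_lhs => rw [← hρ.rstar_eq x]
    rw [rstar, ← hL, hρs]
  have hgt := hρ.gt x
  set A := lam ^ 2 * (1 - 3 * s) + s * (3 - 8 * s) with hA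
  have id1 : rwPot M lam s + x * rwPot' M lam s / 2
      = (1 - 2 * s) * s ^ 3 / M ^ 3
        * (3 * M * lam ^ 2 - M + 8 * M * s - 2 * M * L * A) := by
    rw [hx, hA]
    unfold rwPot rwPot'
    field_simp
    ring
  have id2 : 4 * K * B / M * ((1 - 2 * s) * s ^ 4 / (4 * M ^ 3))
      = (1 - 2 * s) * s ^ 3 / M ^ 3 * (K * (B * s / M)) := by
    field_simp
  rw [id1, id2]
  have hF : 0 < 1 - 2 * s := by linarith
  refine mul_le_mul_of_nonneg_left ?_ (by positivity)
  have l0 : 0 ≤ lam ^ 2 := sq_nonneg _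
  rcases le_total B (ρ x) with hr | hr
  · refine le_trans ?_ (show 0 ≤ K * (B * s / M) by positivity)
    have s2 : s ≤ 1 / 12 := by
      rw [hs, div_le_iff₀ (hρ.pos hM x)]
      linarith
    have hL2 : 2 ≤ L := (Real.le_log_iff_exp_le (by linarith)).2 (by linarith)
    have hA0 : 0 ≤ A := by
      have h1 : 0 ≤ 1 - 3 * s := by linarith
      have h2 : 0 ≤ 3 - 8 * s := by linarith
      positivity
    have h3 : 2 * A ≤ L * A := mul_le_mul_of_nonneg_right hL2 hA0
    have h4 : 3 * lam ^ 2 - 1 + 8 * s - 4 * A ≤ 0 := by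
      rw [hA]
      nlinarith
    nlinarith
  · have s2 : 1 ≤ B * s / M := by
      rw [hs, le_div_iff₀ hM, ← mul_div_assoc, le_div_iff₀ (hρ.pos hM x)]
      nlinarith
    refine le_trans ?_ (show K ≤ K * (B * s / M) from le_mul_of_one_le_right hK.le s2)
    have hLN : L ≤ N := (Real.log_le_log (by linarith) (by linarith)).trans hN1
    have hA1 : A ≤ lam ^ 2 + 1 := by
      have h1 := mul_nonneg l0 s0.le
      have h2 := sq_nonneg (s - 3 / 16)
      linarith
    have hA2 : -A ≤ lam ^ 2 + 1 := by
      have h1 := mul_nonneg l0 (show 0 ≤ 1 / 2 - s by linarith)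
      have h2 := mul_nonneg s0.le (show 0 ≤ 1 / 2 - s by linarith)
      linarith
    have key : -(L * A) ≤ N * (lam ^ 2 + 1) := by
      have hNA := mul_le_mul_of_nonneg_left hA1 hN3
      have hNA2 := mul_le_mul_of_nonneg_left hA2 hN3
      rcases le_total A 0 with ha | ha
      · have := mul_le_mul_of_nonpos_right hLN ha
        linarith
      · -- `A ≥ 0` forces `s ≤ 3/8`
        have s3 : s ≤ 3 / 8 := by
          by_contra! hc
          have h1 : lam ^ 2 * (1 - 3 * s) ≤ 0 :=
            mul_nonpos_of_nonneg_of_nonpos l0 (by linarith)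
          have h2 : s * (3 - 8 * s) < 0 := mul_neg_of_pos_of_neg s0 (by linarith)
          linarith
        have r3 : 8 * M / 3 ≤ ρ x := by
          rw [hρs, le_div_iff₀ s0]
          have := mul_le_mul_of_nonneg_left s3 hM.le
          linarith
        have hLl : -N ≤ L := by
          have : Real.log (2 * M / 3) ≤ L := Real.log_le_log (by positivity) (by linarith)
          linarith
        have := mul_le_mul_of_nonneg_right hLl ha
        linarith
    have h1 := mul_le_mul_of_nonneg_left key hM.le
    have h2 := mul_le_mul_of_nonneg_left s1.le hM.le
    simp only [K]
    linarith

/-- Decay of the local energy for the Regge–Wheeler equation: the multiplier estimate with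
`m = C(1 - 9s²)`, `s = M/r`, and a large constant `C`. The coefficient of `W²` produced by `m` is
`-C(1 - 2s)s³/M³` times `λ²(1 - 3s)²(1 + 3s) + s(3 - 14s + 18s²)`; completing the square in the
quadratic form leaves at least `C(1 - 2s)s⁴/(4M³)`, which absorbs the virial term. -/
lemma rw_decay (hM : 0 < M) (hρ : IsInvTortoise M ρ) {W Wt Wx Wtt Wtx Wxx : ℝ → ℝ → ℝ} {R : ℝ}
    (h : Wave (fun x => rwPot M lam (M / ρ x)) W Wt Wx Wtt Wtx Wxx) (hR : 0 ≤ R)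
    (hd : DataSupp R W Wt Wx) :
    ∃ C : ℝ, ∀ T S, 0 ≤ S → S ≤ T →
      S * ∫ x in (-(T - S))..(T - S), eden (fun x => rwPot M lam (M / ρ x)) W Wt Wx T x ≤ C := by
  obtain ⟨C, hC, hvir⟩ := virial_bound (lam := lam) hM hρ
  have i := fun s : ℝ => hasDerivAt_id s
  have cs := hρ.inv_cont hM
  have hm := hρ.deriv_comp hM (p := fun s => C * (1 - 9 * s ^ 2)) (p' := fun s => -18 * C * s)
    fun s => (((((i s).pow 2).const_mul 9).const_sub 1).const_mul C).congr_deriv (by simp [-mul_eq_mul_left_iff]; ring)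
  have hm1 := hρ.deriv_comp hM (p := fun s => 18 * C / M * (s ^ 3 - 2 * s ^ 4))
    (p' := fun s => 18 * C / M * (3 * s ^ 2 - 8 * s ^ 3))
    fun s => ((((i s).pow 3).sub (((i s).pow 4).const_mul 2)).const_mul (18 * C / M)).congr_deriv
      (by simp [-mul_eq_mul_left_iff]; ring)
  have hm2 := hρ.deriv_comp hM
    (p := fun s => -18 * C / M ^ 2 * (3 * s ^ 4 - 14 * s ^ 5 + 16 * s ^ 6))
    (p' := fun s => -18 * C / M ^ 2 * (12 * s ^ 3 - 70 * s ^ 4 + 96 * s ^ 5))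
    fun s => (((((i s).pow 4).const_mul 3).sub (((i s).pow 5).const_mul 14)).add
      (((i s).pow 6).const_mul 16) |>.const_mul (-18 * C / M ^ 2)).congr_deriv (by simp [-mul_eq_mul_left_iff]; ring)
  have hg := hρ.deriv_comp hM
    (p := fun s => C / M ^ 2 * (12 * s ^ 4 - 54 * s ^ 5 + 60 * s ^ 6))
    (p' := fun s => C / M ^ 2 * (48 * s ^ 3 - 270 * s ^ 4 + 360 * s ^ 5))
    fun s => (((((i s).pow 4).const_mul 12).sub (((i s).pow 5).const_mul 54)).add
      (((i s).pow 6).const_mul 60) |>.const_mul (C / M ^ 2)).congr_deriv (by simp [-mul_eq_mul_left_iff]; ring)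
  have b0 := hρ.inv_pos hM
  have b1 := hρ.inv_lt hM
  refine morawetz (c := 5 * C) h (fun x => rwPot_pos hM (b0 x) (b1 x)) hR hd
    (by positivity) (hasDerivAt_rwPot hM hρ) hm
    (fun x => (hm1 x).congr_of_eventuallyEq (Eventually.of_forall fun y => ?_))
    (fun x => (hm2 x).congr_of_eventuallyEq (Eventually.of_forall fun y => ?_)) hg
    ?_ (by fun_prop) (by fun_prop) (fun x => ?_) (fun x => ?_) (fun x w p => ?_)
  · beta_reduce
    generalize M / ρ y = s
    field_simp
  · beta_reduce
    generalize M / ρ y = s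
    field_simp
    ring
  · unfold rwPot'
    fun_prop
  · have := b0 x
    have := b1 x
    generalize M / ρ x = s at *
    rw [abs_mul, abs_of_pos hC, mul_comm]
    exact mul_le_mul_of_nonneg_right (abs_le.2 ⟨by nlinarith, by nlinarith⟩) hC.le
  · have s0 := b0 x
    have s1 := b1 x
    generalize M / ρ x = s at *
    have hF : 0 < 1 - 2 * s := by linarith
    have e : (5 * C) ^ 2 * rwPot M lam s - (-18 * C * s * (-((1 - 2 * s) * s ^ 2 / M))) ^ 2
        = C ^ 2 * (1 - 2 * s) * s ^ 2 / M ^ 2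
          * (25 * lam ^ 2 + s * (50 - 324 * ((1 - 2 * s) * s ^ 3))) := by
      unfold rwPot
      field_simp
      ring
    have hs3 : (1 - 2 * s) * s ^ 3 ≤ 1 * (1 / 2) ^ 3 := by
      gcongr
      linarith
    have h2 : 0 ≤ 50 - 324 * ((1 - 2 * s) * s ^ 3) := by linarith
    rw [← sub_nonneg, e]
    positivity
  · have s0 := b0 x
    have s1 := b1 x
    have hv := hvir x
    generalize M / ρ x = s at *
    have hF : 0 < 1 - 2 * s := by linarith
    have hq : 0 ≤ (1 / 2 - s) * (11 / 2 - 33 * s + 50 * s ^ 2) :=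
      mul_nonneg (by linarith) (by nlinarith [sq_nonneg (100 * s - 33)])
    have hw := mul_le_mul_of_nonneg_right hv (sq_nonneg w)
    -- completion of the square in `p`
    have e : 18 * C * (1 - 2 * s) * s ^ 3 / M * (p - s * (12 - 30 * s) / (18 * M) * w) ^ 2
        + C * (1 - 2 * s) * s ^ 3 / M ^ 3 * (lam ^ 2 * (1 - 3 * s) ^ 2 * (1 + 3 * s)
          + s * ((1 / 2 - s) * (11 / 2 - 33 * s + 50 * s ^ 2))) * w ^ 2
        = C * ((1 - 2 * s) * s ^ 4 / (4 * M ^ 3)) * w ^ 2 * (-1)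
          - (-(-18 * C * s * (-((1 - 2 * s) * s ^ 2 / M))) * p ^ 2
          + 2 * (C / M ^ 2 * (12 * s ^ 4 - 54 * s ^ 5 + 60 * s ^ 6)) * w * p
          + ((C * (1 - 9 * s ^ 2)) * rwPot' M lam s / 2
            + -18 * C / M ^ 2 * (12 * s ^ 3 - 70 * s ^ 4 + 96 * s ^ 5)
              * (-((1 - 2 * s) * s ^ 2 / M)) / 4
            + C / M ^ 2 * (48 * s ^ 3 - 270 * s ^ 4 + 360 * s ^ 5)
              * (-((1 - 2 * s) * s ^ 2 / M))) * w ^ 2) := by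
      unfold rwPot'
      field_simp
      ring
    have pos : 0 ≤ 18 * C * (1 - 2 * s) * s ^ 3 / M * (p - s * (12 - 30 * s) / (18 * M) * w) ^ 2
        + C * (1 - 2 * s) * s ^ 3 / M ^ 3 * (lam ^ 2 * (1 - 3 * s) ^ 2 * (1 + 3 * s)
          + s * ((1 / 2 - s) * (11 / 2 - 33 * s + 50 * s ^ 2))) * w ^ 2 := by
      positivity
    rw [e] at pos
    linarith

end

/-! ### Modes on Schwarzschild -/

section
variable {M lam : ℝ} {ρ : ℝ → ℝ} {u : ℝ → ℝ → ℝ}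

lemma hasDerivAt_pdr (hu : IsModeSolution M lam u) (t : ℝ) {r : ℝ} (hr : 2 * M < r) :
    HasDerivAt (u t) (pdr u t r) r ∧ HasDerivAt (pdr u t) (pdrr u t r) r := by
  have h1 : ContDiffOn ℝ ∞ (u t) (Ioi (2 * M)) :=
    hu.1.comp (g := uncurry u) (f := fun r => (t, r)) (by fun_prop) fun r hr => ⟨mem_univ _, hr⟩
  have h2 : ContDiffOn ℝ ∞ (pdr u t) (Ioi (2 * M)) := h1.deriv_of_isOpen isOpen_Ioi (by simp)
  have hn := Ioi_mem_nhds hr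
  exact ⟨((h1.contDiffAt hn).differentiableAt (by simp)).hasDerivAt,
    ((h2.contDiffAt hn).differentiableAt (by simp)).hasDerivAt⟩

/-- `W = r u`, in the tortoise coordinate, solves the Regge–Wheeler equation
`∂ₜ²W = ∂ₓ²W - V W`. -/
lemma mode_wave (hM : 0 < M) (hρ : IsInvTortoise M ρ) (hu : IsModeSolution M lam u)
    {W : ℝ → ℝ → ℝ} (hW : ∀ t x, W t x = ρ x * u t (ρ x)) :
    Wave (fun x => rwPot M lam (M / ρ x)) W (pdt W) (pdr W) (pdt (pdt W)) (pdr (pdt W))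
      (pdr (pdr W)) := by
  have e0 : W = fun t x => ρ x * u t (ρ x) := funext fun t => funext fun x => hW t x
  have sρ := hρ.smooth
  refine wave_of_contDiff ?_ fun t x => ?_
  · have h1 : ContDiff ℝ ∞ fun p : ℝ × ℝ => uncurry u (p.1, ρ p.2) :=
      hu.1.comp_contDiff (f := fun p : ℝ × ℝ => (p.1, ρ p.2)) (by fun_prop)
        fun p => ⟨mem_univ _, hρ.gt p.2⟩
    have h2 : ContDiff ℝ ∞ fun p : ℝ × ℝ => ρ p.2 * uncurry u (p.1, ρ p.2) :=
      (sρ.comp contDiff_snd).mul h1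
    rw [e0]
    exact h2
  · have t1 : ∀ t x, pdt W t x = ρ x * pdt u t (ρ x) := fun t x => by
      simp only [pdt, e0, deriv_const_mul_field]
    have t2 : pdt (pdt W) t x = ρ x * pdtt u t (ρ x) := by
      rw [pdt]
      simp only [t1, deriv_const_mul_field, pdtt]
    have x1 : pdr W t = fun x => (1 - 2 * M / ρ x) * (u t (ρ x) + ρ x * pdr u t (ρ x)) :=
      funext fun x => by
        have d1 := (hasDerivAt_pdr hu t (hρ.gt x)).1.comp x (hρ.deriv x)
        have d2 := ((hρ.deriv x).mul d1).deriv
        rw [pdr, e0]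
        refine d2.trans ?_
        simp only [comp_apply]
        ring
    have hp := (hρ.pos hM x).ne'
    have hp2 := (sub_pos.2 (hρ.gt x)).ne'
    have x2 : pdr (pdr W) t x = 2 * M / ρ x ^ 2 * (1 - 2 * M / ρ x)
          * (u t (ρ x) + ρ x * pdr u t (ρ x))
        + (1 - 2 * M / ρ x) ^ 2 * (2 * pdr u t (ρ x) + ρ x * pdrr u t (ρ x)) := by
      obtain ⟨d1, d2⟩ := hasDerivAt_pdr hu t (hρ.gt x)
      have c1 := d1.comp x (hρ.deriv x)
      have c2 := d2.comp x (hρ.deriv x)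
      have c3 := ((hasDerivAt_const x (2 * M)).div (hρ.deriv x) hp).const_sub 1
      have c4 := (c3.mul (c1.add ((hρ.deriv x).mul c2))).deriv
      rw [pdr, x1]
      refine c4.trans ?_
      simp only [comp_apply, Pi.add_apply, Pi.mul_apply, Pi.div_apply]
      field_simp
      ring
    have pde := hu.2 t (ρ x) (hρ.gt x)
    rw [t2, x2, hW]
    unfold rwPot
    generalize pdrr u t (ρ x) = a at *
    generalize pdr u t (ρ x) = b at *
    generalize u t (ρ x) = c at *
    have key : pdtt u t (ρ x) = (ρ x - 2 * M) / ρ x * ((ρ x - 2 * M) / ρ x * a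
        + 2 * (ρ x - M) / ρ x ^ 2 * b - lam ^ 2 / ρ x ^ 2 * c) := by
      have : pdtt u t (ρ x) = (ρ x - 2 * M) / ρ x
          * (ρ x / (ρ x - 2 * M) * pdtt u t (ρ x)) := by field_simp
      rw [this]
      congr 1
      linarith
    rw [key]
    field_simp
    ring

/-- The mode energy is the energy of `W = r u` in the tortoise coordinate: the two densities differ
by the `x`-derivative of `(r - 2M) φ²`. -/
lemma energy_eq (hM : 0 < M) (hρ : IsInvTortoise M ρ) (hu : IsModeSolution M lam u)
    {W : ℝ → ℝ → ℝ} (hW : ∀ t x, W t x = ρ x * u t (ρ x)) {R : ℝ}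
    (hd : DataSupp R W (pdt W) (pdr W)) :
    ∫ x, eden (fun x => rwPot M lam (M / ρ x)) W (pdt W) (pdr W) 0 x
      = modeEnergy M lam (u 0) (pdt u 0) := by
  have h := mode_wave hM hρ hu hW
  have e0 : W = fun t x => ρ x * u t (ρ x) := funext fun t => funext fun x => hW t x
  have cρ := hρ.cont
  have hp : ∀ x, ρ x ≠ 0 := fun x => (hρ.pos hM x).ne'
  have c0 : Continuous (W 0) := by have := h.g0.cont; fun_prop
  have c2 : Continuous (pdr W 0) := by have := h.g0.cont_x; fun_prop
  have cV : Continuous fun x => rwPot M lam (M / ρ x) :=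
    continuous_iff_continuousAt.2 fun x => (hasDerivAt_rwPot hM hρ x).continuousAt
  let k : ℝ → ℝ := fun x => (1 / ρ x - 2 * M / ρ x ^ 2) * W 0 x ^ 2
  let k' : ℝ → ℝ := fun x => (-1 / ρ x ^ 2 + 4 * M / ρ x ^ 3) * (1 - 2 * M / ρ x) * W 0 x ^ 2
    + (1 / ρ x - 2 * M / ρ x ^ 2) * (2 * W 0 x * pdr W 0 x)
  have hk : ∀ x, HasDerivAt k (k' x) x := fun x => by
    have a1 := (hasDerivAt_const x 1).div (hρ.deriv x) (hp x)
    have a2 := (hasDerivAt_const x (2 * M)).div ((hρ.deriv x).pow 2) (pow_ne_zero 2 (hp x))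
    refine ((a1.sub a2).mul ((h.g0.dx 0 x).pow 2)).congr_deriv ?_
    have := hp x
    simp only [k', Pi.sub_apply, Pi.div_apply, Pi.pow_apply]
    field_simp
    ring
  have ck : Continuous k := continuous_iff_continuousAt.2 fun x => (hk x).continuousAt
  have ck' : Continuous k' := by
    have n2 : ∀ x, ρ x ^ 2 ≠ 0 := fun x => pow_ne_zero 2 (hp x)
    have n3 : ∀ x, ρ x ^ 3 ≠ 0 := fun x => pow_ne_zero 3 (hp x)
    simp only [k']
    fun_prop (disch := assumption)
  have ik' : Integrable k' :=
    integrable_of_zero (r := R) ck' fun x hx => by simp [k', (hd x hx).1]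
  have ik : ∫ x, k' x = 0 := integral_eq_zero_of_hasDerivAt_of_integrable hk ik'
    (integrable_of_zero (r := R) ck fun x hx => by simp [k, (hd x hx).1])
  have ie := eden_integrable h cV (fun x => rwPot_pos hM (hρ.inv_pos hM x) (hρ.inv_lt hM x)) hd
    (le_refl 0)
  have img : ρ '' univ = Ioi (2 * M) := by
    ext r
    constructor
    · rintro ⟨x, -, rfl⟩
      exact hρ.gt x
    · exact fun hr => ⟨rstar M r, mem_univ _, hρ.eq_self r hr⟩
  have inj : InjOn ρ univ := fun x _ y _ hxy => by
    rw [← hρ.rstar_eq x, hxy, hρ.rstar_eq y]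
  rw [modeEnergy, ← img, integral_image_eq_integral_abs_deriv_smul MeasurableSet.univ
    (fun x _ => (hρ.deriv x).hasDerivWithinAt) inj, setIntegral_univ]
  have pw : ∀ x, |1 - 2 * M / ρ x| • ((ρ x / (ρ x - 2 * M) * pdt u 0 (ρ x) ^ 2
      + (ρ x - 2 * M) / ρ x * deriv (u 0) (ρ x) ^ 2 + lam ^ 2 / ρ x ^ 2 * u 0 (ρ x) ^ 2) * ρ x ^ 2)
      = 2 * eden (fun x => rwPot M lam (M / ρ x)) W (pdt W) (pdr W) 0 x - k' x := fun x => by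
    have hr := hp x
    have hr2 := (sub_pos.2 (hρ.gt x)).ne'
    have hF : 0 ≤ 1 - 2 * M / ρ x := by
      rw [sub_nonneg, div_le_one (hρ.pos hM x)]
      exact (hρ.gt x).le
    have t1 : pdt W 0 x = ρ x * pdt u 0 (ρ x) := by
      simp only [pdt, e0, deriv_const_mul_field]
    have x1 : pdr W 0 x = (1 - 2 * M / ρ x) * (u 0 (ρ x) + ρ x * deriv (u 0) (ρ x)) := by
      have d1 := (hasDerivAt_pdr hu 0 (hρ.gt x)).1.comp x (hρ.deriv x)
      have d2 := ((hρ.deriv x).mul d1).deriv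
      rw [pdr, e0]
      refine d2.trans ?_
      simp only [comp_apply, pdr]
      ring
    simp only [k', eden, smul_eq_mul, t1, x1, hW, abs_of_nonneg hF, rwPot]
    field_simp
    ring
  rw [integral_congr_ae (Eventually.of_forall pw), integral_sub (ie.const_mul 2) ik', ik,
    integral_const_mul]
  ring

/-- Initial data supported in `[r₁, r₂]` give compactly supported data for `W = r u`. -/
lemma mode_dataSupp (hM : 0 < M) (hρ : IsInvTortoise M ρ) {W : ℝ → ℝ → ℝ}
    (hW : ∀ t x, W t x = ρ x * u t (ρ x))
    (hsupp : ∃ r₁ r₂ : ℝ, 2 * M < r₁ ∧ r₁ ≤ r₂ ∧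
      ∀ r : ℝ, 2 * M < r → r ∉ Icc r₁ r₂ → u 0 r = 0 ∧ pdt u 0 r = 0) :
    ∃ R, 0 ≤ R ∧ DataSupp R W (pdt W) (pdr W) := by
  obtain ⟨r₁, r₂, h1, h12, hs⟩ := hsupp
  have e0 : W = fun t x => ρ x * u t (ρ x) := funext fun t => funext fun x => hW t x
  have mono : ∀ {a b : ℝ}, 2 * M < a → a ≤ b → rstar M a ≤ rstar M b := fun {a b} ha hab => by
    have := mul_le_mul_of_nonneg_left
      (Real.log_le_log (sub_pos.2 ha) (sub_le_sub_right hab (2 * M))) (show 0 ≤ 2 * M by positivity)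
    unfold rstar
    linarith
  refine ⟨|rstar M r₁| + |rstar M r₂|, by positivity, ?_⟩
  have z : ∀ x, |rstar M r₁| + |rstar M r₂| < |x| → u 0 (ρ x) = 0 ∧ pdt u 0 (ρ x) = 0 := by
    refine fun x hx => hs _ (hρ.gt x) fun hmem => ?_
    have i1 := mono h1 hmem.1
    have i2 := mono (hρ.gt x) hmem.2
    rw [hρ.rstar_eq] at i1 i2
    have : |x| ≤ |rstar M r₁| + |rstar M r₂| := abs_le.2
      ⟨by linarith [neg_abs_le (rstar M r₁), abs_nonneg (rstar M r₂)],
        by linarith [le_abs_self (rstar M r₂), abs_nonneg (rstar M r₁)]⟩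
    linarith
  refine fun x hx => ⟨by rw [hW, (z x hx).1, mul_zero], ?_, ?_⟩
  · have : pdt W 0 x = ρ x * pdt u 0 (ρ x) := by simp only [pdt, e0, deriv_const_mul_field]
    rw [this, (z x hx).2, mul_zero]
  · have : W 0 =ᶠ[nhds x] fun _ => 0 := by
      filter_upwards [(isOpen_lt continuous_const continuous_abs).mem_nhds hx] with y hy
      rw [hW, (z y hy).1, mul_zero]
    exact this.deriv_eq.trans (deriv_const x 0)

end

/-- Unitarity of the radiation field (Theorem 1.2, single mode): for smooth compactly
supported data, both components of the forward radiation field exist, are square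
integrable, and `4M²‖f‖² + ‖g‖² = E(φ,ψ)`. -/
theorem radiation_field_unitary
    (M lam : ℝ) (hM : 0 < M) (hlam : 0 ≤ lam)
    (u : ℝ → ℝ → ℝ) (hu : IsModeSolution M lam u)
    (φ ψ : ℝ → ℝ) (hφ : ∀ r : ℝ, φ r = u 0 r) (hψ : ∀ r : ℝ, ψ r = pdt u 0 r)
    (hsupp : ∃ r₁ r₂ : ℝ, 2*M < r₁ ∧ r₁ ≤ r₂ ∧
      ∀ r : ℝ, 2*M < r → r ∉ Set.Icc r₁ r₂ → φ r = 0 ∧ ψ r = 0) :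
    ∃ f g : ℝ → ℝ,
      IsFwdRadHorizon M u f ∧ IsFwdRadInfty M u g ∧
      MeasureTheory.Integrable (fun τ : ℝ => f τ ^ 2) ∧
      MeasureTheory.Integrable (fun τ : ℝ => g τ ^ 2) ∧
      4*M^2 * (∫ τ : ℝ, f τ ^ 2) + (∫ τ : ℝ, g τ ^ 2) = modeEnergy M lam φ ψ := by
  obtain rfl : φ = u 0 := funext hφ
  obtain rfl : ψ = pdt u 0 := funext hψ
  obtain ⟨ρ, hρ⟩ := exists_invTortoise hM
  obtain ⟨W, hW⟩ : ∃ W : ℝ → ℝ → ℝ, ∀ t x, W t x = ρ x * u t (ρ x) :=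
    ⟨fun t x => ρ x * u t (ρ x), fun _ _ => rfl⟩
  have h := mode_wave hM hρ hu hW
  obtain ⟨R, hR, hd⟩ := mode_dataSupp hM hρ hW hsupp
  have s0 := hρ.inv_pos hM
  have s1 := hρ.inv_lt hM
  have cV : Continuous (rwPot M lam) := by unfold rwPot; fun_prop
  have cΦ : Continuous fun s : ℝ => -(lam ^ 2 * s + s ^ 2) / M := by fun_prop
  have lim : ∀ {p : ℝ → ℝ} {l : Filter ℝ} {a b : ℝ}, Continuous p →
      Tendsto (fun x => M / ρ x) l (nhds a) → p a = b →
      Tendsto (fun x => p (M / ρ x)) l (nhds b) := by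
    rintro p l a b cp hl rfl
    exact (cp.tendsto a).comp hl
  obtain ⟨f, g, hf, hg, If, Ig, hE⟩ := radiation (Φ0 := (lam ^ 2 * (1 / 2) + (1 / 2) ^ 2) / M)
    h (cV.comp (hρ.inv_cont hM)) (fun x => rwPot_pos hM (s0 x) (s1 x)) hR hd
    (hasDerivAt_potInt hM hρ)
    (fun x => by
      have := (s0 x).le
      rw [neg_div, neg_nonpos]
      positivity)
    (fun x => by
      have := (s0 x).le
      have := (s1 x).le
      rw [neg_div, neg_le_neg_iff]
      gcongr)
    (lim cΦ hρ.inv_top (by simp)) (lim cΦ (hρ.inv_bot hM) (neg_div _ _))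
    (fun x => rwPot_le hM (s0 x) (s1 x))
    (lim cV hρ.inv_top (by simp [rwPot])) (lim cV (hρ.inv_bot hM) (by simp [rwPot]))
    (rw_decay hM hρ h hR hd)
  have t1 : ∀ t r, 2 * M < r → pdt W t (rstar M r) = r * pdt u t r := fun t r hr => by
    have e0 : W = fun t x => ρ x * u t (ρ x) := funext fun t => funext fun x => hW t x
    simp only [pdt, e0, deriv_const_mul_field, hρ.eq_self r hr]
  refine ⟨fun τ => f τ / (2 * M), g, fun τ => ?_, fun τ => ?_, ?_, Ig, ?_⟩
  · -- along `t + r_* = τ`, the limit `r → 2M` is the limit `t → ∞`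
    have l1 := (hf τ).comp (tendsto_atTop_add_const_left _ τ
      (tendsto_neg_atBot_atTop.comp (rstar_tendsto_atBot hM)))
    have l2 : Tendsto (fun r : ℝ => r) (nhdsWithin (2 * M) (Ioi (2 * M))) (nhds (2 * M)) :=
      tendsto_id.mono_left nhdsWithin_le_nhds
    refine (l1.div l2 (by positivity)).congr' ?_
    filter_upwards [self_mem_nhdsWithin] with r hr
    have hr' : 2 * M < r := hr
    have : r ≠ 0 := by linarith
    simp only [comp_apply, Pi.div_apply, ← sub_eq_add_neg, sub_sub_cancel]
    rw [t1 _ r hr']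
    field_simp
  · have l1 := (hg τ).comp (tendsto_atTop_add_const_left _ τ (rstar_tendsto_atTop hM))
    refine l1.congr' ?_
    filter_upwards [eventually_gt_atTop (2 * M)] with r hr
    simp only [comp_apply, add_sub_cancel_left]
    exact t1 _ r hr
  · simpa only [div_pow] using If.div_const _
  · rw [← energy_eq hM hρ hu hW hd, ← hE]
    simp only [div_pow, integral_div]
    field_simp
    ring
end

section
/- Let u be a λ-mode solution whose initial data (φ,ψ) are smooth and compactly supported in (2M,∞), and let τ₀ ∈ ℝ. Suppose f is a forward radiation field of u at the event horizon with f(τ) = 0 for all τ ≤ τ₀, and f⁻ is a backward radiation field of u at the event horizon with f⁻(τ) = 0 for all τ ≥ −τ₀. Then φ(r) = 0 and ψ(r) = 0 for every r ∈ (2M,∞) with r_*(r) < τ₀. (Support theorem at the event horizon, Theorem 5.1, for a single spherical-harmonic mode.) -/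
open MeasureTheory Filter Set Function
open scoped ContDiff

/-!
In the tortoise coordinate `x`, with null coordinates `p = t + x` and `q = x - t`, the rescaled mode
`v = r u` satisfies `∂ₚ∂_q v = W (p + q) v`, where `W` is a quarter of the Regge–Wheeler potential
and decays like `exp (x / 2M)` towards the horizon. The future horizon is `q = -∞`, the past horizon
is `p = -∞`, and `∂ₜ v = ∂ₚ v - ∂_q v`, so the hypotheses on the radiation fields say that this
difference tends to zero on both horizons for `p ≤ τ₀`, respectively `q ≤ τ₀`.

In one space dimension the region between the two horizons and the bifurcation sphere can be
treated as a characteristic (Goursat) problem, evolving in `x` instead of `t`: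

* `NullSolution.cauchy`: by finite speed of propagation `v = 0` for `p, q < a`, where `a` bounds the
  support of the data from below;
* `NullSolution.goursat`: if `v` vanishes on the null line `p = A` for `q ≤ Q₀` and the radiation
  field at `q = -∞` vanishes for `p ≤ P`, then `v` vanishes for `A ≤ p ≤ P`, `q ≤ Q₀`.

Applying the second fact with the roles of `p` and `q` exchanged gives `v = 0` on all of `p = A`,
`q < τ₀` for some `A < a`; applying it once more gives `v = 0` for `p, q < τ₀`
(`NullSolution.eq_zero`), a neighbourhood of the points `t = 0`, `x < τ₀`.

Both facts rest on weighted sup-norm estimates, in which an exponential weight makes each bound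
on `v` improve by a factor two after two integrations (`le_of_bound_improves`).
-/

/-! ### Comparison and absorption -/

/-- Functions whose derivative is dominated by that of `B` vary by no more than `B` does. -/
lemma abs_sub_le_of_abs_deriv_le {g g' B B' : ℝ → ℝ} {a b : ℝ} (hab : a ≤ b)
    (hg : ∀ x, HasDerivAt g (g' x) x) (hB : ∀ x, HasDerivAt B (B' x) x)
    (h : ∀ x ∈ Icc a b, |g' x| ≤ B' x) : |g b - g a| ≤ B b - B a := by
  have h1 : MonotoneOn (fun x => B x - g x) (Icc a b) := by
    refine monotoneOn_of_hasDerivWithinAt_nonneg (f' := fun x => B' x - g' x) (convex_Icc a b)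
      (fun x _ => ((hB x).sub (hg x)).continuousAt.continuousWithinAt)
      (fun x _ => ((hB x).sub (hg x)).hasDerivWithinAt) (fun x hx => ?_)
    have := h x (interior_subset hx)
    linarith [le_abs_self (g' x)]
  have h2 : MonotoneOn (fun x => B x + g x) (Icc a b) := by
    refine monotoneOn_of_hasDerivWithinAt_nonneg (f' := fun x => B' x + g' x) (convex_Icc a b)
      (fun x _ => ((hB x).add (hg x)).continuousAt.continuousWithinAt)
      (fun x _ => ((hB x).add (hg x)).hasDerivWithinAt) (fun x hx => ?_)
    have := h x (interior_subset hx)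
    linarith [neg_abs_le (g' x)]
  have e1 := h1 (left_mem_Icc.2 hab) (right_mem_Icc.2 hab) hab
  have e2 := h2 (left_mem_Icc.2 hab) (right_mem_Icc.2 hab) hab
  simp only at e1 e2
  rw [abs_le]
  constructor <;> linarith

/-- Absorption: if every bound `m` of a bounded function improves to `D + m / 2`, then `2 * D` is
a bound. -/
lemma le_of_bound_improves {α : Type*} {S : Set α} {g : α → ℝ} {C D : ℝ} (hC : 0 ≤ C)
    (hD : 0 ≤ D) (h0 : ∀ x ∈ S, g x ≤ C)
    (h : ∀ m, 0 ≤ m → (∀ x ∈ S, g x ≤ m) → ∀ x ∈ S, g x ≤ D + m / 2) :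
    ∀ x ∈ S, g x ≤ 2 * D := by
  have key : ∀ n : ℕ, ∀ x ∈ S, g x ≤ 2 * D + C * (1 / 2) ^ n := by
    intro n
    induction n with
    | zero => intro x hx; have := h0 x hx; simp; linarith
    | succ k ih =>
      intro x hx
      have := h _ (by positivity) ih x hx
      rw [pow_succ]
      linarith
  intro x hx
  have lim : Tendsto (fun n : ℕ => 2 * D + C * (1 / 2 : ℝ) ^ n) atTop (nhds (2 * D + C * 0)) :=
    ((tendsto_pow_atTop_nhds_zero_of_lt_one (by norm_num) (by norm_num)).const_mul C).const_add _
  have := ge_of_tendsto' lim (fun n => key n x hx)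
  simpa using this

/-! ### Uniqueness in null coordinates -/

/-- `v` solves `∂ₚ∂_q v = W (p + q) v` on the plane; `v₁ = ∂ₚ v` and `v₂ = ∂_q v`. The mixed
derivative is recorded in both orders, so that the notion is symmetric in `p` and `q`. -/
structure NullSolution (W : ℝ → ℝ) (v v₁ v₂ : ℝ → ℝ → ℝ) : Prop where
  cont : Continuous (uncurry v)
  d₁ : ∀ p q, HasDerivAt (fun s => v s q) (v₁ p q) p
  d₂ : ∀ p q, HasDerivAt (fun s => v p s) (v₂ p q) q
  d₁₂ : ∀ p q, HasDerivAt (fun s => v₁ p s) (W (p + q) * v p q) q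
  d₂₁ : ∀ p q, HasDerivAt (fun s => v₂ s q) (W (p + q) * v p q) p

namespace NullSolution

variable {W : ℝ → ℝ} {v v₁ v₂ : ℝ → ℝ → ℝ} {K c : ℝ}

lemma swap (hv : NullSolution W v v₁ v₂) :
    NullSolution W (fun p q => v q p) (fun p q => v₂ q p) (fun p q => v₁ q p) where
  cont := hv.cont.comp continuous_swap
  d₁ p q := hv.d₂ q p
  d₂ p q := hv.d₁ q p
  d₁₂ p q := by simpa only [add_comm] using hv.d₂₁ q p
  d₂₁ p q := by simpa only [add_comm] using hv.d₁₂ q p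

lemma hasDerivAt_weight (C : ℝ) {L : ℝ} (hL : L ≠ 0) (x : ℝ) :
    HasDerivAt (fun s => C / L * Real.exp (L * s)) (C * Real.exp (L * x)) x := by
  have h := (((hasDerivAt_id x).const_mul L).exp).const_mul (C / L)
  refine h.congr_deriv ?_
  simp only [id]
  field_simp

lemma abs_mul_exp_neg_le_iff {y m E : ℝ} : |y| * Real.exp (-E) ≤ m ↔ |y| ≤ m * Real.exp E := by
  rw [Real.exp_neg, ← div_eq_mul_inv, div_le_iff₀ (Real.exp_pos _)]

/-- Finite speed of propagation: vanishing Cauchy data on `p = q < a` force `v = 0` on the side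
`p ≤ q` of the domain of dependence. In the weight `exp (L (q - p))` every bound on `v` gets halved
when integrated twice. -/
lemma cauchy (hv : NullSolution W v v₁ v₂) (hc : 0 < c) (hK : 0 ≤ K)
    (hW : ∀ s, |W s| ≤ K * Real.exp (c * s)) {a : ℝ}
    (h0 : ∀ p < a, v p p = 0) (h1 : ∀ p < a, v₁ p p = 0) {p q : ℝ} (hpq : p ≤ q) (hq : q < a) :
    v p q = 0 := by
  set B := K * Real.exp (c * (2 * q)) with hB
  have hB0 : 0 ≤ B := by positivity
  set L := 2 * B + 1 with hL
  have hL0 : 0 < L := by linarith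
  set S : Set (ℝ × ℝ) := {z | p ≤ z.1 ∧ z.1 ≤ z.2 ∧ z.2 ≤ q}
  have hWB : ∀ z ∈ S, |W (z.1 + z.2)| ≤ B := by
    rintro ⟨x, y⟩ ⟨_, h2, h3⟩
    refine (hW _).trans ?_
    simp only at h2 h3
    rw [hB]
    gcongr
    dsimp only
    linarith
  have hcont : Continuous fun z : ℝ × ℝ => |v z.1 z.2| * Real.exp (-(L * (z.2 - z.1))) := by
    have : Continuous fun z : ℝ × ℝ => v z.1 z.2 := hv.cont
    fun_prop
  obtain ⟨C, hC⟩ := (isCompact_Icc (a := (p, p)) (b := (q, q))).bddAbove_image hcont.continuousOn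
  have hSC : ∀ z ∈ S, |v z.1 z.2| * Real.exp (-(L * (z.2 - z.1))) ≤ max C 0 := by
    rintro z ⟨h1, h2, h3⟩
    exact (hC (mem_image_of_mem _ ⟨⟨h1, h1.trans h2⟩, ⟨h2.trans h3, h3⟩⟩)).trans (le_max_left _ _)
  have main := le_of_bound_improves (le_max_right _ _) le_rfl hSC (by
    intro m hm hbd
    have hbd' : ∀ z ∈ S, |v z.1 z.2| ≤ m * Real.exp (L * (z.2 - z.1)) :=
      fun z hz => abs_mul_exp_neg_le_iff.1 (hbd z hz)
    have hv1 : ∀ z ∈ S, |v₁ z.1 z.2| ≤ B * m / L * Real.exp (L * (z.2 - z.1)) := by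
      rintro ⟨x, y⟩ ⟨h2, h3, h4⟩
      simp only at h2 h3 h4 ⊢
      have := abs_sub_le_of_abs_deriv_le h3 (hv.d₁₂ x)
        (hasDerivAt_weight (B * m * Real.exp (-(L * x))) hL0.ne') (by
          intro s hs
          have hz : (x, s) ∈ S := ⟨h2, hs.1, hs.2.trans h4⟩
          rw [abs_mul]
          calc _ ≤ B * (m * Real.exp (L * (s - x))) :=
                mul_le_mul (hWB _ hz) (hbd' _ hz) (abs_nonneg _) hB0
            _ = _ := by
                rw [show L * (s - x) = -(L * x) + L * s by ring, Real.exp_add]; ring)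
      rw [h1 x (by linarith), sub_zero] at this
      refine this.trans ((sub_le_self _ (by positivity)).trans (le_of_eq ?_))
      rw [show L * (y - x) = -(L * x) + L * y by ring, Real.exp_add]; ring
    rintro ⟨x, y⟩ ⟨h2, h3, h4⟩
    simp only at h2 h3 h4 ⊢
    rw [abs_mul_exp_neg_le_iff]
    have := abs_sub_le_of_abs_deriv_le h3 (fun s => hv.d₁ s y)
        (hasDerivAt_weight (L := -L) (B * m / L * Real.exp (L * y)) (by linarith)) (by
          intro s hs
          refine (hv1 (s, y) ⟨h2.trans hs.1, hs.2, h4⟩).trans (le_of_eq ?_)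
          rw [show L * (y - s) = L * y + -L * s by ring, Real.exp_add]; ring)
    rw [h0 y (by linarith), zero_sub, abs_neg] at this
    refine this.trans ?_
    have e1 : B * m / L * Real.exp (L * y) / -L * Real.exp (-L * y)
        - B * m / L * Real.exp (L * y) / -L * Real.exp (-L * x)
        = B * m / L / L * Real.exp (L * (y - x)) - B * m / L / L := by
      rw [show L * (y - x) = L * y + -L * x by ring, Real.exp_add]
      have : Real.exp (L * y) * Real.exp (-L * y) = 1 := by
        rw [← Real.exp_add]; simp
      rw [div_neg]
      linear_combination (-(B * m / L / L)) * this
    have e2 : B * m / L / L ≤ m / 2 := by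
      rw [div_div, div_le_div_iff₀ (by positivity) (by norm_num)]
      nlinarith [mul_nonneg hm hB0, mul_nonneg hm (mul_nonneg hB0 hB0)]
    rw [e1, zero_add]
    have e3 : 0 ≤ B * m / L / L := by positivity
    nlinarith [Real.exp_pos (L * (y - x))])
  have := main (p, q) ⟨le_rfl, hpq, le_rfl⟩
  rw [abs_mul_exp_neg_le_iff] at this
  simpa using this

/-- Characteristic uniqueness with one null line sent to `q = -∞`: if `v` and `∂_q v` vanish on
`p = A` and `∂ₚ v - ∂_q v → 0` as `q → -∞`, then `v` vanishes to the right of `p = A`. The weight is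
`exp (L p)`; integrability in `q` comes from the exponential decay of `W`. -/
lemma goursat (hv : NullSolution W v v₁ v₂) (hc : 0 < c) (hK : 0 ≤ K)
    (hW : ∀ s, |W s| ≤ K * Real.exp (c * s)) {A P Q₀ : ℝ}
    (h0 : ∀ q ≤ Q₀, v A q = 0) (h2 : ∀ q ≤ Q₀, v₂ A q = 0)
    (hlim : ∀ p ≤ P, Tendsto (fun q => v₁ p q - v₂ p q) atBot (nhds 0))
    {p q : ℝ} (hAp : A ≤ p) (hpP : p ≤ P) (hq : q ≤ Q₀) : v p q = 0 := by
  set B := K * Real.exp (c * P) with hB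
  have hB0 : 0 ≤ B := by positivity
  set L := 2 * (B / c * Real.exp (c * Q₀)) + 1 with hL
  have hL1 : 0 ≤ B / c * Real.exp (c * Q₀) := by positivity
  have hL0 : 0 < L := by linarith
  have hhalf : ∀ m, 0 ≤ m → B * m / L / c * Real.exp (c * Q₀) ≤ m / 2 := by
    intro m hm
    have : B * m / L / c * Real.exp (c * Q₀) = m * (B / c * Real.exp (c * Q₀)) / L := by
      field_simp
    rw [this, div_le_div_iff₀ hL0 (by norm_num)]
    nlinarith
  have hWB : ∀ x y, x ≤ P → |W (x + y)| ≤ B * Real.exp (c * y) := by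
    intro x y hx
    refine (hW _).trans ?_
    rw [hB, mul_assoc, ← Real.exp_add]
    gcongr
    nlinarith
  -- On a single line `q = y`, a weighted bound for `v` controls `∂_q v`.
  have hv2 : ∀ m, 0 ≤ m → ∀ y ≤ Q₀,
      (∀ x ∈ Icc A P, |v x y| ≤ m * Real.exp (L * x)) → ∀ x ∈ Icc A P,
      |v₂ x y| ≤ B * m / L * Real.exp (L * x) * Real.exp (c * y) := by
    intro m hm y hy hbd x hx
    have := abs_sub_le_of_abs_deriv_le hx.1 (fun s => hv.d₂₁ s y)
      (hasDerivAt_weight (B * m * Real.exp (c * y)) hL0.ne') (by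
        intro s hs
        have hsP := hs.2.trans hx.2
        rw [abs_mul]
        calc _ ≤ (B * Real.exp (c * y)) * (m * Real.exp (L * s)) :=
              mul_le_mul (hWB _ _ hsP) (hbd s ⟨hs.1, hsP⟩) (abs_nonneg _) (by positivity)
          _ = _ := by ring)
    rw [h2 y hy, sub_zero] at this
    refine this.trans ((sub_le_self _ (by positivity)).trans (le_of_eq ?_))
    ring
  -- `v` is bounded up to `q = -∞`, by integrating `∂_q v` from the line `q = Q₀`.
  obtain ⟨D, hD0, hD⟩ : ∃ D, 0 ≤ D ∧ ∀ x ∈ Icc A P, ∀ y ≤ Q₀,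
      |v x y| * Real.exp (-(L * x)) ≤ D := by
    have hcont : Continuous fun z : ℝ × ℝ => |v z.1 z.2| * Real.exp (-(L * z.1)) := by
      have : Continuous fun z : ℝ × ℝ => v z.1 z.2 := hv.cont
      fun_prop
    obtain ⟨D, hD⟩ := (isCompact_Icc (a := (A, Q₀)) (b := (P, Q₀))).bddAbove_image
      hcont.continuousOn
    have hD' : ∀ x ∈ Icc A P, |v x Q₀| * Real.exp (-(L * x)) ≤ max D 0 := fun x hx =>
      (hD (mem_image_of_mem _ (show (x, Q₀) ∈ Icc (A, Q₀) (P, Q₀) from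
        ⟨⟨hx.1, le_rfl⟩, ⟨hx.2, le_rfl⟩⟩))).trans (le_max_left _ _)
    refine ⟨2 * max D 0, by positivity, fun x hx y hy => ?_⟩
    obtain ⟨C, hC⟩ := (isCompact_Icc (a := (A, y)) (b := (P, Q₀))).bddAbove_image
      hcont.continuousOn
    have := le_of_bound_improves (S := Icc (A, y) (P, Q₀)) (D := max D 0)
      (g := fun z : ℝ × ℝ => |v z.1 z.2| * Real.exp (-(L * z.1)))
      (le_max_right C 0) (le_max_right _ _)
      (fun z hz => (hC (mem_image_of_mem _ hz)).trans (le_max_left _ _)) (by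
        intro m hm hbd
        rintro ⟨x', y'⟩ ⟨⟨hx1, hy1⟩, ⟨hx2, hy2⟩⟩
        simp only at hx1 hx2 hy1 hy2 ⊢
        rw [abs_mul_exp_neg_le_iff]
        have := abs_sub_le_of_abs_deriv_le hy2 (hv.d₂ x')
          (hasDerivAt_weight (B * m / L * Real.exp (L * x')) hc.ne') (by
            intro s hs
            refine hv2 m hm s hs.2 (fun w hw => ?_) x' ⟨hx1, hx2⟩
            exact abs_mul_exp_neg_le_iff.1
              (hbd (w, s) ⟨⟨hw.1, hy1.trans hs.1⟩, ⟨hw.2, hs.2⟩⟩))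
        have h5 := abs_mul_exp_neg_le_iff.1 (hD' x' ⟨hx1, hx2⟩)
        have h6 : |v x' y'| ≤ |v x' Q₀| + |v x' Q₀ - v x' y'| := by
          have := abs_sub_abs_le_abs_sub (v x' y') (v x' Q₀)
          rw [abs_sub_comm] at this
          linarith
        have h7 : 0 ≤ B * m / L * Real.exp (L * x') / c * Real.exp (c * y') := by positivity
        have h8 : B * m / L * Real.exp (L * x') / c * Real.exp (c * Q₀)
            ≤ m / 2 * Real.exp (L * x') := by
          have := mul_le_mul_of_nonneg_right (hhalf m hm) (Real.exp_pos (L * x')).le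
          refine (le_of_eq ?_).trans this
          ring
        rw [add_mul]
        linarith)
    exact this (x, y) ⟨⟨hx.1, le_rfl⟩, ⟨hx.2, hy⟩⟩
  -- With the boundary condition at `q = -∞` the bound improves to zero.
  have main := le_of_bound_improves (S := Icc A P ×ˢ Iic Q₀) (D := 0)
      (g := fun z : ℝ × ℝ => |v z.1 z.2| * Real.exp (-(L * z.1))) hD0 le_rfl
      (fun z hz => hD z.1 hz.1 z.2 hz.2) (by
    intro m hm hbd
    have hbd' : ∀ x ∈ Icc A P, ∀ y ≤ Q₀, |v x y| ≤ m * Real.exp (L * x) := fun x hx y hy =>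
      abs_mul_exp_neg_le_iff.1 (hbd (x, y) ⟨hx, hy⟩)
    have hexp0 : Tendsto (fun y => Real.exp (c * y)) atBot (nhds 0) :=
      Real.tendsto_exp_atBot.comp (tendsto_id.const_mul_atBot hc)
    have hv1lim : ∀ x ∈ Icc A P, Tendsto (fun y => v₁ x y) atBot (nhds 0) := by
      intro x hx
      have hv20 : Tendsto (fun y => v₂ x y) atBot (nhds 0) := by
        refine squeeze_zero_norm' (a := fun y => B * m / L * Real.exp (L * x) * Real.exp (c * y))
          ?_ (by simpa using hexp0.const_mul (B * m / L * Real.exp (L * x)))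
        filter_upwards [eventually_le_atBot Q₀] with y hy
        exact hv2 m hm y hy (fun w hw => hbd' w hw y hy) x hx
      simpa using (hlim x hx.2).add hv20
    have hv1 : ∀ x ∈ Icc A P, ∀ y ≤ Q₀,
        |v₁ x y| ≤ B * m / c * Real.exp (c * Q₀) * Real.exp (L * x) := by
      intro x hx y hy
      have hle : ∀ᶠ z in atBot, |v₁ x y - v₁ x z|
          ≤ B * m / c * Real.exp (c * Q₀) * Real.exp (L * x) := by
        filter_upwards [eventually_le_atBot y] with z hz
        have := abs_sub_le_of_abs_deriv_le hz (hv.d₁₂ x)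
          (hasDerivAt_weight (B * m * Real.exp (L * x)) hc.ne') (by
            intro s hs
            rw [abs_mul]
            calc _ ≤ (B * Real.exp (c * s)) * (m * Real.exp (L * x)) :=
                  mul_le_mul (hWB _ _ hx.2) (hbd' x hx s (hs.2.trans hy)) (abs_nonneg _)
                    (by positivity)
              _ = _ := by ring)
        refine this.trans ((sub_le_self _ (by positivity)).trans ?_)
        calc B * m * Real.exp (L * x) / c * Real.exp (c * y)
            ≤ B * m * Real.exp (L * x) / c * Real.exp (c * Q₀) := by gcongr
          _ = _ := by ring
      have hl : Tendsto (fun z => |v₁ x y - v₁ x z|) atBot (nhds |v₁ x y - 0|) :=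
        ((hv1lim x hx).const_sub _).abs
      simpa using le_of_tendsto hl hle
    rintro ⟨x, y⟩ ⟨hx, hy⟩
    simp only [mem_Iic] at hx hy ⊢
    rw [abs_mul_exp_neg_le_iff]
    have := abs_sub_le_of_abs_deriv_le hx.1 (fun s => hv.d₁ s y)
      (hasDerivAt_weight (B * m / c * Real.exp (c * Q₀)) hL0.ne')
      (fun s hs => hv1 s ⟨hs.1, hs.2.trans hx.2⟩ y hy)
    rw [h0 y hy, sub_zero] at this
    refine this.trans ((sub_le_self _ (by positivity)).trans ?_)
    have h9 := mul_le_mul_of_nonneg_right (hhalf m hm) (Real.exp_pos (L * x)).le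
    rw [zero_add]
    refine (le_of_eq ?_).trans h9
    ring)
  have := main (p, q) ⟨⟨hAp, hpP⟩, hq⟩
  rw [abs_mul_exp_neg_le_iff] at this
  simpa using this

/-- If `v` vanishes on the half-line `q < b` of the null line `p = A`, so does `∂_q v`. -/
lemma d₂_eq_zero (hv : NullSolution W v v₁ v₂) {A b q : ℝ} (h : ∀ s < b, v A s = 0)
    (hq : q < b) : v₂ A q = 0 := by
  have : (fun s => v A s) =ᶠ[nhds q] fun _ => 0 := by
    filter_upwards [Iio_mem_nhds hq] with s hs using h s hs
  exact (hv.d₂ A q).unique ((hasDerivAt_const q (0 : ℝ)).congr_of_eventuallyEq this)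

/-- The support theorem in double null coordinates. -/
theorem eq_zero (hv : NullSolution W v v₁ v₂) (hc : 0 < c) (hK : 0 ≤ K)
    (hW : ∀ s, |W s| ≤ K * Real.exp (c * s)) {a τ : ℝ}
    (h0 : ∀ p < a, v p p = 0) (h1 : ∀ p < a, v₁ p p = 0) (h2 : ∀ p < a, v₂ p p = 0)
    (hl₁ : ∀ p ≤ τ, Tendsto (fun q => v₁ p q - v₂ p q) atBot (nhds 0))
    (hl₂ : ∀ q ≤ τ, Tendsto (fun p => v₁ p q - v₂ p q) atBot (nhds 0))
    {p q : ℝ} (hp : p < τ) (hq : q < τ) : v p q = 0 := by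
  have hdep : ∀ p q, p < a → q < a → v p q = 0 := by
    intro p q hp hq
    rcases le_total p q with h | h
    · exact hv.cauchy hc hK hW h0 h1 h hq
    · exact hv.swap.cauchy hc hK hW h0 h2 h hp
  obtain ⟨A, hA⟩ : ∃ A, A < a ∧ A ≤ p ∧ A ≤ q :=
    ⟨min (a - 1) (min p q), by
      refine ⟨(min_le_left _ _).trans_lt (by linarith), ?_, ?_⟩ <;> simp⟩
  obtain ⟨hAa, hAp, hAq⟩ := hA
  have hline : ∀ y < τ, v A y = 0 := by
    intro y hy
    rcases lt_or_ge y a with h | h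
    · exact hdep A y hAa h
    · refine hv.swap.goursat hc hK hW (A := A) (P := τ) (Q₀ := A) (p := y) (q := A)
        (fun x hx => hdep x A (hx.trans_lt hAa) hAa)
        (fun x hx => hv.swap.d₂_eq_zero (b := a) (fun s hs => hdep s A hs hAa)
          (hx.trans_lt hAa)) (fun x hx => ?_) (hAa.le.trans h) hy.le le_rfl
      simpa using (hl₂ x hx).neg
  exact hv.goursat hc hK hW (Q₀ := q) (fun y hy => hline y (hy.trans_lt hq))
    (fun y hy => hv.d₂_eq_zero hline (hy.trans_lt hq)) hl₁ hAp hp.le le_rfl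

end NullSolution

/-! ### The tortoise coordinate -/

/-- The inverse of the tortoise coordinate, found by writing `r = 2 * M + exp y`, which turns
`rstar` into an increasing bijection of the whole line. -/
lemma exists_rstar_inverse {M : ℝ} (hM : 0 < M) : ∃ R : ℝ → ℝ,
    (∀ x, 2 * M < R x) ∧ (∀ x, rstar M (R x) = x) ∧ (∀ r, 2 * M < r → R (rstar M r) = r) ∧
    (∀ x, HasDerivAt R ((R x - 2 * M) / R x) x) ∧
    Tendsto R atBot (nhdsWithin (2 * M) (Ioi (2 * M))) := by
  set g : ℝ → ℝ := fun y => 2 * M + Real.exp y + 2 * M * y with hg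
  have hmono : StrictMono g := by
    intro x y hxy
    have := Real.exp_lt_exp.2 hxy
    simp only [hg]
    nlinarith
  have hcont : Continuous g := by fun_prop
  have hlin : Tendsto (fun y : ℝ => 2 * M * y) atTop atTop :=
    tendsto_id.const_mul_atTop (by linarith)
  have hlin' : Tendsto (fun y : ℝ => 2 * M + 1 + 2 * M * y) atBot atBot :=
    tendsto_atBot_add_const_left _ _ (tendsto_id.const_mul_atBot (by linarith))
  have hsurj : Function.Surjective g := by
    refine hcont.surjective (tendsto_atTop_mono (fun y => ?_) hlin)
      (tendsto_atBot_mono' _ ?_ hlin')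
    · have := Real.exp_pos y
      simp only [hg]; linarith
    · filter_upwards [eventually_le_atBot 0] with y hy
      have := Real.exp_le_one_iff.2 hy
      simp only [hg]; linarith
  set e := hmono.orderIsoOfSurjective g hsurj with he
  have hge : ∀ x, g (e.symm x) = x := fun x => e.apply_symm_apply x
  have heg : ∀ y, e.symm (g y) = y := fun y => e.symm_apply_apply y
  have hr : ∀ y, rstar M (2 * M + Real.exp y) = g y := by
    intro y
    simp [rstar, hg]
  refine ⟨fun x => 2 * M + Real.exp (e.symm x), fun x => by linarith [Real.exp_pos (e.symm x)],
    fun x => by rw [hr, hge], fun r h => ?_, fun x => ?_, ?_⟩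
  · have h1 : r = 2 * M + Real.exp (Real.log (r - 2 * M)) := by
      rw [Real.exp_log (by linarith)]; ring
    have h2 : rstar M r = g (Real.log (r - 2 * M)) := by rw [← hr, ← h1]
    simp only [h2, heg, ← h1]
  · have hd : HasDerivAt g (Real.exp (e.symm x) + 2 * M) (e.symm x) := by
      exact (((Real.hasDerivAt_exp (e.symm x)).const_add (2 * M)).add
        ((hasDerivAt_id (e.symm x)).const_mul (2 * M))).congr_deriv (by ring)
    have hpos := Real.exp_pos (e.symm x)
    have hne : Real.exp (e.symm x) + 2 * M ≠ 0 := by positivity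
    have hinv := HasDerivAt.of_local_left_inverse (f := g) (g := e.symm)
      e.symm.toHomeomorph.continuous.continuousAt hd hne (Eventually.of_forall hge)
    refine (hinv.exp.const_add (2 * M)).congr_deriv ?_
    field_simp
    ring
  · refine tendsto_nhdsWithin_iff.2 ⟨?_, Eventually.of_forall fun x => by
      have := Real.exp_pos (e.symm x)
      simp only [mem_Ioi]; linarith⟩
    simpa using (Real.tendsto_exp_atBot.comp e.symm.tendsto_atBot).const_add (2 * M)

/-! ### The mode equation in null coordinates -/

/-- The linear form on `ℝ × ℝ` with coefficients `a` and `b`. -/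
noncomputable def grad (a b : ℝ) : ℝ × ℝ →L[ℝ] ℝ :=
  a • ContinuousLinearMap.fst ℝ ℝ ℝ + b • ContinuousLinearMap.snd ℝ ℝ ℝ

lemma grad_apply (a b x y : ℝ) : grad a b (x, y) = a * x + b * y := by simp [grad]

lemma eq_grad (l : ℝ × ℝ →L[ℝ] ℝ) : l = grad (l (1, 0)) (l (0, 1)) := by
  ext <;> simp [grad]

lemma HasFDerivAt.comp_grad {G : ℝ → ℝ → ℝ} {a b t' r' x : ℝ} {T R : ℝ → ℝ}
    (hG : HasFDerivAt (uncurry G) (grad a b) (T x, R x)) (hT : HasDerivAt T t' x)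
    (hR : HasDerivAt R r' x) : HasDerivAt (fun s => G (T s) (R s)) (a * t' + b * r') x := by
  rw [← grad_apply]
  exact hG.comp_hasDerivAt (f := fun s => (T s, R s)) x (hT.prodMk hR)

/-- First and second partial derivatives of a mode solution, as total derivatives at each point
(with a common mixed derivative `utr`), and the wave equation in terms of them. -/
lemma IsModeSolution.exists_partials {M lam : ℝ} {u : ℝ → ℝ → ℝ} (hu : IsModeSolution M lam u) :
    ∃ ut ur utt utr urr : ℝ → ℝ → ℝ, ∀ t r, 2 * M < r →
      HasFDerivAt (uncurry u) (grad (ut t r) (ur t r)) (t, r) ∧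
      HasFDerivAt (uncurry ut) (grad (utt t r) (utr t r)) (t, r) ∧
      HasFDerivAt (uncurry ur) (grad (utr t r) (urr t r)) (t, r) ∧
      pdt u t r = ut t r ∧
      -(r/(r-2*M)) * utt t r + ((r-2*M)/r) * urr t r
        + (2*(r-M)/r^2) * ur t r - lam^2/r^2 * u t r = 0 := by
  obtain ⟨hs, hpde⟩ := hu
  set F := uncurry u with hF
  set S : Set (ℝ × ℝ) := univ ×ˢ Ioi (2 * M)
  have hSo : IsOpen S := isOpen_univ.prod isOpen_Ioi
  have hFat : ∀ z ∈ S, ContDiffAt ℝ ∞ F z := fun z hz => hs.contDiffAt (hSo.mem_nhds hz)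
  have hF' : ∀ z ∈ S, DifferentiableAt ℝ F z := fun z hz => (hFat z hz).differentiableAt (by simp)
  have hF'' : ∀ z ∈ S, DifferentiableAt ℝ (fderiv ℝ F) z := fun z hz =>
    ((hFat z hz).fderiv_right (m := 1) (by norm_cast)).differentiableAt (by simp)
  set F2 := fderiv ℝ (fderiv ℝ F) with hF2
  have hsymm : ∀ z ∈ S, F2 z (1, 0) (0, 1) = F2 z (0, 1) (1, 0) := fun z hz =>
    ((hFat z hz).isSymmSndFDerivAt (by
      simpa using (by exact_mod_cast le_top : ((2 : ℕ∞) : WithTop ℕ∞) ≤ ∞))) (1, 0) (0, 1)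
  have hdir : ∀ z ∈ S, ∀ w, HasFDerivAt (fun z => fderiv ℝ F z w)
      (grad (F2 z (1, 0) w) (F2 z (0, 1) w)) z := by
    intro z hz w
    have h := (hF'' z hz).hasFDerivAt.clm_apply (hasFDerivAt_const w z)
    refine h.congr_fderiv ((eq_grad _).trans ?_)
    simp [hF2]
  have hu1 : ∀ t r, 2 * M < r →
      HasFDerivAt F (grad (fderiv ℝ F (t, r) (1, 0)) (fderiv ℝ F (t, r) (0, 1))) (t, r) := by
    intro t r hr
    rw [← eq_grad]
    exact (hF' (t, r) ⟨mem_univ _, hr⟩).hasFDerivAt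
  have hpt : ∀ t r, 2 * M < r → pdt u t r = fderiv ℝ F (t, r) (1, 0) := by
    intro t r hr
    have := ((hu1 t r hr).comp_grad (T := fun s => s) (R := fun _ => r)
      (hasDerivAt_id t) (hasDerivAt_const t r)).deriv
    simpa [pdt] using this
  have hpr : ∀ t r, 2 * M < r → pdr u t r = fderiv ℝ F (t, r) (0, 1) := by
    intro t r hr
    have := ((hu1 t r hr).comp_grad (T := fun _ => t) (R := fun s => s)
      (hasDerivAt_const r t) (hasDerivAt_id r)).deriv
    simpa [pdr] using this
  refine ⟨fun t r => fderiv ℝ F (t, r) (1, 0), fun t r => fderiv ℝ F (t, r) (0, 1),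
    fun t r => F2 (t, r) (1, 0) (1, 0), fun t r => F2 (t, r) (0, 1) (1, 0),
    fun t r => F2 (t, r) (0, 1) (0, 1), fun t r hr => ?_⟩
  have hz : (t, r) ∈ S := ⟨mem_univ _, hr⟩
  have htt := hdir (t, r) hz (1, 0)
  have hrr := hdir (t, r) hz (0, 1)
  rw [hsymm _ hz] at hrr
  refine ⟨hu1 t r hr, htt, hrr, hpt t r hr, ?_⟩
  have e1 : pdtt u t r = F2 (t, r) (1, 0) (1, 0) := by
    have := (HasFDerivAt.comp_grad (G := fun t r => fderiv ℝ F (t, r) (1, 0)) htt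
      (T := fun s => s) (R := fun _ => r) (hasDerivAt_id t) (hasDerivAt_const t r)).deriv
    rw [pdtt, funext fun s => hpt s r hr]
    simpa using this
  have e2 : pdrr u t r = F2 (t, r) (0, 1) (0, 1) := by
    have := (HasFDerivAt.comp_grad (G := fun t r => fderiv ℝ F (t, r) (0, 1)) hrr
      (T := fun _ => t) (R := fun s => s) (hasDerivAt_const r t) (hasDerivAt_id r)).deriv
    have he : (fun s => pdr u t s) =ᶠ[nhds r] fun s => fderiv ℝ F (t, s) (0, 1) := by
      filter_upwards [Ioi_mem_nhds hr] with s hs using hpr t s hs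
    rw [pdrr, he.deriv_eq]
    simpa using this
  simp only [← e1, ← e2, ← hpr t r hr]
  exact hpde t r hr

/-- Along null lines (`t' = σ / 2` with `σ = ± 1`, `x' = 1 / 2` in the tortoise coordinate `x`),
the rescaled mode `r u` satisfies `∂ₚ∂_q (r u) = W r u`. The factor `W` is a quarter of the
Regge–Wheeler potential `(1 - 2M/r) (2M/r³ + lam²/r²)`. -/
lemma hasDerivAt_null {M lam : ℝ} (hM : 0 < M) {u ut ur utt utr urr : ℝ → ℝ → ℝ}
    (hu : ∀ t r, 2 * M < r →
      HasFDerivAt (uncurry u) (grad (ut t r) (ur t r)) (t, r) ∧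
      HasFDerivAt (uncurry ut) (grad (utt t r) (utr t r)) (t, r) ∧
      HasFDerivAt (uncurry ur) (grad (utr t r) (urr t r)) (t, r) ∧
      pdt u t r = ut t r ∧
      -(r/(r-2*M)) * utt t r + ((r-2*M)/r) * urr t r
        + (2*(r-M)/r^2) * ur t r - lam^2/r^2 * u t r = 0)
    {R : ℝ → ℝ} (hR : ∀ x, 2 * M < R x) (hR' : ∀ x, HasDerivAt R ((R x - 2 * M) / R x) x)
    {T X : ℝ → ℝ} {σ s : ℝ} (hσ : σ ^ 2 = 1) (hT : HasDerivAt T (σ / 2) s)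
    (hX : HasDerivAt X (1 / 2) s) :
    HasDerivAt (fun s => R (X s) * u (T s) (R (X s)))
      ((σ * R (X s) * ut (T s) (R (X s)) + (R (X s) - 2 * M) / R (X s) * u (T s) (R (X s))
        + (R (X s) - 2 * M) * ur (T s) (R (X s))) / 2) s ∧
    HasDerivAt (fun s => (-σ * R (X s) * ut (T s) (R (X s))
        + (R (X s) - 2 * M) / R (X s) * u (T s) (R (X s))
        + (R (X s) - 2 * M) * ur (T s) (R (X s))) / 2)
      ((R (X s) - 2 * M) * (2 * M / R (X s) ^ 4 + lam ^ 2 / R (X s) ^ 3) / 4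
        * (R (X s) * u (T s) (R (X s)))) s := by
  have hr : HasDerivAt (fun s => R (X s)) ((R (X s) - 2 * M) / R (X s) * (1 / 2)) s :=
    (hR' (X s)).comp s hX
  obtain ⟨h1, h2, h3, -, hp⟩ := hu (T s) (R (X s)) (hR (X s))
  have d1 := h1.comp_grad (R := fun s => R (X s)) hT hr
  have d2 := h2.comp_grad (R := fun s => R (X s)) hT hr
  have d3 := h3.comp_grad (R := fun s => R (X s)) hT hr
  have hpos := hR (X s)
  have hr0 : R (X s) ≠ 0 := by linarith
  have hr2 : R (X s) - 2 * M ≠ 0 := by linarith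
  constructor
  · refine (hr.mul d1).congr_deriv ?_
    field_simp
    ring
  · refine ((((hr.const_mul (-σ)).mul d2).add (((hr.sub_const (2 * M)).div hr hr0).mul d1)).add
      ((hr.sub_const (2 * M)).mul d3)).div_const 2 |>.congr_deriv ?_
    have hp' : R (X s) ^ 3 * utt (T s) (R (X s)) = R (X s) * (R (X s) - 2 * M) ^ 2
        * urr (T s) (R (X s)) + 2 * (R (X s) - M) * (R (X s) - 2 * M) * ur (T s) (R (X s))
        - lam ^ 2 * (R (X s) - 2 * M) * u (T s) (R (X s)) := by
      field_simp at hp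
      linear_combination -hp
    simp only [Pi.div_apply]
    generalize R (X s) = r at *
    generalize u (T s) r = U at *
    generalize ut (T s) r = Ut at *
    generalize ur (T s) r = Ur at *
    generalize utt (T s) r = Utt at *
    generalize utr (T s) r = Utr at *
    generalize urr (T s) r = Urr at *
    field_simp
    linear_combination (-4 * r) * hp' - 4 * r ^ 4 * Utt * hσ

/-- Exponential decay of the potential towards the horizon, from `log (r - 2M) ≤ x / (2M)`. -/
lemma abs_potential_le {M : ℝ} (lam : ℝ) (hM : 0 < M) {r x : ℝ} (hr : 2 * M < r)
    (hx : rstar M r = x) :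
    |(r - 2 * M) * (2 * M / r ^ 4 + lam ^ 2 / r ^ 3) / 4|
      ≤ (2 * M / (2 * M) ^ 4 + lam ^ 2 / (2 * M) ^ 3) / 4 * Real.exp (x / (2 * M)) := by
  have h0 : 0 < r - 2 * M := by linarith
  have hr0 : 0 < r := by linarith
  have h1 : r - 2 * M ≤ Real.exp (x / (2 * M)) := by
    rw [← Real.log_le_iff_le_exp h0, le_div_iff₀ (by linarith)]
    rw [rstar] at hx
    linarith
  rw [abs_of_nonneg (by positivity)]
  calc _ ≤ Real.exp (x / (2 * M)) * (2 * M / (2 * M) ^ 4 + lam ^ 2 / (2 * M) ^ 3) / 4 := by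
        gcongr
    _ = _ := by ring

/-! ### The support theorem -/

/-- Support theorem at the event horizon (Theorem 5.1, single mode): if the forward
radiation field at the horizon vanishes for `τ ≤ τ₀` and the backward one vanishes for
`τ ≥ −τ₀`, then the data vanish where `r_*(r) < τ₀`. -/
theorem support_theorem_event_horizon
    (M lam : ℝ) (hM : 0 < M) (hlam : 0 ≤ lam)
    (u : ℝ → ℝ → ℝ) (hu : IsModeSolution M lam u)
    (φ ψ : ℝ → ℝ) (hφ : ∀ r : ℝ, φ r = u 0 r) (hψ : ∀ r : ℝ, ψ r = pdt u 0 r)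
    (hsupp : ∃ r₁ r₂ : ℝ, 2*M < r₁ ∧ r₁ ≤ r₂ ∧
      ∀ r : ℝ, 2*M < r → r ∉ Set.Icc r₁ r₂ → φ r = 0 ∧ ψ r = 0)
    (τ₀ : ℝ) (f fbwd : ℝ → ℝ)
    (hf : IsFwdRadHorizon M u f) (hf0 : ∀ τ : ℝ, τ ≤ τ₀ → f τ = 0)
    (hfbwd : IsBwdRadHorizon M u fbwd) (hfbwd0 : ∀ τ : ℝ, -τ₀ ≤ τ → fbwd τ = 0) :
    ∀ r : ℝ, 2*M < r → rstar M r < τ₀ → φ r = 0 ∧ ψ r = 0 := by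
  obtain ⟨R, hR, hRx, hRr, hR', hRlim⟩ := exists_rstar_inverse hM
  obtain ⟨ut, ur, utt, utr, urr, H⟩ := hu.exists_partials
  obtain ⟨r₁, r₂, hr₁, -, hsupp⟩ := hsupp
  have hTp : ∀ p q : ℝ, HasDerivAt (fun s : ℝ => (s - q) / 2) (1 / 2) p := fun p q =>
    ((hasDerivAt_id p).sub_const q).div_const 2
  have hTq : ∀ p q : ℝ, HasDerivAt (fun s : ℝ => (p - s) / 2) (-1 / 2) q := fun p q =>
    ((hasDerivAt_id q).const_sub p).div_const 2
  have hXp : ∀ p q : ℝ, HasDerivAt (fun s : ℝ => (s + q) / 2) (1 / 2) p := fun p q =>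
    ((hasDerivAt_id p).add_const q).div_const 2
  have hXq : ∀ p q : ℝ, HasDerivAt (fun s : ℝ => (p + s) / 2) (1 / 2) q := fun p q =>
    ((hasDerivAt_id q).const_add p).div_const 2
  have hRc : Continuous R := continuous_iff_continuousAt.2 fun x => (hR' x).continuousAt
  -- `Z σ` is the `p`-derivative of `r u` for `σ = 1` and the `q`-derivative for `σ = -1`.
  set Z : ℝ → ℝ → ℝ → ℝ := fun σ t x => (σ * R x * ut t (R x) + (R x - 2 * M) / R x * u t (R x)
    + (R x - 2 * M) * ur t (R x)) / 2 with hZ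
  have hv : NullSolution
      (fun s => (R (s / 2) - 2 * M) * (2 * M / R (s / 2) ^ 4 + lam ^ 2 / R (s / 2) ^ 3) / 4)
      (fun p q => R ((p + q) / 2) * u ((p - q) / 2) (R ((p + q) / 2)))
      (fun p q => Z 1 ((p - q) / 2) ((p + q) / 2))
      (fun p q => Z (-1) ((p - q) / 2) ((p + q) / 2)) := by
    refine ⟨?_, fun p q => ?_, fun p q => ?_, fun p q => ?_, fun p q => ?_⟩
    · have h2 : ContinuousOn (uncurry u) (univ ×ˢ Ioi (2 * M)) := hu.1.continuousOn
      have h3 : Continuous fun z : ℝ × ℝ => uncurry u ((z.1 - z.2) / 2, R ((z.1 + z.2) / 2)) :=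
        h2.comp_continuous (by fun_prop) fun z => ⟨mem_univ _, hR _⟩
      exact (hRc.comp (by fun_prop : Continuous fun z : ℝ × ℝ => (z.1 + z.2) / 2)).mul h3
    · exact (hasDerivAt_null hM H hR hR' (by norm_num) (hTp p q) (hXp p q)).1
    · exact (hasDerivAt_null hM H hR hR' (by norm_num) (hTq p q) (hXq p q)).1
    · simpa [hZ] using (hasDerivAt_null hM H hR hR' (by norm_num) (hTq p q) (hXq p q)).2
    · exact (hasDerivAt_null hM H hR hR' (by norm_num) (hTp p q) (hXp p q)).2
  have hZt : ∀ t x, Z 1 t x - Z (-1) t x = R x * pdt u t (R x) := by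
    intro t x
    rw [(H t (R x) (hR x)).2.2.2.1]
    simp only [hZ]
    ring
  have hRlt : ∀ x, x < rstar M r₁ → R x < r₁ := by
    intro x hx
    by_contra! hle
    have hlog := Real.log_le_log (by linarith : 0 < r₁ - 2 * M)
      (by linarith : r₁ - 2 * M ≤ R x - 2 * M)
    have h1 := hRx x
    rw [rstar] at h1 hx
    nlinarith
  have hu0 : ∀ r, 2 * M < r → r < r₁ → u 0 r = 0 ∧ ut 0 r = 0 := by
    intro r h1 h2
    have := hsupp r h1 (fun h => by linarith [h.1])
    rw [hφ, hψ, (H 0 r h1).2.2.2.1] at this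
    exact this
  have hur0 : ∀ r, 2 * M < r → r < r₁ → ur 0 r = 0 := by
    intro r h1 h2
    have hd := (H 0 r h1).1.comp_grad (T := fun _ => 0) (R := fun s => s)
      (hasDerivAt_const r 0) (hasDerivAt_id r)
    have he : (fun s => u 0 s) =ᶠ[nhds r] fun _ => 0 := by
      filter_upwards [Ioo_mem_nhds h1 h2] with s hs using (hu0 s hs.1 hs.2).1
    simpa using hd.unique ((hasDerivAt_const r (0 : ℝ)).congr_of_eventuallyEq he)
  have hZ0 : ∀ σ x, x < rstar M r₁ → Z σ 0 x = 0 := by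
    intro σ x hx
    have h1 := hR x
    have h2 := hRlt x hx
    simp [hZ, hu0 _ h1 h2, hur0 _ h1 h2]
  have hR0 : Tendsto R atBot (nhds (2 * M)) := hRlim.mono_right nhdsWithin_le_nhds
  have hhalf : ∀ y : ℝ, Tendsto (fun s : ℝ => (y + s) / 2) atBot atBot := fun y =>
    (tendsto_atBot_add_const_left _ y tendsto_id).atBot_div_const (by norm_num)
  have hc : 0 < 1 / (4 * M) := by positivity
  have hzero : ∀ p q, p < τ₀ → q < τ₀ →
      R ((p + q) / 2) * u ((p - q) / 2) (R ((p + q) / 2)) = 0 := by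
    intro p q hp hq
    refine hv.eq_zero hc (K := (2 * M / (2 * M) ^ 4 + lam ^ 2 / (2 * M) ^ 3) / 4) (by positivity)
      (fun s => ?_) (a := rstar M r₁) (fun x hx => ?_) (fun x hx => ?_) (fun x hx => ?_)
      (fun x hx => ?_) (fun x hx => ?_) hp hq
    · refine (abs_potential_le lam hM (hR _) (hRx _)).trans (le_of_eq ?_)
      congr 2
      field_simp
      norm_num
    · simp [hu0 _ (hR x) (hRlt x hx)]
    · simpa using hZ0 1 x hx
    · simpa using hZ0 (-1) x hx
    · have h1 := (hR0.mul ((hf x).comp hRlim)).comp (hhalf x)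
      rw [hf0 x hx, mul_zero] at h1
      refine h1.congr fun s => ?_
      simp only [hZt, comp_apply, hRx]
      congr 2
      ring
    · have h1 := (hR0.mul ((hfbwd (-x)).comp hRlim)).comp (hhalf x)
      rw [hfbwd0 (-x) (by linarith), mul_zero] at h1
      refine h1.congr fun s => ?_
      simp only [hZt, comp_apply, hRx, add_comm x s]
      congr 2
      ring
  intro r hr hrτ
  have hloc : ∀ t, |t| < τ₀ - rstar M r → u t r = 0 := by
    intro t ht
    rw [abs_lt] at ht
    have h := hzero (rstar M r + t) (rstar M r - t) (by linarith) (by linarith)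
    rw [show (rstar M r + t + (rstar M r - t)) / 2 = rstar M r by ring,
      show (rstar M r + t - (rstar M r - t)) / 2 = t by ring, hRr r hr] at h
    exact (mul_eq_zero.1 h).resolve_left (by linarith)
  refine ⟨by rw [hφ]; exact hloc 0 (by simpa using hrτ), ?_⟩
  have he : (fun t => u t r) =ᶠ[nhds 0] fun _ => 0 := by
    filter_upwards [Metric.ball_mem_nhds (0 : ℝ) (sub_pos.2 hrτ)] with t ht
    exact hloc t (by simpa using ht)
  rw [hψ, pdt, he.deriv_eq, deriv_const]
end

section
/- Let u be a λ-mode solution with initial data (0,ψ), where ψ is smooth and compactly supported in (2M,∞), and let τ₀ ∈ ℝ. If f is a forward radiation field of u at the event horizon with f(τ) = 0 for all τ ≤ τ₀, then ψ(r) = 0 for every r ∈ (2M,∞) with r_*(r) < τ₀. (Corollary 5.2, for a single spherical-harmonic mode.) -/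
/-!
In the null coordinates `x = r_* + t`, `y = r_* - t` the rescaled field `F = r u` solves
`F_{xy} = (V / 4) F`, where `V` is bounded by a multiple of `e^{(x + y) / (4M)}`; the future horizon
is `y → -∞`, the past horizon is `x → -∞`, and `{t = 0}` is the diagonal. Since `u` vanishes at
`t = 0`, `F` is odd under the time reflection `x ↔ y` (`NullSolution.antisymm`).

By finite speed of propagation (`NullSolution.cauchy`), `F = 0` for `y ≤ x ≤ a` when `ψ` vanishes
where `r_* ≤ a`. The field is bounded up to the horizon (`NullSolution.bounded`), so `F_y → 0` there,
and the vanishing of the radiation field gives `F_x → 0` along `x = τ` for `τ ≤ τ₀`. Exchanging the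
roles of space and time, the problem with data on `x = a` and on the horizon `y → -∞` is a
characteristic (Goursat) problem, for which uniqueness holds (`NullSolution.goursat`). A first
application gives `F = 0` on `a ≤ x ≤ τ₀`, `y ≤ a`. By oddness `F` then vanishes on the whole half line
`x = a`, `y ≤ τ₀`, and a second application gives `F = 0` on `a ≤ x ≤ τ₀`, `y ≤ τ₀`
(`NullSolution.support`). This rectangle contains the part `a ≤ r_* ≤ τ₀` of the initial line.

All estimates come from one principle (`le_two_mul_of_improve`): with a suitable exponential weight,
integrating `F_{xy} = q F` twice turns a bound `B` on the weighted field into `A + B / 2`.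
-/

open MeasureTheory Filter Set Function
open scoped ContDiff

/-! ### Bounds by integration and contraction -/

/-- If `|h'| ≤ φ'` on `[y₁, y₂]` then the increment of `h` is bounded by the increment of `φ`. -/
lemma abs_sub_le_of_deriv_le {h h' φ φ' : ℝ → ℝ} {y₁ y₂ : ℝ} (h12 : y₁ ≤ y₂)
    (hh : ∀ y, HasDerivAt h (h' y) y) (hφ : ∀ y, HasDerivAt φ (φ' y) y)
    (hle : ∀ y ∈ Icc y₁ y₂, |h' y| ≤ φ' y) : |h y₂ - h y₁| ≤ φ y₂ - φ y₁ := by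
  have key : ∀ g g' : ℝ → ℝ, (∀ y, HasDerivAt g (g' y) y) → (∀ y ∈ Icc y₁ y₂, 0 ≤ g' y) →
      g y₁ ≤ g y₂ := by
    intro g g' hg hg'
    have : MonotoneOn g (Icc y₁ y₂) := by
      apply monotoneOn_of_deriv_nonneg (convex_Icc _ _)
      · exact fun y _ => (hg y).continuousAt.continuousWithinAt
      · exact fun y _ => (hg y).differentiableAt.differentiableWithinAt
      · intro y hy
        rw [(hg y).deriv]
        exact hg' y (interior_subset hy)
    exact this (left_mem_Icc.2 h12) (right_mem_Icc.2 h12) h12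
  have h1 := key (fun y => φ y - h y) (fun y => φ' y - h' y) (fun y => (hφ y).sub (hh y))
    (fun y hy => by have := (abs_le.1 (hle y hy)).2; linarith)
  have h2 := key (fun y => φ y + h y) (fun y => φ' y + h' y) (fun y => (hφ y).add (hh y))
    (fun y hy => by have := (abs_le.1 (hle y hy)).1; linarith)
  rw [abs_le]; constructor <;> linarith

/-- The contraction principle behind all the uniqueness and boundedness statements: an a priori
bounded quantity for which every bound `B` improves to `A + B / 2` is bounded by `2 * A`. -/
lemma le_two_mul_of_improve {α : Type*} (S : Set α) (g : α → ℝ) (A : ℝ) (hA : 0 ≤ A)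
    (hbd : ∃ B, ∀ a ∈ S, g a ≤ B)
    (h : ∀ B, 0 ≤ B → (∀ a ∈ S, g a ≤ B) → ∀ a ∈ S, g a ≤ A + B / 2) :
    ∀ a ∈ S, g a ≤ 2 * A := by
  obtain ⟨B, hB⟩ := hbd
  have hiter : ∀ n : ℕ, ∀ a ∈ S, g a ≤ 2 * A + |B| * (1 / 2) ^ n := by
    intro n
    induction n with
    | zero => intro a ha; have := hB a ha; have := le_abs_self B; simp; linarith
    | succ n ih =>
      intro a ha
      have := h _ (by positivity) ih a ha
      rw [pow_succ]; linarith
  intro a ha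
  have hlim : Tendsto (fun n : ℕ => 2 * A + |B| * (1 / 2 : ℝ) ^ n) atTop (nhds (2 * A)) := by
    have := (tendsto_pow_atTop_nhds_zero_of_lt_one (r := (1 / 2 : ℝ))
      (by norm_num) (by norm_num)).const_mul |B|
    simpa using this.const_add (2 * A)
  exact ge_of_tendsto' hlim (fun n => hiter n a ha)

/-! ### Uniqueness for the wave equation in null coordinates -/

/-- A solution of `F_{xy} = q F` in double-null coordinates, together with its first derivatives
`p = F_x` and `z = F_y`.  The potential `q` is symmetric in the two null coordinates and is
bounded by `K e^{k(x+y)}`, so that it decays exponentially towards both horizons `x → -∞` and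
`y → -∞`. -/
structure NullSolution_s2 (K k : ℝ) (q F p z : ℝ → ℝ → ℝ) : Prop where
  K_nonneg : 0 ≤ K
  k_pos : 0 < k
  hF : ∀ x y, HasDerivAt (fun x => F x y) (p x y) x
  hFy : ∀ x y, HasDerivAt (fun y => F x y) (z x y) y
  hp : ∀ x y, HasDerivAt (fun y => p x y) (q x y * F x y) y
  hz : ∀ x y, HasDerivAt (fun x => z x y) (q x y * F x y) x
  q_symm : ∀ x y, q x y = q y x
  q_le : ∀ x y, |q x y| ≤ K * Real.exp (k * (x + y))
  F_cont : Continuous (uncurry F)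
  p_cont : Continuous (uncurry p)
  z_cont : Continuous (uncurry z)

lemma q_mul_le {K c q F B w : ℝ} (hq : |q| ≤ K) (hF : |F| ≤ B * w) (hK : K ≤ c) :
    |q * F| ≤ c * (B * w) := by
  rw [abs_mul]
  exact mul_le_mul (hq.trans hK) hF (abs_nonneg _) ((abs_nonneg _).trans (hq.trans hK))

/-- Uniqueness for the Cauchy problem with data on the part `x ≤ c` of the diagonal `x = y`, which
is `{t = 0}`. -/
lemma NullSolution_s2.cauchy {K k : ℝ} {q F p z : ℝ → ℝ → ℝ} (H : NullSolution_s2 K k q F p z) {c : ℝ}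
    (h0 : ∀ x ≤ c, F x x = 0) (h1 : ∀ x ≤ c, p x x = 0) :
    ∀ x y, y ≤ x → x ≤ c → F x y = 0 := by
  intro x₀ y₀ hyx hxc
  set C := K * Real.exp (k * (c + c)) with hC
  have hC0 : 0 ≤ C := mul_nonneg H.K_nonneg (Real.exp_pos _).le
  -- This `L` makes the factor gained from the weight at most `1 / 2`.
  set L := 2 * C + 1 with hL
  have hL0 : 0 < L := by linarith
  let S : Set (ℝ × ℝ) := {a | y₀ ≤ a.2 ∧ a.2 ≤ a.1 ∧ a.1 ≤ x₀}
  have hScompact : IsCompact S := by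
    apply (isCompact_Icc (a := ((y₀, y₀) : ℝ × ℝ)) (b := (x₀, x₀))).of_isClosed_subset
    · exact (isClosed_le continuous_const continuous_snd).inter
        ((isClosed_le continuous_snd continuous_fst).inter
          (isClosed_le continuous_fst continuous_const))
    · rintro ⟨x, y⟩ ⟨h1, h2, h3⟩
      simp only at h1 h2 h3
      simp only [Prod.mk_le_mk, mem_Icc]
      refine ⟨⟨?_, ?_⟩, ?_, ?_⟩ <;> linarith
  have main : ∀ a ∈ S, |F a.1 a.2| * Real.exp (-(L * (a.1 - a.2))) ≤ 2 * 0 := by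
    apply le_two_mul_of_improve S _ 0 le_rfl
    · obtain ⟨B, hB⟩ := hScompact.exists_bound_of_continuousOn
        (f := fun a : ℝ × ℝ => |F a.1 a.2| * Real.exp (-(L * (a.1 - a.2)))) (by
          have := H.F_cont
          apply Continuous.continuousOn
          exact (this.abs).mul (by fun_prop))
      exact ⟨B, fun a ha => (le_abs_self _).trans (hB a ha)⟩
    · intro B hB hbd
      have hbd' : ∀ x y, y₀ ≤ y → y ≤ x → x ≤ x₀ → |F x y| ≤ B * Real.exp (L * (x - y)) := by
        intro x y h1 h2 h3
        have := hbd (x, y) ⟨h1, h2, h3⟩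
        simp only at this
        rwa [Real.exp_neg, ← div_eq_mul_inv, div_le_iff₀ (Real.exp_pos _)] at this
      have hpb : ∀ x y, y₀ ≤ y → y ≤ x → x ≤ x₀ →
          |p x y| ≤ C * B / L * Real.exp (L * (x - y)) := by
        intro x y h1' h2 h3
        have := abs_sub_le_of_deriv_le (h := fun y => p x y)
          (φ := fun y => -(C * B / L) * Real.exp (L * (x - y)))
          (φ' := fun y => C * (B * Real.exp (L * (x - y)))) h2 (H.hp x)
          (fun y => by
            have := (((((hasDerivAt_id y).const_sub x).const_mul L).exp).const_mul (-(C * B / L)))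
            exact this.congr_deriv (by simp only [id]; field_simp)) (fun y' hy' => by
            apply q_mul_le (H.q_le x y') (hbd' x y' (by linarith [hy'.1]) hy'.2 h3)
            apply mul_le_mul_of_nonneg_left _ H.K_nonneg
            apply Real.exp_le_exp.2
            apply mul_le_mul_of_nonneg_left _ H.k_pos.le
            linarith [hy'.2])
        simp only [h1 x (by linarith), sub_self, mul_zero, Real.exp_zero, zero_sub, abs_neg] at this
        have h5 : 0 ≤ C * B / L := by positivity
        linarith
      rintro ⟨x, y⟩ ⟨g1, g2, g3⟩
      simp only at g1 g2 g3
      have := abs_sub_le_of_deriv_le (h := fun x => F x y)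
          (φ := fun x => C * B / L / L * Real.exp (L * (x - y)))
          (φ' := fun x => C * B / L * Real.exp (L * (x - y))) g2 (fun x => H.hF x y)
          (fun x => by
            have := (((((hasDerivAt_id x).sub_const y).const_mul L).exp).const_mul (C * B / L / L))
            exact this.congr_deriv (by simp only [id]; field_simp))
          (fun x' hx' => hpb x' y g1 hx'.1 (by linarith [hx'.2]))
      simp only [h0 y (by linarith), sub_self, mul_zero, Real.exp_zero, sub_zero] at this
      simp only
      rw [Real.exp_neg, ← div_eq_mul_inv, div_le_iff₀ (Real.exp_pos _)]
      have h5 : C * B / L / L ≤ B / 2 := by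
        rw [div_div, div_le_iff₀ (by positivity)]
        nlinarith [mul_nonneg hB hC0, mul_nonneg (mul_nonneg hB hC0) hC0]
      have h6 : 0 ≤ C * B / L / L := by positivity
      have := mul_le_mul_of_nonneg_right h5 (Real.exp_pos (L * (x - y))).le
      linarith
  have := main (x₀, y₀) ⟨le_rfl, hyx, le_rfl⟩
  simp only [mul_zero] at this
  have h7 := Real.exp_pos (-(L * (x₀ - y₀)))
  have h8 : |F x₀ y₀| ≤ 0 := by
    by_contra hcon
    push Not at hcon
    have := mul_pos hcon h7
    linarith
  exact abs_nonpos_iff.1 h8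

/-- Boundedness up to the horizon `y → -∞`, for `x` in a compact interval. On each
rectangle `y₀ ≤ y ≤ b` an a priori bound exists by compactness; the improved bound does not depend on
`y₀`, because the potential decays exponentially and so is integrable along the half line `y ≤ b`. -/
lemma NullSolution_s2.bounded {K k : ℝ} {q F p z : ℝ → ℝ → ℝ} (H : NullSolution_s2 K k q F p z)
    {a b : ℝ} (hab : a ≤ b) (h0 : ∀ y ≤ a, F a y = 0) :
    ∃ B, ∀ x y, a ≤ x → x ≤ b → y ≤ b → |F x y| ≤ B := by
  have hK := H.K_nonneg
  have hk := H.k_pos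
  obtain ⟨A₀, hA₀⟩ : ∃ A₀, ∀ y ≤ b, |F a y| ≤ A₀ := by
    obtain ⟨A, hA⟩ := (isCompact_Icc (a := a) (b := b)).exists_bound_of_continuousOn
      (f := fun y => F a y) (H.F_cont.comp (by fun_prop : Continuous fun y : ℝ => (a, y))).continuousOn
    refine ⟨max A 0, fun y hy => ?_⟩
    rcases le_total y a with h | h
    · rw [h0 y h]; simp
    · exact (hA y ⟨h, hy⟩).trans (le_max_left _ _)
  obtain ⟨A₁, hA₁⟩ := (isCompact_Icc (a := a) (b := b)).exists_bound_of_continuousOn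
      (f := fun x => p x b) (H.p_cont.comp (by fun_prop : Continuous fun x : ℝ => (x, b))).continuousOn
  simp only [Real.norm_eq_abs] at hA₁
  have hA₀0 : 0 ≤ A₀ := (abs_nonneg _).trans (hA₀ b le_rfl)
  have hA₁0 : 0 ≤ A₁ := (abs_nonneg _).trans (hA₁ b ⟨hab, le_rfl⟩)
  set C := K / k * Real.exp (k * (b + b)) with hC
  have hC0 : 0 ≤ C := by positivity
  -- This `L` makes the factor gained from the weight at most `1 / 2`.
  set L := 2 * C + 1 with hL
  have hL0 : 0 < L := by linarith
  set A := A₀ + A₁ * (b - a) with hA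
  have hA00 : 0 ≤ A := by have : 0 ≤ b - a := by linarith
                          positivity
  refine ⟨2 * A * Real.exp (L * (b - a)), fun x₀ y₀ hx1 hx2 hy => ?_⟩
  let S : Set (ℝ × ℝ) := Icc a b ×ˢ Icc y₀ b
  have main : ∀ c ∈ S, |F c.1 c.2| * Real.exp (-(L * (c.1 - a))) ≤ 2 * A := by
    apply le_two_mul_of_improve S _ A hA00
    · obtain ⟨B, hB⟩ := (isCompact_Icc.prod isCompact_Icc : IsCompact S).exists_bound_of_continuousOn
        (f := fun c : ℝ × ℝ => |F c.1 c.2| * Real.exp (-(L * (c.1 - a)))) (by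
          apply Continuous.continuousOn
          exact (H.F_cont.abs).mul (by fun_prop))
      exact ⟨B, fun a ha => (le_abs_self _).trans (hB a ha)⟩
    · intro B hB hbd
      have hbd' : ∀ x ∈ Icc a b, ∀ y ∈ Icc y₀ b, |F x y| ≤ B * Real.exp (L * (x - a)) := by
        intro x hx y hy
        have := hbd (x, y) ⟨hx, hy⟩
        simp only at this
        rwa [Real.exp_neg, ← div_eq_mul_inv, div_le_iff₀ (Real.exp_pos _)] at this
      have hpb : ∀ x ∈ Icc a b, ∀ y ∈ Icc y₀ b,
          |p x y| ≤ A₁ + C * B * Real.exp (L * (x - a)) := by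
        intro x hx y hy
        have := abs_sub_le_of_deriv_le (h := fun y => p x y)
          (φ := fun y => K / k * (B * Real.exp (L * (x - a))) * Real.exp (k * (x + y)))
          (φ' := fun y => K * Real.exp (k * (x + y)) * (B * Real.exp (L * (x - a)))) hy.2 (H.hp x)
          (fun y => by
            have := (((((hasDerivAt_id y).const_add x).const_mul k).exp).const_mul
              (K / k * (B * Real.exp (L * (x - a)))))
            exact this.congr_deriv (by simp only [id]; field_simp)) (fun y' hy' =>
            q_mul_le (H.q_le x y') (hbd' x hx y' ⟨hy.1.trans hy'.1, hy'.2⟩) le_rfl)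
        have h3 := hA₁ x hx
        have h4 : K / k * (B * Real.exp (L * (x - a))) * Real.exp (k * (x + b)) ≤
            C * B * Real.exp (L * (x - a)) := by
          have : Real.exp (k * (x + b)) ≤ Real.exp (k * (b + b)) := by
            apply Real.exp_le_exp.2
            apply mul_le_mul_of_nonneg_left _ hk.le
            linarith [hx.2]
          calc _ ≤ K / k * (B * Real.exp (L * (x - a))) * Real.exp (k * (b + b)) := by gcongr
            _ = _ := by rw [hC]; ring
        have h5 : 0 ≤ K / k * (B * Real.exp (L * (x - a))) * Real.exp (k * (x + y)) := by positivity
        have h6 := abs_sub_abs_le_abs_sub (p x y) (p x b)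
        rw [abs_sub_comm] at h6
        linarith
      rintro ⟨x, y⟩ ⟨hx, hy⟩
      simp only at hx hy
      have := abs_sub_le_of_deriv_le (h := fun x => F x y)
          (φ := fun x => A₁ * x + C * B / L * Real.exp (L * (x - a)))
          (φ' := fun x => A₁ + C * B * Real.exp (L * (x - a))) hx.1 (fun x => H.hF x y)
          (fun x => by
            have := ((hasDerivAt_id x).const_mul A₁).add
              (((((hasDerivAt_id x).sub_const a).const_mul L).exp).const_mul (C * B / L))
            exact this.congr_deriv (by simp only [id]; field_simp))
          (fun x' hx' => hpb x' ⟨hx'.1, hx'.2.trans hx.2⟩ y hy)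
      simp only [sub_self, mul_zero, Real.exp_zero] at this
      simp only
      rw [Real.exp_neg, ← div_eq_mul_inv, div_le_iff₀ (Real.exp_pos _)]
      have h5 : C * B / L ≤ B / 2 := by
        rw [div_le_iff₀ hL0]
        nlinarith
      have h6 : 0 ≤ C * B / L := by positivity
      have h7 := mul_le_mul_of_nonneg_right h5 (Real.exp_pos (L * (x - a))).le
      have h8 : 1 ≤ Real.exp (L * (x - a)) :=
        Real.one_le_exp (mul_nonneg hL0.le (by linarith [hx.1]))
      have h9 := hA₀ y hy.2
      have h10 := abs_sub_abs_le_abs_sub (F x y) (F a y)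
      have h11 : A₁ * (x - a) ≤ A₁ * (b - a) := by gcongr; exact hx.2
      have h12 : A * 1 ≤ A * Real.exp (L * (x - a)) := by gcongr
      linarith
  have := main (x₀, y₀) ⟨⟨hx1, hx2⟩, le_rfl, hy⟩
  simp only at this
  rw [Real.exp_neg, ← div_eq_mul_inv, div_le_iff₀ (Real.exp_pos _)] at this
  apply this.trans
  gcongr

/-- Uniqueness for the characteristic (Goursat) problem with data on `x = a` and on the horizon
`y → -∞`. The weight is the exponential of the sum of the Kruskal coordinates `e^{kx}`, `e^{ky}`,
in which the potential becomes bounded. -/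
lemma NullSolution_s2.goursat {K k : ℝ} {q F p z : ℝ → ℝ → ℝ} (H : NullSolution_s2 K k q F p z)
    {a b c : ℝ} (hbd : ∃ B, ∀ x y, a ≤ x → x ≤ b → y ≤ c → |F x y| ≤ B)
    (h0 : ∀ y ≤ c, F a y = 0)
    (hlim : ∀ x, a ≤ x → x ≤ b → Tendsto (fun y => p x y) atBot (nhds 0)) :
    ∀ x y, a ≤ x → x ≤ b → y ≤ c → F x y = 0 := by
  have hK := H.K_nonneg
  have hk := H.k_pos
  -- With this choice `K / (k * L) ^ 2 ≤ 1 / 2`.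
  set L := (2 * K + 1) / k with hL
  have hL0 : 0 < L := by positivity
  have hkL : k * L = 2 * K + 1 := by rw [hL]; field_simp
  let κ : ℝ → ℝ → ℝ := fun x y => Real.exp (L * (Real.exp (k * x) + Real.exp (k * y)))
  have hκ0 : ∀ x y, 0 < κ x y := fun x y => Real.exp_pos _
  have hκ1 : ∀ x y, 1 ≤ κ x y := fun x y => Real.one_le_exp (by positivity)
  have hκx : ∀ x y, HasDerivAt (fun x => κ x y) (k * L * Real.exp (k * x) * κ x y) x := by
    intro x y
    have := (((((hasDerivAt_id x).const_mul k).exp).add_const (Real.exp (k * y))).const_mul L).exp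
    exact this.congr_deriv (by simp only [id, κ]; ring)
  have hκy : ∀ x y, HasDerivAt (fun y => κ x y) (k * L * Real.exp (k * y) * κ x y) y := by
    intro x y
    have := (((((hasDerivAt_id y).const_mul k).exp).const_add (Real.exp (k * x))).const_mul L).exp
    exact this.congr_deriv (by simp only [id, κ]; ring)
  let S : Set (ℝ × ℝ) := {d | a ≤ d.1 ∧ d.1 ≤ b ∧ d.2 ≤ c}
  have main : ∀ d ∈ S, |F d.1 d.2| / κ d.1 d.2 ≤ 2 * 0 := by
    apply le_two_mul_of_improve S _ 0 le_rfl
    · obtain ⟨B, hB⟩ := hbd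
      refine ⟨B, fun d hd => ?_⟩
      exact (div_le_self (abs_nonneg _) (hκ1 _ _)).trans (hB _ _ hd.1 hd.2.1 hd.2.2)
    · intro B hB hbd
      have hbd' : ∀ x y, a ≤ x → x ≤ b → y ≤ c → |F x y| ≤ B * κ x y := fun x y h1 h2 h3 =>
        (div_le_iff₀ (hκ0 _ _)).1 (hbd (x, y) ⟨h1, h2, h3⟩)
      have hpb : ∀ x y, a ≤ x → x ≤ b → y ≤ c →
          |p x y| ≤ K * B / (k * L) * Real.exp (k * x) * κ x y := by
        intro x y h1 h2 h3
        have hinc : ∀ y' ≤ y, |p x y| ≤ |p x y'| + K * B / (k * L) * Real.exp (k * x) * κ x y := by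
          intro y' hy'
          have := abs_sub_le_of_deriv_le (h := fun y => p x y)
            (φ := fun y => K * B / (k * L) * Real.exp (k * x) * κ x y)
            (φ' := fun y => K * Real.exp (k * (x + y)) * (B * κ x y)) hy' (H.hp x)
            (fun y => by
              exact ((hκy x y).const_mul (K * B / (k * L) * Real.exp (k * x))).congr_deriv (by
                rw [mul_add, Real.exp_add]; field_simp))
            (fun y'' hy'' => q_mul_le (H.q_le x y'') (hbd' x y'' h1 h2 (hy''.2.trans h3)) le_rfl)
          have h5 : 0 ≤ K * B / (k * L) * Real.exp (k * x) * κ x y' := by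
            have := hκ0 x y'
            positivity
          have h6 := abs_sub_abs_le_abs_sub (p x y) (p x y')
          linarith
        have ht := ((hlim x h1 h2).abs).add_const (K * B / (k * L) * Real.exp (k * x) * κ x y)
        rw [abs_zero, zero_add] at ht
        apply ge_of_tendsto ht
        filter_upwards [eventually_le_atBot y] with y' hy' using hinc y' hy'
      rintro ⟨x, y⟩ ⟨g1, g2, g3⟩
      simp only at g1 g2 g3
      have := abs_sub_le_of_deriv_le (h := fun x => F x y)
          (φ := fun x => K * B / (k * L) / (k * L) * κ x y)
          (φ' := fun x => K * B / (k * L) * Real.exp (k * x) * κ x y) g1 (fun x => H.hF x y)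
          (fun x => by
            exact ((hκx x y).const_mul (K * B / (k * L) / (k * L))).congr_deriv (by field_simp))
          (fun x' hx' => hpb x' y hx'.1 (hx'.2.trans g2) g3)
      simp only [h0 y g3, sub_zero] at this
      simp only
      rw [div_le_iff₀ (hκ0 _ _)]
      have h5 : K * B / (k * L) / (k * L) ≤ B / 2 := by
        rw [hkL, div_div, div_le_iff₀ (by positivity)]
        nlinarith [mul_nonneg hB hK, mul_nonneg (mul_nonneg hB hK) hK]
      have h6 : 0 ≤ K * B / (k * L) / (k * L) * κ a y := by
        have := hκ0 a y
        positivity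
      have := mul_le_mul_of_nonneg_right h5 (hκ0 x y).le
      linarith
  intro x y h1 h2 h3
  have := main (x, y) ⟨h1, h2, h3⟩
  simp only [mul_zero] at this
  rw [div_le_iff₀ (hκ0 _ _), zero_mul] at this
  exact abs_nonpos_iff.1 this

/-- A field vanishing on the diagonal `{t = 0}` is odd under the time reflection `x ↔ y`: its even
part solves the same equation with zero Cauchy data. The hypothesis `h1` says that the derivative
along the diagonal is zero. -/
lemma NullSolution_s2.antisymm {K k : ℝ} {q F p z : ℝ → ℝ → ℝ} (H : NullSolution_s2 K k q F p z)
    (h0 : ∀ x, F x x = 0) (h1 : ∀ x, p x x + z x x = 0) (x y : ℝ) : F x y = -F y x := by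
  have hswap : Continuous fun c : ℝ × ℝ => (c.2, c.1) := by fun_prop
  have W : NullSolution_s2 K k q (fun x y => F x y + F y x) (fun x y => p x y + z y x)
      (fun x y => z x y + p y x) :=
    { K_nonneg := H.K_nonneg
      k_pos := H.k_pos
      hF := fun x y => (H.hF x y).add (H.hFy y x)
      hFy := fun x y => (H.hFy x y).add (H.hF y x)
      hp := fun x y => ((H.hp x y).add (H.hz y x)).congr_deriv (by rw [H.q_symm y x]; ring)
      hz := fun x y => ((H.hz x y).add (H.hp y x)).congr_deriv (by rw [H.q_symm y x]; ring)
      q_symm := H.q_symm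
      q_le := H.q_le
      F_cont := H.F_cont.add (H.F_cont.comp hswap)
      p_cont := H.p_cont.add (H.z_cont.comp hswap)
      z_cont := H.z_cont.add (H.p_cont.comp hswap) }
  rcases le_total y x with h | h
  · have := W.cauchy (c := x) (fun x _ => by simp [h0 x]) (fun x _ => h1 x) x y h le_rfl
    linarith
  · have := W.cauchy (c := y) (fun x _ => by simp [h0 x]) (fun x _ => h1 x) y x h le_rfl
    linarith

/-- Support theorem in null coordinates. On the diagonal, `2 p` is the initial velocity (`h0`, `h1`),
it vanishes for `x ≤ a` (`h2`), and `p - z = ∂ₜF` has zero limit at the horizon along `x = τ` for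
`τ ≤ b` (`hrad`). Then the initial velocity vanishes for `x < b`. -/
lemma NullSolution_s2.support {K k : ℝ} {q F p z : ℝ → ℝ → ℝ} (H : NullSolution_s2 K k q F p z)
    {a b : ℝ} (hab : a ≤ b)
    (h0 : ∀ x, F x x = 0) (h1 : ∀ x, p x x + z x x = 0) (h2 : ∀ x ≤ a, p x x = 0)
    (hrad : ∀ x ≤ b, Tendsto (fun y => p x y - z x y) atBot (nhds 0)) :
    ∀ x < b, p x x = 0 := by
  have hK := H.K_nonneg
  have hk := H.k_pos
  have hpast : ∀ x y, y ≤ x → x ≤ a → F x y = 0 := H.cauchy (fun x _ => h0 x) h2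
  have ha : ∀ y ≤ a, F a y = 0 := fun y hy => hpast a y hy le_rfl
  obtain ⟨B, hB⟩ := H.bounded hab ha
  -- The transversal derivative `z` decays at the horizon by integrating `z_x = q F` from `x = a`.
  have hz0 : ∀ x, a ≤ x → x ≤ b → Tendsto (fun y => z x y) atBot (nhds 0) := by
    intro x hx1 hx2
    have hza : ∀ y < a, z a y = 0 := by
      intro y hy
      apply (H.hFy a y).unique
      apply (hasDerivAt_const y (0 : ℝ)).congr_of_eventuallyEq
      filter_upwards [eventually_lt_nhds hy] with y' hy' using ha y' hy'.le
    have hbound : ∀ᶠ y in atBot, ‖z x y‖ ≤ K * B / k * Real.exp (k * (x + y)) := by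
      filter_upwards [eventually_lt_atBot a] with y hy
      have := abs_sub_le_of_deriv_le (h := fun x => z x y)
          (φ := fun x => K * B / k * Real.exp (k * (x + y)))
          (φ' := fun x => K * Real.exp (k * (x + y)) * (B * 1)) hx1 (fun x => H.hz x y)
          (fun x => by
            have := (((((hasDerivAt_id x).add_const y).const_mul k).exp).const_mul (K * B / k))
            exact this.congr_deriv (by simp only [id]; field_simp))
          (fun x' hx' => q_mul_le (H.q_le x' y)
            (by rw [mul_one]; exact hB x' y hx'.1 (hx'.2.trans hx2) (by linarith)) le_rfl)
      simp only [hza y hy, sub_zero] at this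
      have hB0 : 0 ≤ B := (abs_nonneg _).trans (hB a y le_rfl hab (by linarith))
      have : 0 ≤ K * B / k * Real.exp (k * (a + y)) := by positivity
      rw [Real.norm_eq_abs]
      linarith
    apply squeeze_zero_norm' hbound
    have : Tendsto (fun y => k * (x + y)) atBot atBot :=
      (tendsto_atBot_add_const_left _ x tendsto_id).const_mul_atBot hk
    simpa using (Real.tendsto_exp_atBot.comp this).const_mul (K * B / k)
  have hp0 : ∀ x, a ≤ x → x ≤ b → Tendsto (fun y => p x y) atBot (nhds 0) := by
    intro x hx1 hx2
    simpa using (hrad x hx2).add (hz0 x hx1 hx2)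
  have hleft := H.goursat (c := a) ⟨B, fun x y u v w => hB x y u v (w.trans hab)⟩ ha hp0
  -- Time reflection carries the vanishing near the future horizon to the past horizon, which
  -- makes `F` vanish on the whole half line `x = a`, `y ≤ b`.
  have ha' : ∀ y ≤ b, F a y = 0 := by
    intro y hy
    rcases le_total y a with h | h
    · exact ha y h
    · rw [H.antisymm h0 h1, hleft y a h hy le_rfl, neg_zero]
  have hall := H.goursat (c := b) ⟨B, hB⟩ ha' hp0
  intro x hx
  rcases le_or_gt x a with h | h
  · exact h2 x h
  · apply (H.hF x x).unique
    apply (hasDerivAt_const x (0 : ℝ)).congr_of_eventuallyEq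
    filter_upwards [eventually_lt_nhds hx, eventually_gt_nhds h] with x' h1 h2
      using hall x' x h2.le h1.le hx.le

/-! ### The tortoise coordinate -/

/-- The inverse `R` of the tortoise coordinate. It satisfies `R' = 1 - 2M/R` and approaches the
horizon `r = 2M` exponentially fast. -/
lemma exists_radius {M : ℝ} (hM : 0 < M) : ∃ R : ℝ → ℝ, (∀ s, 2 * M < R s) ∧
    (∀ s, rstar M (R s) = s) ∧ (∀ r, 2 * M < r → R (rstar M r) = r) ∧
    (∀ s, HasDerivAt R (1 - 2 * M / R s) s) ∧
    (∀ s, R s - 2 * M ≤ Real.exp (s / (2 * M))) := by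
  -- In the variable `ζ = log (r - 2M)`, the tortoise coordinate is an increasing bijection of `ℝ`.
  let h : ℝ → ℝ := fun ζ => 2 * M + Real.exp ζ + 2 * M * ζ
  have hmono : StrictMono h := by
    intro x y hxy
    have h1 := Real.exp_lt_exp.2 hxy
    have h2 : 2 * M * x < 2 * M * y := by gcongr
    simp only [h]; linarith
  have hcont : Continuous h := by fun_prop
  have hsurj : Surjective h := by
    apply hcont.surjective
    · have h1 : Tendsto (fun ζ : ℝ => 2 * M * ζ) atTop atTop :=
        tendsto_id.const_mul_atTop (by positivity)
      apply tendsto_atTop_mono _ h1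
      intro ζ
      have := Real.exp_pos ζ
      simp only [h]; linarith
    · have h1 : Tendsto (fun ζ : ℝ => (2 * M + 1) + 2 * M * ζ) atBot atBot :=
        tendsto_atBot_add_const_left _ _ (tendsto_id.const_mul_atBot (by positivity))
      apply tendsto_atBot_mono' _ _ h1
      filter_upwards [eventually_le_atBot 0] with ζ hζ
      have := Real.exp_le_one_iff.2 hζ
      simp only [h]; linarith
  let e := hmono.orderIsoOfSurjective h hsurj
  have he : ∀ s, h (e.symm s) = s := fun s => e.apply_symm_apply s
  have he' : ∀ ζ, e.symm (h ζ) = ζ := fun ζ => e.symm_apply_apply ζ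
  have hR : ∀ s, 2 * M < 2 * M + Real.exp (e.symm s) := fun s => by
    have := Real.exp_pos (e.symm s); linarith
  have hrs : ∀ s, rstar M (2 * M + Real.exp (e.symm s)) = s := by
    intro s
    conv_rhs => rw [← he s]
    simp [rstar, h]
  refine ⟨fun s => 2 * M + Real.exp (e.symm s), hR, hrs, ?_, ?_, ?_⟩
  · intro r hr
    have hr0 : 0 < r - 2 * M := by linarith
    have : h (Real.log (r - 2 * M)) = rstar M r := by
      simp only [h, rstar, Real.exp_log hr0]; ring
    simp only [← this, he', Real.exp_log hr0]; ring
  · intro s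
    have hd : HasDerivAt h (Real.exp (e.symm s) + 2 * M) (e.symm s) := by
      have := ((Real.hasDerivAt_exp (e.symm s)).const_add (2 * M)).add
        ((hasDerivAt_id (e.symm s)).const_mul (2 * M))
      exact this.congr_deriv (by simp)
    have hpos := Real.exp_pos (e.symm s)
    have hinv := HasDerivAt.of_local_left_inverse (e.symm.continuous.continuousAt) hd
      (by positivity) (Eventually.of_forall he)
    refine (hinv.exp.const_add (2 * M)).congr_deriv ?_
    have : 2 * M + Real.exp (e.symm s) ≠ 0 := by positivity
    field_simp
    ring
  · intro s
    have h1 := he s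
    simp only [h] at h1
    have h2 := Real.exp_pos (e.symm s)
    simp only [add_sub_cancel_left]
    apply Real.exp_le_exp.2
    rw [le_div_iff₀ (by positivity)]
    linarith

/-! ### Partial derivatives of smooth functions on the exterior -/

section Partial

variable {c : ℝ} {w : ℝ → ℝ → ℝ}

lemma isOpen_exterior (c : ℝ) : IsOpen ((univ : Set ℝ) ×ˢ Ioi c) := isOpen_univ.prod isOpen_Ioi

lemma hasFDerivAt_exterior (hw : ContDiffOn ℝ ∞ (uncurry w) (univ ×ˢ Ioi c)) {t r : ℝ}
    (hr : c < r) : HasFDerivAt (uncurry w) (fderiv ℝ (uncurry w) (t, r)) (t, r) :=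
  ((hw.contDiffAt ((isOpen_exterior c).mem_nhds
    (show (t, r) ∈ univ ×ˢ Ioi c from ⟨mem_univ _, hr⟩))).differentiableAt (by simp)).hasFDerivAt

lemma pdt_eq (hw : ContDiffOn ℝ ∞ (uncurry w) (univ ×ˢ Ioi c)) {t r : ℝ} (hr : c < r) :
    pdt w t r = fderiv ℝ (uncurry w) (t, r) (1, 0) :=
  (HasFDerivAt.comp_hasDerivAt (f := fun s => (s, r)) t (hasFDerivAt_exterior hw hr)
    ((hasDerivAt_id' t).prodMk (hasDerivAt_const t r))).deriv

lemma pdr_eq (hw : ContDiffOn ℝ ∞ (uncurry w) (univ ×ˢ Ioi c)) {t r : ℝ} (hr : c < r) :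
    pdr w t r = fderiv ℝ (uncurry w) (t, r) (0, 1) :=
  (HasFDerivAt.comp_hasDerivAt (f := fun s => (t, s)) r (hasFDerivAt_exterior hw hr)
    ((hasDerivAt_const r t).prodMk (hasDerivAt_id' r))).deriv

lemma hasDerivAt_curve (hw : ContDiffOn ℝ ∞ (uncurry w) (univ ×ˢ Ioi c)) {T ρ : ℝ → ℝ}
    {a T' ρ' : ℝ} (hT : HasDerivAt T T' a) (hρ : HasDerivAt ρ ρ' a) (hr : c < ρ a) :
    HasDerivAt (fun a => w (T a) (ρ a))
      (T' * pdt w (T a) (ρ a) + ρ' * pdr w (T a) (ρ a)) a := by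
  have := (hasFDerivAt_exterior hw (t := T a) hr).comp_hasDerivAt a (hT.prodMk hρ)
  refine this.congr_deriv ?_
  rw [pdt_eq hw hr, pdr_eq hw hr, ← smul_eq_mul, ← smul_eq_mul, ← map_smul, ← map_smul, ← map_add]
  simp

lemma contDiffOn_pdt (hw : ContDiffOn ℝ ∞ (uncurry w) (univ ×ˢ Ioi c)) :
    ContDiffOn ℝ ∞ (uncurry (pdt w)) (univ ×ˢ Ioi c) :=
  ((hw.fderiv_of_isOpen (isOpen_exterior c) (by simp)).clm_apply contDiffOn_const).congr
    (fun x hx => pdt_eq (t := x.1) (r := x.2) hw hx.2)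

lemma contDiffOn_pdr (hw : ContDiffOn ℝ ∞ (uncurry w) (univ ×ˢ Ioi c)) :
    ContDiffOn ℝ ∞ (uncurry (pdr w)) (univ ×ˢ Ioi c) :=
  ((hw.fderiv_of_isOpen (isOpen_exterior c) (by simp)).clm_apply contDiffOn_const).congr
    (fun x hx => pdr_eq (t := x.1) (r := x.2) hw hx.2)

lemma pdt_pdr_comm (hw : ContDiffOn ℝ ∞ (uncurry w) (univ ×ˢ Ioi c)) {t r : ℝ} (hr : c < r) :
    pdt (pdr w) t r = pdr (pdt w) t r := by
  have hmem : univ ×ˢ Ioi c ∈ nhds (t, r) := (isOpen_exterior c).mem_nhds ⟨mem_univ _, hr⟩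
  have hd : HasFDerivAt (fderiv ℝ (uncurry w)) (fderiv ℝ (fderiv ℝ (uncurry w)) (t, r)) (t, r) :=
    (((hw.fderiv_of_isOpen (m := ∞) (isOpen_exterior c) (by simp)).contDiffAt
      hmem).differentiableAt (by simp)).hasFDerivAt
  have hev : ∀ᶠ x in nhds (t, r), HasFDerivAt (uncurry w) (fderiv ℝ (uncurry w) x) x := by
    filter_upwards [hmem] with x hx using hasFDerivAt_exterior (t := x.1) (r := x.2) hw hx.2
  have hsymm := second_derivative_symmetric_of_eventually hev hd (1, 0) (0, 1)
  have h1 : pdt (pdr w) t r = fderiv ℝ (fderiv ℝ (uncurry w)) (t, r) (1, 0) (0, 1) := by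
    have h0 := HasFDerivAt.comp_hasDerivAt (f := fun s => (s, r)) t hd
      ((hasDerivAt_id' t).prodMk (hasDerivAt_const t r))
    have h : HasDerivAt (fun s => fderiv ℝ (uncurry w) (s, r) (0, 1))
        (fderiv ℝ (fderiv ℝ (uncurry w)) (t, r) (1, 0) (0, 1)) t := by
      simpa using h0.clm_apply (hasDerivAt_const t ((0, 1) : ℝ × ℝ))
    rw [← h.deriv]
    exact congrArg (deriv · t) (funext fun s => pdr_eq hw hr)
  have h2 : pdr (pdt w) t r = fderiv ℝ (fderiv ℝ (uncurry w)) (t, r) (0, 1) (1, 0) := by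
    have h0 := HasFDerivAt.comp_hasDerivAt (f := fun s => (t, s)) r hd
      ((hasDerivAt_const r t).prodMk (hasDerivAt_id' r))
    have h : HasDerivAt (fun s => fderiv ℝ (uncurry w) (t, s) (1, 0))
        (fderiv ℝ (fderiv ℝ (uncurry w)) (t, r) (0, 1) (1, 0)) r := by
      simpa using h0.clm_apply (hasDerivAt_const r ((1, 0) : ℝ × ℝ))
    rw [← h.deriv]
    apply Filter.EventuallyEq.deriv_eq
    filter_upwards [eventually_gt_nhds hr] with s hs using pdt_eq hw hs
  rw [h1, h2, hsymm]

end Partial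

/-! ### Reduction to null coordinates -/

/-- In the null coordinates `x = r_* + t`, `y = r_* - t`, the rescaled field `F = r u` of a mode
solution satisfies `F_{xy} = (V / 4) F` with `V = (1 - 2M/r)(2M/r³ + λ²/r²)`. The functions
`p = F_x` and `z = F_y` are written out in terms of `u`, `∂ₜu` and `∂ᵣu`. -/
lemma IsModeSolution.nullSolution {M lam : ℝ} (hM : 0 < M) {u : ℝ → ℝ → ℝ}
    (hu : IsModeSolution M lam u) {R : ℝ → ℝ} (hR : ∀ s, 2 * M < R s)
    (hR' : ∀ s, HasDerivAt R (1 - 2 * M / R s) s)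
    (hRexp : ∀ s, R s - 2 * M ≤ Real.exp (s / (2 * M))) :
    ∃ K, NullSolution_s2 K (1 / (4 * M))
      (fun x y => (fun r => (1 - 2 * M / r) * (2 * M / r ^ 3 + lam ^ 2 / r ^ 2) / 4)
        (R ((x + y) / 2)))
      (fun x y => (fun t r => r * u t r) ((x - y) / 2) (R ((x + y) / 2)))
      (fun x y => (fun t r => ((1 - 2 * M / r) * u t r + r * pdt u t r
        + r * (1 - 2 * M / r) * pdr u t r) / 2) ((x - y) / 2) (R ((x + y) / 2)))
      (fun x y => (fun t r => ((1 - 2 * M / r) * u t r - r * pdt u t r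
        + r * (1 - 2 * M / r) * pdr u t r) / 2) ((x - y) / 2) (R ((x + y) / 2))) := by
  obtain ⟨hs, heq⟩ := hu
  have hst := contDiffOn_pdt hs
  have hsr := contDiffOn_pdr hs
  have hRpos : ∀ s, 0 < R s := fun s => lt_trans (by positivity) (hR s)
  have hRc : Continuous R := continuous_iff_continuousAt.2 fun s => (hR' s).continuousAt
  have hσc : Continuous fun c : ℝ × ℝ => R ((c.1 + c.2) / 2) := hRc.comp (by fun_prop)
  have hcont : ∀ w : ℝ → ℝ → ℝ, ContDiffOn ℝ ∞ (uncurry w) (univ ×ˢ Ioi (2 * M)) →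
      Continuous fun c : ℝ × ℝ => w ((c.1 - c.2) / 2) (R ((c.1 + c.2) / 2)) := fun w hw =>
    hw.continuousOn.comp_continuous (f := fun c : ℝ × ℝ => ((c.1 - c.2) / 2, R ((c.1 + c.2) / 2)))
      (by fun_prop) (fun c => ⟨mem_univ _, hR _⟩)
  have hgc : Continuous fun c : ℝ × ℝ => 1 - 2 * M / R ((c.1 + c.2) / 2) :=
    continuous_const.sub (continuous_const.div hσc fun c => (hRpos _).ne')
  have hTx : ∀ x y : ℝ, HasDerivAt (fun x => (x - y) / 2) (1 / 2) x := fun x y =>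
    ((hasDerivAt_id x).sub_const y).div_const 2
  have hTy : ∀ x y : ℝ, HasDerivAt (fun y => (x - y) / 2) (-1 / 2) y := fun x y =>
    ((hasDerivAt_id y).const_sub x).div_const 2
  have hρx : ∀ x y : ℝ, HasDerivAt (fun x => R ((x + y) / 2))
      ((1 - 2 * M / R ((x + y) / 2)) / 2) x := fun x y =>
    ((hR' _).comp x (((hasDerivAt_id x).add_const y).div_const 2)).congr_deriv
      (by simp only [id]; ring)
  have hρy : ∀ x y : ℝ, HasDerivAt (fun y => R ((x + y) / 2))
      ((1 - 2 * M / R ((x + y) / 2)) / 2) y := fun x y =>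
    ((hR' _).comp y (((hasDerivAt_id y).const_add x).div_const 2)).congr_deriv
      (by simp only [id]; ring)
  -- The wave equation solved for `∂ₜ²u`.
  have hwave : ∀ t r, 2 * M < r → pdt (pdt u) t r = (1 - 2 * M / r) ^ 2 * pdr (pdr u) t r
      + (1 - 2 * M / r) * (2 * (r - M) / r ^ 2) * pdr u t r
      - (1 - 2 * M / r) * (lam ^ 2 / r ^ 2) * u t r := by
    intro t r hr
    have h := heq t r hr
    have hr0 : r ≠ 0 := by have : 0 < r := lt_trans (by positivity) hr
                           exact this.ne'
    have hr1 : r - 2 * M ≠ 0 := by linarith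
    have h' : pdtt u t r = ((r - 2 * M) / r) * (((r - 2 * M) / r) * pdrr u t r
      + (2 * (r - M) / r ^ 2) * pdr u t r - lam ^ 2 / r ^ 2 * u t r) := by
      have : pdtt u t r = ((r - 2 * M) / r) * ((r / (r - 2 * M)) * pdtt u t r) := by
        field_simp
      rw [this]
      congr 1
      linarith
    change pdtt u t r = _
    rw [h']
    change _ = (1 - 2 * M / r) ^ 2 * pdrr u t r + _ - _
    field_simp
  refine ⟨(2 * M / (2 * M) ^ 3 + lam ^ 2 / (2 * M) ^ 2) / (2 * M) / 4, ?_⟩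
  constructor
  · positivity
  · positivity
  · intro x y
    refine ((hρx x y).mul (hasDerivAt_curve hs (hTx x y) (hρx x y) (hR _))).congr_deriv ?_
    ring
  · intro x y
    refine ((hρy x y).mul (hasDerivAt_curve hs (hTy x y) (hρy x y) (hR _))).congr_deriv ?_
    ring
  · intro x y
    have hg : HasDerivAt (fun y => 1 - 2 * M / R ((x + y) / 2)) _ y :=
      ((hasDerivAt_const y (2 * M)).div (hρy x y) (hRpos _).ne').const_sub 1
    have hu' := hasDerivAt_curve hs (hTy x y) (hρy x y) (hR _)
    have hut' := hasDerivAt_curve hst (hTy x y) (hρy x y) (hR _)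
    have hur' := hasDerivAt_curve hsr (hTy x y) (hρy x y) (hR _)
    refine ((((hg.mul hu').add ((hρy x y).mul hut')).add
      (((hρy x y).mul hg).mul hur')).div_const 2).congr_deriv ?_
    simp only [Pi.mul_apply]
    rw [hwave _ _ (hR _), pdt_pdr_comm hs (hR _)]
    have := (hRpos ((x + y) / 2)).ne'
    generalize R ((x + y) / 2) = r at *
    field_simp
    ring
  · intro x y
    have hg : HasDerivAt (fun x => 1 - 2 * M / R ((x + y) / 2)) _ x :=
      ((hasDerivAt_const x (2 * M)).div (hρx x y) (hRpos _).ne').const_sub 1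
    have hu' := hasDerivAt_curve hs (hTx x y) (hρx x y) (hR _)
    have hut' := hasDerivAt_curve hst (hTx x y) (hρx x y) (hR _)
    have hur' := hasDerivAt_curve hsr (hTx x y) (hρx x y) (hR _)
    refine ((((hg.mul hu').sub ((hρx x y).mul hut')).add
      (((hρx x y).mul hg).mul hur')).div_const 2).congr_deriv ?_
    simp only [Pi.mul_apply]
    rw [hwave _ _ (hR _), pdt_pdr_comm hs (hR _)]
    have := (hRpos ((x + y) / 2)).ne'
    generalize R ((x + y) / 2) = r at *
    field_simp
    ring
  · intro x y
    simp only [add_comm]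
  · intro x y
    simp only
    have h1 := hR ((x + y) / 2)
    have h2 := hRexp ((x + y) / 2)
    have h3 : (x + y) / 2 / (2 * M) = 1 / (4 * M) * (x + y) := by field_simp; norm_num
    rw [h3] at h2
    have h0 := hRpos ((x + y) / 2)
    generalize R ((x + y) / 2) = r at *
    have hg0 : 0 ≤ 1 - 2 * M / r := by
      rw [sub_nonneg, div_le_one h0]; exact h1.le
    have hg1 : 1 - 2 * M / r ≤ Real.exp (1 / (4 * M) * (x + y)) / (2 * M) := by
      have : 1 - 2 * M / r = (r - 2 * M) / r := by field_simp
      rw [this]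
      gcongr
    rw [abs_of_nonneg (by positivity)]
    calc (1 - 2 * M / r) * (2 * M / r ^ 3 + lam ^ 2 / r ^ 2) / 4
        ≤ (Real.exp (1 / (4 * M) * (x + y)) / (2 * M)) *
          (2 * M / (2 * M) ^ 3 + lam ^ 2 / (2 * M) ^ 2) / 4 := by gcongr
      _ = _ := by ring
  · exact hσc.mul (hcont u hs)
  · exact (((hgc.mul (hcont u hs)).add (hσc.mul (hcont _ hst))).add
      ((hσc.mul hgc).mul (hcont _ hsr))).div_const 2
  · exact (((hgc.mul (hcont u hs)).sub (hσc.mul (hcont _ hst))).add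
      ((hσc.mul hgc).mul (hcont _ hsr))).div_const 2

/-- Corollary 5.2 (single mode): for data `(0, ψ)` with `ψ` smooth and compactly
supported in `(2M,∞)`, if the forward radiation field at the event horizon vanishes for
`τ ≤ τ₀`, then `ψ` vanishes where `r_*(r) < τ₀`. -/
theorem support_corollary_event_horizon
    (M lam : ℝ) (hM : 0 < M) (hlam : 0 ≤ lam)
    (u : ℝ → ℝ → ℝ) (hu : IsModeSolution M lam u)
    (ψ : ℝ → ℝ) (hφ : ∀ r : ℝ, 2*M < r → u 0 r = 0) (hψ : ∀ r : ℝ, ψ r = pdt u 0 r)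
    (hsupp : ∃ r₁ r₂ : ℝ, 2*M < r₁ ∧ r₁ ≤ r₂ ∧
      ∀ r : ℝ, 2*M < r → r ∉ Set.Icc r₁ r₂ → ψ r = 0)
    (τ₀ : ℝ) (f : ℝ → ℝ)
    (hf : IsFwdRadHorizon M u f) (hf0 : ∀ τ : ℝ, τ ≤ τ₀ → f τ = 0) :
    ∀ r : ℝ, 2*M < r → rstar M r < τ₀ → ψ r = 0 := by
  obtain ⟨R, hR, hRs, hRinv, hR', hRexp⟩ := exists_radius hM
  obtain ⟨K, H⟩ := hu.nullSolution hM hR hR' hRexp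
  obtain ⟨r₁, r₂, hr₁, -, hsupp⟩ := hsupp
  have hRpos : ∀ s, 0 < R s := fun s => lt_trans (by positivity) (hR s)
  have hur0 : ∀ r, 2 * M < r → pdr u 0 r = 0 := by
    intro r hr
    have : (fun s => u 0 s) =ᶠ[nhds r] fun _ => 0 := by
      filter_upwards [eventually_gt_nhds hr] with s hs using hφ s hs
    rw [pdr, this.deriv_eq, deriv_const]
  have hdiag : ∀ x : ℝ, (x + x) / 2 = x := fun x => by ring
  -- Any `a < rstar M r₁` with `a ≤ τ₀` works: the data vanish where `r_* ≤ a`.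
  set a := min τ₀ (rstar M r₁) - 1 with ha
  have hsup := H.support (a := a) (b := τ₀) (by have := min_le_left τ₀ (rstar M r₁); linarith)
    (fun x => by simp [hφ _ (hR _)])
    (fun x => by simp [hφ _ (hR _), hur0 _ (hR _)]; ring)
    (fun x hx => by
      have hlt : R x < r₁ := by
        by_contra! hcon
        have h1 : rstar M r₁ ≤ rstar M (R x) := by
          have : Real.log (r₁ - 2 * M) ≤ Real.log (R x - 2 * M) :=
            Real.log_le_log (by linarith) (by linarith)
          unfold rstar
          gcongr
        rw [hRs] at h1
        have := min_le_right τ₀ (rstar M r₁)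
        linarith
      have := hsupp (R x) (hR x) (fun h => absurd h.1 (not_le.2 hlt))
      rw [hψ] at this
      simp [hdiag, hφ _ (hR _), hur0 _ (hR _), this])
    (fun x hx => by
      have hs : Tendsto (fun y => (x + y) / 2) atBot atBot :=
        (tendsto_atBot_add_const_left _ x tendsto_id).atBot_div_const (by norm_num)
      have hRlim : Tendsto R atBot (nhds (2 * M)) := by
        have h1 : Tendsto (fun s => 2 * M + Real.exp (s / (2 * M))) atBot (nhds (2 * M + 0)) :=
          (Real.tendsto_exp_atBot.comp (tendsto_id.atBot_div_const (by positivity))).const_add _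
        rw [add_zero] at h1
        exact tendsto_of_tendsto_of_tendsto_of_le_of_le tendsto_const_nhds h1
          (fun s => (hR s).le) (fun s => by have := hRexp s; simp only; linarith)
      have hRlim' : Tendsto (fun y => R ((x + y) / 2)) atBot (nhdsWithin (2 * M) (Ioi (2 * M))) :=
        tendsto_nhdsWithin_iff.2 ⟨hRlim.comp hs, Eventually.of_forall fun y => hR _⟩
      have h2 := (hRlim.comp hs).mul ((hf x).comp hRlim')
      rw [hf0 x hx, mul_zero] at h2
      refine h2.congr fun y => ?_
      have h3 : x - rstar M (R ((x + y) / 2)) = (x - y) / 2 := by rw [hRs]; ring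
      simp only [comp_apply, h3]
      ring)
  intro r hr hrτ
  have := hsup (rstar M r) hrτ
  simp only [hdiag, sub_self, zero_div, hRinv r hr, hφ r hr, hur0 r hr, mul_zero, zero_add,
    add_zero, ← hψ] at this
  have hr0 : 0 < r := lt_trans (by positivity) hr
  have h4 : r * ψ r = 0 := by linarith
  exact (mul_eq_zero.1 h4).resolve_left hr0.ne'
end
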